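/- Let r > 1 and let f ∈ ℂ[x₁,…,xₙ] vanish to order at least r at every point of an irreducible d-dimensional variety Y ⊆ ℂⁿ. For y ∈ Y write f_y(x) = f(x+y) = ∑_{i≥r} f_{y,i} with f_{y,i} zero or homogeneous of degree i. Then for generic y ∈ Y: (r+1)·c_y(f) ≤ n − d + c(f_{y,r}). -/

import Mathlib

/-!
The thresholds are treated as exponents of integrability throughout, and no resolution of
singularities is used.

*A chart.* At a generic point `y₀` of the variety, Noether normalization, a primitive element and
the inverse function theorem at a simple root give a polynomial map `π` to `ℂ ^ e`, with `e ≥ d`,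
and a continuous right inverse `η` of `π` near `π y₀` with values in the variety (`exists_chart`).

*Averaging.* Let `‖f‖ ^ (-2s)` be integrable near `y₀`. Since
`f (η a + t u) = t ^ r f_{η a, r}(u) + O(t ^ (r + 1))`, one has `f (η a + t u) = O(t ^ (r + 1))`
wherever `‖f_{η a, r}(u)‖ ≤ t`. Averaging `‖f‖ ^ (-2s)` over the balls of radius `t` around the
points `η a` costs only `t ^ (2e - 2n)` (`lintegral_section_le`), because these balls sweep out
`e` directions. Hence the measure of `{(a, u) : ‖f_{η a, r}(u)‖ ≤ t}` is `O(t ^ (2s'))` with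
`s' = (r + 1) s - (n - e)` (`measure_sublevel_le`), and for almost every `a` the function
`‖f_{η a, r}‖ ^ (-2ρ)` is integrable on the unit ball for every `ρ < s'`. If the initial form
vanished on the whole variety this would force `s' ≤ 0`.

*Passing to `y₀`.* This gives the estimate only at points `y_k → y₀`, while integrability is to be
deduced at the limit; in this direction semicontinuity fails without genericity. It is recovered
from a weak Bernstein–Sato relation `b(τ) G ^ τ = P(τ) G ^ (τ + N)` for the family of initial
forms, with coefficients polynomial in the point of the variety (`exists_bernstein_family`). The
relation exists since the submodules generated by `G ^ (σ + N j)` cannot decrease strictly for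
too long: by Bernstein's inequality every strict step costs many dimensions (`chain_bound`).
Integrating the relation against test functions and continuing analytically to `Re τ > -ρ` bounds
`∫ ‖G_{y_k}‖ ^ (2τ)` uniformly in `k` wherever `b(τ) ≠ 0`, and Fatou's lemma gives integrability
at `y₀` (`integrableOn_of_tendsto`). The exponent is chosen off the finitely many roots of `b` at
`y₀`; genericity of `y₀` ensures that `b` does not vanish identically there.

*Conclusion.* By homogeneity, integrability near the origin passes to all zeros of `f_{y₀, r}`
(`le_lctAt_of_homogeneous`), so `s'` is at most the global threshold of `f_{y₀, r}`.
-/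

open MeasureTheory MvPolynomial

/-- The log-canonical threshold of a polynomial `f ∈ ℂ[x₁,…,xₙ]` at a point `y`
(with `f(y) = 0`), defined analytically as the supremum of the positive reals `s`
such that `‖f‖^{-2s}` is integrable on some neighbourhood of `y`. -/
noncomputable def lctAt {n : ℕ} (f : MvPolynomial (Fin n) ℂ) (y : Fin n → ℂ) : ℝ :=
  sSup {s : ℝ | 0 < s ∧ ∃ U ∈ nhds y,
    MeasureTheory.IntegrableOn
      (fun x : Fin n → ℂ => ‖MvPolynomial.eval x f‖ ^ (-2 * s)) U}

/-- The (global) log-canonical threshold of `f`, the infimum of the local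
log-canonical thresholds over the zeros of `f`. -/
noncomputable def lct {n : ℕ} (f : MvPolynomial (Fin n) ℂ) : ℝ :=
  sInf {c : ℝ | ∃ y, MvPolynomial.eval y f = 0 ∧ c = lctAt f y}

/-! ### Bernstein's inequality for modules over the Weyl algebra -/

theorem finrank_restrictDegree {k : Type*} [Field k] {σ : Type*} [Fintype σ] (q : ℕ) :
    Module.finrank k (restrictDegree σ k q) = (q + 1) ^ Fintype.card σ := by
  classical
  let e : {f : σ →₀ ℕ | ∀ i, f i ≤ q} ≃ (σ → Fin (q + 1)) :=
    { toFun := fun f i => ⟨f.1 i, Nat.lt_succ_of_le (f.2 i)⟩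
      invFun := fun g => ⟨Finsupp.equivFunOnFinite.symm fun i => g i,
        fun i => Nat.le_of_lt_succ (g i).2⟩
      left_inv := fun f => by ext; simp
      right_inv := fun g => by ext; simp }
  have b : Module.Basis {f : σ →₀ ℕ | ∀ i, f i ≤ q} k (restrictDegree σ k q) :=
    basisRestrictSupport k _
  rw [Module.finrank_eq_card_basis (b.reindex e)]
  simp

section WeylModule

variable {k : Type*} [Field k] {V : Type*} [AddCommGroup V] [Module k V] {n : ℕ}

/-- The endomorphism given by a word in `2n` operators. -/
noncomputable def wop (Z : Fin n ⊕ Fin n → Module.End k V) (ω : List (Fin n ⊕ Fin n)) :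
    Module.End k V := (ω.map Z).prod

/-- The span of the vectors `ω • u` for words `ω` of length at most `K`: the Bernstein
filtration of the submodule generated by `u`. -/
noncomputable def bfil (Z : Fin n ⊕ Fin n → Module.End k V) (K : ℕ) (u : V) : Submodule k V :=
  Submodule.span k ((fun ω => wop Z ω u) '' {ω | ω.length ≤ K})

/-- The submodule generated by `u` under the operators `Z`. -/
noncomputable def bgen (Z : Fin n ⊕ Fin n → Module.End k V) (u : V) : Submodule k V :=
  Submodule.span k (Set.range fun ω => wop Z ω u)

theorem wop_cons (Z : Fin n ⊕ Fin n → Module.End k V) (a) (ω) :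
    wop Z (a :: ω) = Z a * wop Z ω := by simp [wop]

theorem wop_append (Z : Fin n ⊕ Fin n → Module.End k V) (a) (ω) :
    wop Z (a ++ ω) = wop Z a * wop Z ω := by simp [wop]

theorem self_mem_bfil (Z : Fin n ⊕ Fin n → Module.End k V) (K : ℕ) (u : V) : u ∈ bfil Z K u :=
  Submodule.subset_span ⟨[], by simp, by simp [wop]⟩

theorem bfil_mono (Z : Fin n ⊕ Fin n → Module.End k V) {K L : ℕ} (h : K ≤ L) (u : V) :
    bfil Z K u ≤ bfil Z L u :=
  Submodule.span_mono (Set.image_mono fun _ hω => le_trans (by exact hω) h)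

theorem bfil_finite (Z : Fin n ⊕ Fin n → Module.End k V) (K : ℕ) (u : V) :
    FiniteDimensional k (bfil Z K u) :=
  FiniteDimensional.span_of_finite k ((List.finite_length_le _ K).image _)

theorem apply_mem_bfil (Z : Fin n ⊕ Fin n → Module.End k V) (K : ℕ) (u : V) (a) {v : V}
    (hv : v ∈ bfil Z K u) : Z a v ∈ bfil Z (K + 1) u := by
  have : bfil Z K u ≤ (bfil Z (K + 1) u).comap (Z a) := by
    refine Submodule.span_le.2 ?_
    rintro _ ⟨ω, hω, rfl⟩
    exact Submodule.subset_span ⟨a :: ω, by simpa using hω, by simp [wop_cons]⟩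
  exact this hv

theorem apply_mem_bgen (Z : Fin n ⊕ Fin n → Module.End k V) (u : V) (a) {v : V}
    (hv : v ∈ bgen Z u) : Z a v ∈ bgen Z u := by
  have : bgen Z u ≤ (bgen Z u).comap (Z a) := by
    refine Submodule.span_le.2 ?_
    rintro _ ⟨ω, rfl⟩
    exact Submodule.subset_span ⟨a :: ω, by simp [wop_cons]⟩
  exact this hv

theorem wop_mem_bgen (Z : Fin n ⊕ Fin n → Module.End k V) (u : V) (ω) {v : V}
    (hv : v ∈ bgen Z u) : wop Z ω v ∈ bgen Z u := by
  induction ω with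
  | nil => simpa [wop]
  | cons a ω ih => rw [wop_cons]; exact apply_mem_bgen Z u a ih

theorem bfil_le_bgen (Z : Fin n ⊕ Fin n → Module.End k V) (K : ℕ) {u v : V} (hv : v ∈ bgen Z u) :
    bfil Z K v ≤ bgen Z u := by
  refine Submodule.span_le.2 ?_
  rintro _ ⟨ω, -, rfl⟩
  exact wop_mem_bgen Z u ω hv

/-- The Weyl relations between `n` multiplications `Z (inl i)` and `n` derivations
`Z (inr i)`. -/
structure IsWeyl (Z : Fin n ⊕ Fin n → Module.End k V) : Prop where
  xx : ∀ i j, Z (.inl i) * Z (.inl j) = Z (.inl j) * Z (.inl i)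
  dd : ∀ i j, Z (.inr i) * Z (.inr j) = Z (.inr j) * Z (.inr i)
  dx : ∀ i j, Z (.inr i) * Z (.inl j) = Z (.inl j) * Z (.inr i) + if i = j then 1 else 0

open scoped IsMulCommutative in
/-- Evaluation of polynomials at a commuting family of endomorphisms. -/
theorem exists_polyEval (A : Fin n → Module.End k V) (hA : ∀ i j, A i * A j = A j * A i) :
    ∃ ρ : MvPolynomial (Fin n) k →ₐ[k] Module.End k V, ∀ i, ρ (X i) = A i := by
  have hc : ∀ a ∈ Set.range A, ∀ b ∈ Set.range A, a * b = b * a := by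
    rintro _ ⟨i, rfl⟩ _ ⟨j, rfl⟩; exact hA i j
  have := Algebra.isMulCommutative_adjoin k hc
  refine ⟨(Algebra.adjoin k (Set.range A)).val.comp
    (aeval fun i => ⟨A i, Algebra.subset_adjoin ⟨i, rfl⟩⟩), fun i => by simp⟩

/-- If `ad T` acts on the commuting family as `ε ∂ᵢ`, so it does on polynomials in it. -/
theorem polyEval_comm {A : Fin n → Module.End k V}
    {ρ : MvPolynomial (Fin n) k →ₐ[k] Module.End k V} (hρ : ∀ i, ρ (X i) = A i)
    (T : Module.End k V) (i : Fin n) (ε : k)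
    (hT : ∀ j, T * A j = A j * T + if i = j then ε • 1 else 0) (p : MvPolynomial (Fin n) k) :
    T * ρ p = ρ p * T + ε • ρ (pderiv i p) := by
  classical
  induction p using MvPolynomial.induction_on with
  | C a =>
    have : ρ (C a) = a • 1 := by
      rw [← algebraMap_eq, AlgHom.commutes, Algebra.algebraMap_eq_smul_one]
    simp [this]
  | add p q hp hq => simp only [map_add, mul_add, add_mul, hp, hq, smul_add]; abel
  | mul_X p j hp =>
    rw [map_mul, ← mul_assoc, hp, pderiv_mul, map_add, map_mul, map_mul, hρ, add_mul, mul_assoc, hT,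
      pderiv_X]
    rcases eq_or_ne i j with rfl | h
    · simp [mul_add, smul_add, mul_assoc]; abel
    · simp [h, h.symm, mul_assoc]

theorem polyEval_commute {A : Fin n → Module.End k V}
    {ρ : MvPolynomial (Fin n) k →ₐ[k] Module.End k V} (hρ : ∀ i, ρ (X i) = A i)
    (T : Module.End k V) (hT : ∀ j, T * A j = A j * T) (p : MvPolynomial (Fin n) k) :
    T * ρ p = ρ p * T := by
  induction p using MvPolynomial.induction_on with
  | C a =>
    have : ρ (C a) = a • 1 := by
      rw [← algebraMap_eq, AlgHom.commutes, Algebra.algebraMap_eq_smul_one]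
    simp [this]
  | add p q hp hq => simp only [map_add, mul_add, add_mul, hp, hq]
  | mul_X p j hp => rw [map_mul, hρ, ← mul_assoc, hp, mul_assoc, hT, mul_assoc]

/-- A monomial of degree `d` in commuting generators raises the filtration by at most `d`. -/
theorem polyEval_monomial_mem {Z : Fin n ⊕ Fin n → Module.End k V} {emb : Fin n → Fin n ⊕ Fin n}
    {ρ : MvPolynomial (Fin n) k →ₐ[k] Module.End k V} (hρ : ∀ i, ρ (X i) = Z (emb i))
    (u : V) (γ : Fin n →₀ ℕ) :
    ∀ (K : ℕ) (v : V), v ∈ bfil Z K u → ρ (monomial γ 1) v ∈ bfil Z (K + γ.degree) u := by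
  induction γ using Finsupp.induction_linear with
  | zero => intro K v hv; simpa using hv
  | add f g hf hg =>
    intro K v hv
    have : (monomial (f + g) (1 : k)) = monomial f 1 * monomial g 1 := by simp [monomial_mul]
    rw [this, map_mul, Module.End.mul_apply, map_add, add_comm f.degree, ← add_assoc]
    exact hf _ _ (hg _ _ hv)
  | single i a =>
    induction a with
    | zero => intro K v hv; simpa using hv
    | succ a ih =>
      intro K v hv
      have : (monomial (Finsupp.single i (a + 1)) (1 : k))
          = X i * monomial (Finsupp.single i a) 1 := by
        rw [X, monomial_mul, ← Finsupp.single_add, add_comm, one_mul]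
      rw [this, map_mul, hρ, Module.End.mul_apply]
      have := apply_mem_bfil Z _ u (emb i) (ih K v hv)
      simpa [add_assoc] using this

/-- **Bernstein's inequality**, in product form: in a module over the Weyl algebra the steps `2nq` and
`4nq` of the filtration generated by a nonzero vector have dimensions with product at least
`(q + 1) ^ (2n)`. The linear map sending a normally ordered operator of order at most `K` to its
action from the `K`-th step to the `2K`-th step is injective, because commutators with the
generators are the partial derivatives of the symbol. -/
theorem bernstein_ineq [CharZero k] {Z : Fin n ⊕ Fin n → Module.End k V} (hZ : IsWeyl Z) {u : V}
    (hu : u ≠ 0) (q : ℕ) :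
    (q + 1) ^ (2 * n) ≤ Module.finrank k (bfil Z (2 * n * q) u) *
      Module.finrank k (bfil Z (2 * n * q + 2 * n * q) u) := by
  classical
  obtain ⟨ρX, hρX⟩ := exists_polyEval (fun i => Z (.inl i)) hZ.xx
  obtain ⟨ρD, hρD⟩ := exists_polyEval (fun i => Z (.inr i)) hZ.dd
  let cX : (Fin n ⊕ Fin n →₀ ℕ) → (Fin n →₀ ℕ) := fun γ =>
    Finsupp.comapDomain Sum.inl γ Sum.inl_injective.injOn
  let cD : (Fin n ⊕ Fin n →₀ ℕ) → (Fin n →₀ ℕ) := fun γ =>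
    Finsupp.comapDomain Sum.inr γ Sum.inr_injective.injOn
  let op : MvPolynomial (Fin n ⊕ Fin n) k →ₗ[k] Module.End k V :=
    (basisMonomials _ k).constr k fun γ => ρX (monomial (cX γ) 1) * ρD (monomial (cD γ) 1)
  have op_mon : ∀ γ c, op (monomial γ c) = c • (ρX (monomial (cX γ) 1) * ρD (monomial (cD γ) 1)) := by
    intro γ c
    have : monomial γ c = c • (basisMonomials (Fin n ⊕ Fin n) k γ) := by simp [smul_monomial]
    rw [this, map_smul, Module.Basis.constr_basis]
  have hDD : ∀ i p, Z (.inr i) * ρD p = ρD p * Z (.inr i) := fun i p =>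
    polyEval_commute hρD _ (fun j => hZ.dd i j) p
  have hXX : ∀ i p, Z (.inl i) * ρX p = ρX p * Z (.inl i) := fun i p =>
    polyEval_commute hρX _ (fun j => hZ.xx i j) p
  have hDX : ∀ i p, Z (.inr i) * ρX p = ρX p * Z (.inr i) + ρX (pderiv i p) := fun i p => by
    have := polyEval_comm hρX (Z (.inr i)) i 1 (fun j => by simpa using hZ.dx i j) p
    simpa using this
  have hXD : ∀ i p, Z (.inl i) * ρD p = ρD p * Z (.inl i) - ρD (pderiv i p) := fun i p => by
    have := polyEval_comm hρD (Z (.inl i)) i (-1) (fun j => by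
      rw [hZ.dx j i]
      by_cases h : i = j
      · simp [h]
      · simp [h, Ne.symm h]) p
    simpa [sub_eq_add_neg] using this
  have pd_mon : ∀ (ρ : MvPolynomial (Fin n) k →ₐ[k] Module.End k V) (i : Fin n) (m : Fin n →₀ ℕ),
      ρ (pderiv i (monomial m 1)) = (m i : k) • ρ (monomial (m - Finsupp.single i 1) 1) := by
    intro ρ i m
    rw [pderiv_monomial, one_mul, ← map_smul, smul_monomial, smul_eq_mul, mul_one]
  have op_pdX : ∀ i p, Z (.inr i) * op p - op p * Z (.inr i) = op (pderiv (.inl i) p) := by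
    intro i p
    induction p using MvPolynomial.induction_on' with
    | add p q hp hq => simp only [map_add, mul_add, add_mul, ← hp, ← hq]; abel
    | monomial γ c =>
      have e1 : cX (γ - Finsupp.single (Sum.inl i) 1) = cX γ - Finsupp.single i 1 := by
        ext j; simp [cX, Finsupp.single_apply]
      have e2 : cD (γ - Finsupp.single (Sum.inl i) 1) = cD γ := by
        ext j; simp [cD]
      rw [pderiv_monomial, op_mon, op_mon, e1, e2, mul_smul_comm, ← mul_assoc, hDX, add_mul, mul_assoc,
        hDD, pd_mon, smul_add, smul_mul_assoc, mul_smul]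
      simp [cX, mul_assoc]
  have op_pdD : ∀ i p, op p * Z (.inl i) - Z (.inl i) * op p = op (pderiv (.inr i) p) := by
    intro i p
    induction p using MvPolynomial.induction_on' with
    | add p q hp hq => simp only [map_add, mul_add, add_mul, ← hp, ← hq]; abel
    | monomial γ c =>
      have e1 : cD (γ - Finsupp.single (Sum.inr i) 1) = cD γ - Finsupp.single i 1 := by
        ext j; simp [cD, Finsupp.single_apply]
      have e2 : cX (γ - Finsupp.single (Sum.inr i) 1) = cX γ := by
        ext j; simp [cX]
      rw [pderiv_monomial, op_mon, op_mon, e1, e2, mul_smul_comm, ← mul_assoc, hXX, mul_assoc,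
        hXD, pd_mon, mul_sub, smul_sub, smul_mul_assoc, mul_smul]
      simp [cD, mul_assoc]
  have inj : ∀ (K : ℕ) (p : MvPolynomial (Fin n ⊕ Fin n) k), (∀ γ ∈ p.support, γ.degree ≤ K) →
      (∀ v ∈ bfil Z K u, op p v = 0) → p = 0 := by
    intro K
    induction K with
    | zero =>
      intro p hp h0
      have hpc : p = monomial 0 (coeff 0 p) := by
        ext γ
        rw [coeff_monomial]
        split_ifs with h
        · rw [h]
        · by_contra hne
          have := hp γ (mem_support_iff.2 hne)
          exact h ((Finsupp.degree_eq_zero_iff γ).1 (by omega)).symm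
      have h1 := h0 u (self_mem_bfil Z 0 u)
      have c0 : cX 0 = 0 := by ext; simp [cX]
      have d0 : cD 0 = 0 := by ext; simp [cD]
      rw [hpc, op_mon, c0, d0] at h1
      simp [hu] at h1
      rw [hpc, h1, monomial_zero]
    | succ K ih =>
      intro p hp h0
      have hpd : ∀ a, pderiv a p = 0 := by
        intro a
        apply ih
        · intro γ hγ
          rw [mem_support_iff, coeff_pderiv] at hγ
          have := hp (γ + Finsupp.single a 1) (mem_support_iff.2 (left_ne_zero_of_mul hγ))
          rw [map_add, Finsupp.degree_single] at this
          omega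
        · intro v hv
          have hv' := bfil_mono Z (Nat.le_succ K) u hv
          cases a with
          | inl i =>
            rw [← op_pdX]
            simp [h0 v hv', h0 _ (apply_mem_bfil Z K u (.inr i) hv)]
          | inr i =>
            rw [← op_pdD]
            simp [h0 v hv', h0 _ (apply_mem_bfil Z K u (.inl i) hv)]
      have hpc : p = monomial 0 (coeff 0 p) := by
        ext γ
        rw [coeff_monomial]
        split_ifs with h
        · rw [h]
        · obtain ⟨a, ha⟩ : ∃ a, γ a ≠ 0 := by
            by_contra hcon
            push Not at hcon
            exact h (Finsupp.ext hcon).symm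
          have := coeff_pderiv (i := a) p (γ - Finsupp.single a 1)
          rw [hpd a, coeff_zero, tsub_add_cancel_of_le
            (by simpa [Finsupp.single_le_iff] using Nat.one_le_iff_ne_zero.2 ha)] at this
          rcases mul_eq_zero.1 this.symm with h' | h'
          · exact h'
          · exact absurd h' (Nat.cast_add_one_ne_zero _)
      have h1 := h0 u (self_mem_bfil Z _ u)
      have c0 : cX 0 = 0 := by ext; simp [cX]
      have d0 : cD 0 = 0 := by ext; simp [cD]
      rw [hpc, op_mon, c0, d0] at h1
      simp [hu] at h1
      rw [hpc, h1, monomial_zero]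
  have deg_split : ∀ γ, (cX γ).degree + (cD γ).degree = γ.degree := by
    intro γ
    simp only [Finsupp.degree_eq_sum, Fintype.sum_sum_type]
    simp [cX, cD]
  have maps : ∀ (K L : ℕ) (p : MvPolynomial (Fin n ⊕ Fin n) k), (∀ γ ∈ p.support, γ.degree ≤ L) →
      ∀ v ∈ bfil Z K u, op p v ∈ bfil Z (K + L) u := by
    intro K L p hp v hv
    rw [p.as_sum, map_sum, LinearMap.sum_apply]
    refine Submodule.sum_mem _ fun γ hγ => ?_
    rw [op_mon, LinearMap.smul_apply, Module.End.mul_apply]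
    refine Submodule.smul_mem _ _ (bfil_mono Z ?_ u
      (polyEval_monomial_mem hρX u _ _ _ (polyEval_monomial_mem hρD u _ _ _ hv)))
    have := deg_split γ
    have := hp γ hγ
    omega
  set K := 2 * n * q
  have hdeg : ∀ p ∈ restrictDegree (Fin n ⊕ Fin n) k q, ∀ γ ∈ p.support, γ.degree ≤ K := by
    intro p hp γ hγ
    rw [mem_restrictDegree] at hp
    rw [Finsupp.degree_eq_sum]
    refine (Finset.sum_le_sum fun i _ => hp γ hγ i).trans ?_
    simp [K, two_mul]
  have := bfil_finite Z K u
  have := bfil_finite Z (K + K) u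
  let Φ : restrictDegree (Fin n ⊕ Fin n) k q →ₗ[k] (bfil Z K u →ₗ[k] bfil Z (K + K) u) :=
    { toFun := fun p => (op p.1).restrict (maps K K p.1 (hdeg p.1 p.2))
      map_add' := fun p p' => by ext; simp
      map_smul' := fun c p => by ext; simp }
  have hΦ : Function.Injective Φ := by
    rw [← LinearMap.ker_eq_bot, LinearMap.ker_eq_bot']
    intro p hp
    refine Subtype.ext (inj K p.1 (hdeg p.1 p.2) fun v hv => ?_)
    exact congrArg Subtype.val (LinearMap.congr_fun hp ⟨v, hv⟩)
  have h1 := LinearMap.finrank_le_finrank_of_injective hΦ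
  rw [Module.finrank_linearMap] at h1
  refine le_trans (le_of_eq ?_) h1
  rw [finrank_restrictDegree]; simp [two_mul]

end WeylModule

/-! ### Chains of submodules of a Weyl module -/

section WeylModule2
variable {k : Type*} [Field k] {V : Type*} [AddCommGroup V] [Module k V] {n : ℕ}

theorem map_wop {W : Type*} [AddCommGroup W] [Module k W] {Z : Fin n ⊕ Fin n → Module.End k V}
    {Z' : Fin n ⊕ Fin n → Module.End k W} (f : V →ₗ[k] W) (hf : ∀ a v, f (Z a v) = Z' a (f v))
    (ω) (v : V) : f (wop Z ω v) = wop Z' ω (f v) := by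
  induction ω with
  | nil => simp [wop]
  | cons a ω ih => simp [wop_cons, hf, ih]

/-- Linear maps compatible with the operators carry the steps of the filtration generated by a vector
to those of the filtration generated by its image. -/
theorem map_bfil {W : Type*} [AddCommGroup W] [Module k W] {Z : Fin n ⊕ Fin n → Module.End k V}
    {Z' : Fin n ⊕ Fin n → Module.End k W} (f : V →ₗ[k] W) (hf : ∀ a v, f (Z a v) = Z' a (f v))
    (K : ℕ) (v : V) : (bfil Z K v).map f = bfil Z' K (f v) := by
  rw [bfil, bfil, Submodule.map_span, ← Set.image_comp]
  congr 1
  ext x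
  simp [map_wop f hf]

/-- In a descending chain of submodules generated by `u 0, u 1, …`, if the first `L` inclusions
are strict and the `K`-th filtration steps of `u 0, …, u (L-1)` lie in a space of dimension at most
`w`, then `L (q+1)^n ≤ w` (with `K = 4nq`): each graded piece contributes by Bernstein's
inequality. -/
theorem chain_bound [CharZero k] {Z : Fin n ⊕ Fin n → Module.End k V} (hZ : IsWeyl Z) (u : ℕ → V)
    (hu : ∀ j, u (j + 1) ∈ bgen Z (u j)) (L q : ℕ) (hL : ∀ j < L, u j ∉ bgen Z (u (j + 1)))
    (W : Submodule k V) [FiniteDimensional k W]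
    (hW : ∀ j < L, bfil Z (2 * n * q + 2 * n * q) (u j) ≤ W) :
    L * (q + 1) ^ n ≤ Module.finrank k W := by
  classical
  -- downward induction from the end of the chain: `T` collects the last `i` graded pieces
  have key : ∀ i ≤ L, ∃ T : Submodule k V, T ≤ W ∧ T ≤ bgen Z (u (L - i)) ∧
      i * (q + 1) ^ n ≤ Module.finrank k T := by
    intro i
    induction i with
    | zero => intro _; exact ⟨⊥, bot_le, bot_le, by simp⟩
    | succ i ih =>
      intro hi
      obtain ⟨T, hTW, hTM, hT⟩ := ih (by omega)
      set j := L - (i + 1) with hj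
      have hj1 : L - i = j + 1 := by omega
      rw [hj1] at hTM
      set M := bgen Z (u (j + 1))
      let Zq : Fin n ⊕ Fin n → Module.End k (V ⧸ M) := fun a =>
        M.mapQ M (Z a) fun v hv => apply_mem_bgen Z _ a hv
      have hq : ∀ a v, M.mkQ (Z a v) = Zq a (M.mkQ v) := fun a v => by simp [Zq]
      have hZq : IsWeyl Zq := by
        refine ⟨fun i j => ?_, fun i j => ?_, fun i j => ?_⟩ <;>
          refine LinearMap.ext fun x => ?_ <;> obtain ⟨v, rfl⟩ := M.mkQ_surjective x
        · simp only [Module.End.mul_apply, ← hq]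
          rw [← Module.End.mul_apply, hZ.xx]; rfl
        · simp only [Module.End.mul_apply, ← hq]
          rw [← Module.End.mul_apply, hZ.dd]; rfl
        · simp only [Module.End.mul_apply, ← hq, LinearMap.add_apply]
          rw [← Module.End.mul_apply, hZ.dx, LinearMap.add_apply, map_add]
          split_ifs <;> simp
      have hne : M.mkQ (u j) ≠ 0 := by
        rw [Submodule.mkQ_apply, Ne, Submodule.Quotient.mk_eq_zero]
        exact hL j (by omega)
      have hb := bernstein_ineq hZq hne q
      set K := 2 * n * q
      have fin1 := bfil_finite Zq (K + K) (M.mkQ (u j))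
      have hmono : Module.finrank k (bfil Zq K (M.mkQ (u j))) ≤
          Module.finrank k (bfil Zq (K + K) (M.mkQ (u j))) :=
        Submodule.finrank_mono (bfil_mono Zq (by omega) _)
      have hd : (q + 1) ^ n ≤ Module.finrank k (bfil Zq (K + K) (M.mkQ (u j))) := by
        have : ((q + 1) ^ n) ^ 2 ≤ (Module.finrank k (bfil Zq (K + K) (M.mkQ (u j)))) ^ 2 := by
          rw [← pow_mul, mul_comm n 2, sq (Module.finrank k _)]
          exact hb.trans (Nat.mul_le_mul_right _ hmono)
        exact (Nat.pow_le_pow_iff_left two_ne_zero).1 this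
      rw [← map_bfil M.mkQ hq] at hd
      set F := bfil Z (K + K) (u j)
      have hFW : F ≤ W := hW j (by omega)
      refine ⟨F ⊔ T, sup_le hFW hTW, sup_le (bfil_le_bgen Z _ ?_) ?_, ?_⟩
      · exact Submodule.subset_span ⟨[], by simp [wop]⟩
      · refine hTM.trans (Submodule.span_le.2 ?_)
        rintro _ ⟨ω, rfl⟩
        exact wop_mem_bgen Z _ ω (hu j)
      · have : FiniteDimensional k (F ⊔ T : Submodule k V) :=
          Submodule.finiteDimensional_of_le (sup_le hFW hTW)
        set S := F ⊔ T
        have hrn := LinearMap.finrank_range_add_finrank_ker (M.mkQ.domRestrict S)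
        have h1 : (F.map M.mkQ) ≤ LinearMap.range (M.mkQ.domRestrict S) := by
          rintro _ ⟨v, hv, rfl⟩
          exact ⟨⟨v, Submodule.mem_sup_left hv⟩, rfl⟩
        have h1' := Submodule.finrank_mono h1
        let ι : T →ₗ[k] LinearMap.ker (M.mkQ.domRestrict S) :=
          { toFun := fun t => ⟨⟨t.1, Submodule.mem_sup_right t.2⟩, by
              simpa using hTM t.2⟩
            map_add' := fun _ _ => rfl
            map_smul' := fun _ _ => rfl }
        have hι : Function.Injective ι := fun a b hab => by
          have := congrArg (fun x => (x.1.1 : V)) hab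
          exact Subtype.ext this
        have h2 := LinearMap.finrank_le_finrank_of_injective hι
        calc (i + 1) * (q + 1) ^ n = (q + 1) ^ n + i * (q + 1) ^ n := by ring
          _ ≤ _ := by
            rw [← hrn]
            exact Nat.add_le_add (hd.trans h1') (hT.trans h2)
  obtain ⟨T, hTW, -, hT⟩ := key L le_rfl
  exact hT.trans (Submodule.finrank_mono hTW)
end WeylModule2

/-! ### Words of differential operators acting on powers of a polynomial -/

/-- The polynomial `Q_ω` with `ω • G ^ e = Q_ω G ^ (e - |ω|)`, where the letter `inl i` acts by
multiplication by the `i`-th variable and `inr i` by the `i`-th partial derivative. -/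
noncomputable def wordPoly {S : Type*} [CommRing S] {n : ℕ} (G : MvPolynomial (Fin n) S) (e : S) :
    List (Fin n ⊕ Fin n) → MvPolynomial (Fin n) S
  | [] => 1
  | .inl i :: ω => G * X i * wordPoly G e ω
  | .inr i :: ω => G * pderiv i (wordPoly G e ω) +
      C (e - (ω.length : S)) * wordPoly G e ω * pderiv i G

theorem map_wordPoly {S T : Type*} [CommRing S] [CommRing T] {n : ℕ} (φ : S →+* T)
    (G : MvPolynomial (Fin n) S) (e : S) (ω) :
    map φ (wordPoly G e ω) = wordPoly (map φ G) (φ e) ω := by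
  induction ω with
  | nil => simp [wordPoly]
  | cons a ω ih => cases a <;> simp [wordPoly, ih, ← pderiv_map]

theorem totalDegree_pderiv_le {S : Type*} [CommRing S] {n : ℕ} (p : MvPolynomial (Fin n) S)
    (i : Fin n) : (pderiv i p).totalDegree ≤ p.totalDegree := by
  refine Finset.sup_le fun m hm => ?_
  rw [mem_support_iff, coeff_pderiv] at hm
  have := le_totalDegree (mem_support_iff.2 (left_ne_zero_of_mul hm))
  refine le_trans ?_ this
  rw [Finsupp.sum_add_index' (by simp) (by simp)]
  exact Nat.le_add_right _ _

theorem totalDegree_wordPoly {S : Type*} [CommRing S] {n : ℕ} (G : MvPolynomial (Fin n) S) (e : S)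
    (ω) : (wordPoly G e ω).totalDegree ≤ ω.length * (G.totalDegree + 1) := by
  induction ω with
  | nil => simp [wordPoly]
  | cons a ω ih =>
    cases a with
    | inl i =>
      rw [wordPoly]
      refine (totalDegree_mul _ _).trans ?_
      have := (totalDegree_mul G (X i))
      have h2 : (X i : MvPolynomial (Fin n) S).totalDegree ≤ 1 := by
        rcases subsingleton_or_nontrivial S with h | h
        · rw [Subsingleton.elim (X i : MvPolynomial (Fin n) S) 0]; simp
        · simp
      simp only [List.length_cons, add_mul]
      omega
    | inr i =>
      rw [wordPoly]
      have h1 := totalDegree_mul G (pderiv i (wordPoly G e ω))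
      have h2 := totalDegree_mul (C (e - (ω.length : S)) * wordPoly G e ω) (pderiv i G)
      have h3 := totalDegree_mul (C (e - (ω.length : S))) (wordPoly G e ω)
      have h4 := totalDegree_pderiv_le (wordPoly G e ω) i
      have h5 := totalDegree_pderiv_le G i
      rw [totalDegree_C] at h3
      refine (totalDegree_add _ _).trans (max_le ?_ ?_) <;>
      · simp only [List.length_cons, add_mul]
        omega

section
variable {k : Type*} [Field k] {n : ℕ}

/-- The partial derivatives extend to the field of rational functions. -/
theorem exists_fracDeriv (F : Type*) [Field F] [Algebra (MvPolynomial (Fin n) k) F]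
    [IsFractionRing (MvPolynomial (Fin n) k) F] [Algebra k F]
    [IsScalarTower k (MvPolynomial (Fin n) k) F] (i : Fin n) :
    ∃ δ : Derivation k F F, ∀ p : MvPolynomial (Fin n) k,
      δ (algebraMap _ _ p) = algebraMap _ _ (pderiv i p) := by
  let al := algebraMap (MvPolynomial (Fin n) k) F
  let ψ : MvPolynomial (Fin n) k →+* TrivSqZeroExt F F :=
    { toFun := fun p => TrivSqZeroExt.inl (al p) + TrivSqZeroExt.inr (al (pderiv i p))
      map_one' := by ext <;> simp
      map_zero' := by ext <;> simp
      map_add' := fun p q => by ext <;> simp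
      map_mul' := fun p q => by
        ext
        · simp
        · simp; ring }
  have hψ1 : ∀ p, (ψ p).fst = al p := fun p => by simp [ψ]
  have hψ2 : ∀ p, (ψ p).snd = al (pderiv i p) := fun p => by simp [ψ]
  have hψ : ∀ y : nonZeroDivisors (MvPolynomial (Fin n) k), IsUnit (ψ y) := by
    intro y
    rw [TrivSqZeroExt.isUnit_iff_isUnit_fst, hψ1]
    exact IsLocalization.map_units F y
  obtain ⟨φ, hφ⟩ : ∃ φ : F →+* TrivSqZeroExt F F, ∀ p, φ (al p) = ψ p :=
    ⟨IsLocalization.lift hψ, fun p => IsLocalization.lift_eq hψ p⟩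
  have hfst : ∀ v, (φ v).fst = v := by
    intro v
    have : ((TrivSqZeroExt.fstHom F F F).toRingHom.comp φ) = RingHom.id F := by
      apply IsLocalization.ringHom_ext (nonZeroDivisors (MvPolynomial (Fin n) k))
      refine RingHom.ext fun p => ?_
      change (φ (al p)).fst = al p
      rw [hφ, hψ1]
    exact congrArg (fun f : F →+* F => f v) this
  refine ⟨Derivation.mk' { toFun := fun v => (φ v).snd, map_add' := fun a b => by simp
                           map_smul' := fun c v => ?_ } fun a b => ?_, fun p => ?_⟩
  · have h0 : ∀ w : F, c • w = al (C c) * w := fun w => by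
      rw [Algebra.smul_def, IsScalarTower.algebraMap_apply k (MvPolynomial (Fin n) k) F]; rfl
    simp only [RingHom.id_apply]
    rw [h0, h0, map_mul, hφ, TrivSqZeroExt.snd_mul, hψ1, hψ2, pderiv_C]
    simp
  · change (φ (a * b)).snd = a * (φ b).snd + b * (φ a).snd
    rw [map_mul, TrivSqZeroExt.snd_mul, hfst, hfst]
    simp [mul_comm]
  · change (φ (al p)).snd = _
    rw [hφ, hψ2]

end

/-! ### The Weyl algebra acting on twisted rational functions -/

section
variable {k : Type*} [Field k] {n : ℕ}

/-- A derivation of the field of rational functions that vanishes on polynomials is zero. -/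
theorem derivation_frac_ext (F : Type*) [Field F] [Algebra (MvPolynomial (Fin n) k) F]
    [IsFractionRing (MvPolynomial (Fin n) k) F] [Algebra k F] (D : Derivation k F F)
    (hD : ∀ p : MvPolynomial (Fin n) k, D (algebraMap _ _ p) = 0) (v : F) : D v = 0 := by
  obtain ⟨p, q, -, rfl⟩ := IsFractionRing.div_surjective (A := MvPolynomial (Fin n) k) v
  rw [Derivation.leibniz_div, hD, hD]; simp

theorem pderiv_pderiv_comm' {S : Type*} [CommRing S] (i j : Fin n) (p : MvPolynomial (Fin n) S) :
    pderiv i (pderiv j p) = pderiv j (pderiv i p) := by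
  have : ⁅pderiv (R := S) i, pderiv (R := S) j⁆ = 0 := by
    refine MvPolynomial.derivation_ext fun l => ?_
    classical
    rw [Derivation.commutator_apply, pderiv_X, pderiv_X, Pi.single_apply, Pi.single_apply]
    split_ifs <;> simp
  have := congrArg (fun D => D p) this
  rwa [Derivation.commutator_apply, Derivation.coe_zero, Pi.zero_apply, sub_eq_zero] at this

/-- The Weyl algebra acts on `F · G ^ σ`, where `F` is the field of rational functions; the
underlying space is `F` itself, with `v` standing for `v · G ^ σ`. The formulas for the action on
`G ^ (σ + a)` are given by `wordPoly`. -/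
theorem exists_twisted_weyl (F : Type*) [Field F] [Algebra (MvPolynomial (Fin n) k) F]
    [IsFractionRing (MvPolynomial (Fin n) k) F] [Algebra k F]
    [IsScalarTower k (MvPolynomial (Fin n) k) F] (G : MvPolynomial (Fin n) k) (hG : G ≠ 0)
    (σ : k) : ∃ Z : Fin n ⊕ Fin n → Module.End k F, IsWeyl Z ∧
      (∀ i v, Z (.inl i) v = algebraMap _ F (X i : MvPolynomial (Fin n) k) * v) ∧
      ∀ (a : ℤ) ω, wop Z ω ((algebraMap _ F G) ^ a) =
        algebraMap _ F (wordPoly G (σ + a) ω) * (algebraMap _ F G) ^ (a - (ω.length : ℤ)) := by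
  choose δ hδ using fun i => exists_fracDeriv (k := k) (n := n) F i
  set al := algebraMap (MvPolynomial (Fin n) k) F with hal
  set g := al G with hg
  have hg0 : g ≠ 0 := by
    rw [hg, hal]; exact (map_ne_zero_iff _ (IsFractionRing.injective _ _)).2 hG
  have hcomm : ∀ i j v, δ i (δ j v) = δ j (δ i v) := by
    intro i j v
    have := derivation_frac_ext F ⁅δ i, δ j⁆ (fun p => by
      rw [Derivation.commutator_apply, hδ, hδ, hδ, hδ, ← map_sub, sub_eq_zero.2, map_zero]
      exact pderiv_pderiv_comm' i j p) v
    rwa [Derivation.commutator_apply, sub_eq_zero] at this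
  have hC : ∀ c : k, algebraMap k F c = al (C c) := fun c => by
    rw [IsScalarTower.algebraMap_apply k (MvPolynomial (Fin n) k) F]; rfl
  let Z : Fin n ⊕ Fin n → Module.End k F := Sum.elim (fun i => LinearMap.mulLeft k (al (X i)))
    (fun i => (δ i : F →ₗ[k] F) + σ • LinearMap.mulLeft k (δ i g / g))
  have hx : ∀ i v, Z (.inl i) v = al (X i) * v := fun i v => rfl
  have hd : ∀ i v, Z (.inr i) v = δ i v + al (C σ) * (δ i g / g * v) := fun i v => by
    simp [Z, Algebra.smul_def, hC]
  refine ⟨Z, ⟨fun i j => ?_, fun i j => ?_, fun i j => ?_⟩, fun i v => rfl, fun a ω => ?_⟩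
  · ext v; simp only [Module.End.mul_apply, hx]; ring
  · ext v
    simp only [Module.End.mul_apply, hd, map_add, Derivation.leibniz, Derivation.leibniz_div,
      smul_eq_mul, hδ, pderiv_C, map_zero, hcomm i j]
    field_simp
    ring
  · ext v
    simp only [Module.End.mul_apply, hd, hx, Derivation.leibniz, smul_eq_mul, hδ, pderiv_X,
      LinearMap.add_apply]
    by_cases h : i = j
    · subst h; simp; ring
    · rw [Pi.single_eq_of_ne (Ne.symm h)]; simp [h]; ring
  · induction ω with
    | nil => simp [wop, wordPoly]
    | cons b ω ih =>
      rw [wop_cons, Module.End.mul_apply, ih]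
      cases b with
      | inl i =>
        rw [hx, wordPoly, map_mul, map_mul, ← hg]
        have : g ^ (a - (ω.length : ℤ)) = g * g ^ (a - ((Sum.inl i :: ω).length : ℤ)) := by
          rw [← zpow_one_add₀ hg0]; congr 1; simp; ring
        rw [this]; ring
      | inr i =>
        have : g ^ (a - (ω.length : ℤ)) = g * g ^ (a - ((Sum.inr i :: ω).length : ℤ)) := by
          rw [← zpow_one_add₀ hg0]; congr 1; simp; ring
        have h2 : a - (ω.length : ℤ) - 1 = a - ((Sum.inr i :: ω).length : ℤ) := by simp; ring
        rw [hd, Derivation.leibniz, Derivation.leibniz_zpow, wordPoly, h2, this]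
        simp only [map_add, map_mul, smul_eq_mul, hδ, ← hg, zsmul_eq_mul, map_sub,
          Int.cast_sub, Int.cast_natCast, map_natCast, map_intCast]
        rw [hg, hδ]
        simp only [← hg]
        field_simp
        ring

end

/-! ### Weak Bernstein–Sato relations -/

section
variable {k : Type*} [Field k] {n : ℕ}

/-- The submodule generated by a vector is stable under multiplication by polynomials. -/
theorem algebraMap_mul_mem_bgen (F : Type*) [Field F] [Algebra (MvPolynomial (Fin n) k) F]
    [Algebra k F] [IsScalarTower k (MvPolynomial (Fin n) k) F]
    (Z : Fin n ⊕ Fin n → Module.End k F)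
    (hZ : ∀ i v, Z (.inl i) v = algebraMap _ F (X i : MvPolynomial (Fin n) k) * v)
    (p : MvPolynomial (Fin n) k) (u v : F) (hv : v ∈ bgen Z u) :
    algebraMap _ F p * v ∈ bgen Z u := by
  induction p using MvPolynomial.induction_on with
  | C c =>
    have : algebraMap (MvPolynomial (Fin n) k) F (C c) * v = c • v := by
      rw [Algebra.smul_def, IsScalarTower.algebraMap_apply k (MvPolynomial (Fin n) k) F]; rfl
    rw [this]; exact Submodule.smul_mem _ _ hv
  | add p q hp hq => rw [map_add, add_mul]; exact Submodule.add_mem _ hp hq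
  | mul_X p i hp =>
    rw [map_mul, mul_right_comm, mul_comm, ← hZ]
    exact apply_mem_bgen _ _ _ hp

/-- A weak Bernstein–Sato relation over a field: `G ^ (σ + N j)` is obtained from
`G ^ (σ + N (j + 1))` by a differential operator, for some `j`. Applying the operator as words and
clearing the powers of `G` in the denominators makes this an identity of polynomials. -/
theorem exists_bernstein_field [CharZero k] (G : MvPolynomial (Fin n) k) (hG : G ≠ 0) (σ : k)
    (N : ℕ) : ∃ (j : ℕ) (Ω : Finset (List (Fin n ⊕ Fin n))) (c : List (Fin n ⊕ Fin n) → k) (K : ℕ),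
      (∀ ω ∈ Ω, ω.length ≤ K) ∧
      G ^ K = ∑ ω ∈ Ω, C (c ω) * wordPoly G (σ + (N * (j + 1) : ℕ)) ω *
        G ^ (N + K - ω.length) := by
  let F := FractionRing (MvPolynomial (Fin n) k)
  obtain ⟨Z, hZ, hZx, hZw⟩ := exists_twisted_weyl F G hG σ
  obtain ⟨al, hal⟩ : ∃ al, al = algebraMap (MvPolynomial (Fin n) k) F := ⟨_, rfl⟩
  obtain ⟨g, hg⟩ : ∃ g, g = al G := ⟨_, rfl⟩
  rw [← hal, ← hg] at hZw
  have hinj : Function.Injective al := hal ▸ IsFractionRing.injective _ _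
  have hg0 : g ≠ 0 := by
    rw [hg]; exact (map_ne_zero_iff _ hinj).2 hG
  let u : ℕ → F := fun j => g ^ ((N * j : ℕ) : ℤ)
  have hu : ∀ j, u (j + 1) ∈ bgen Z (u j) := by
    intro j
    have : u (j + 1) = algebraMap _ F (G ^ N) * u j := by
      rw [← hal, map_pow, ← hg]
      simp only [u, zpow_natCast]
      ring
    rw [this]
    exact algebraMap_mul_mem_bgen F Z hZx _ _ _
      (Submodule.subset_span ⟨[], by simp [wop]⟩)
  -- if no such `j` exists, the chain of length `q + 1` violates `chain_bound`: the filtration steps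
  -- consist of fractions `p / G ^ K` whose numerators have bounded degree, and `q` is chosen large
  -- enough for their number of coefficients to be too small
  have key : ∃ j, u j ∈ bgen Z (u (j + 1)) := by
    by_contra! hno
    set E := G.totalDegree
    set A := 4 * n * (E + 1) + N * E + 1 with hA
    set q := A ^ n with hq
    set K := 2 * n * q + 2 * n * q with hK
    set B := K * (E + 1) + N * (q + 1) * E with hB
    let T : MvPolynomial (Fin n) k →ₗ[k] F :=
      { toFun := fun p => al p * g ^ (-(K : ℤ))
        map_add' := fun p q => by rw [map_add, add_mul]
        map_smul' := fun c p => by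
          rw [smul_eq_C_mul, map_mul, RingHom.id_apply, Algebra.smul_def,
            IsScalarTower.algebraMap_apply k (MvPolynomial (Fin n) k) F, mul_assoc, ← hal]
          rfl }
    let W := (restrictDegree (Fin n) k B).map T
    have hfin : FiniteDimensional k (restrictDegree (Fin n) k B) := by
      apply Module.finite_of_finrank_pos
      rw [finrank_restrictDegree]; positivity
    have hWd : Module.finrank k W ≤ (B + 1) ^ n := by
      refine (Submodule.finrank_map_le T _).trans ?_
      rw [finrank_restrictDegree, Fintype.card_fin]
    have hW : ∀ j < q + 1, bfil Z (2 * n * q + 2 * n * q) (u j) ≤ W := by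
      intro j hj
      refine Submodule.span_le.2 ?_
      rintro _ ⟨ω, hω, rfl⟩
      have hω' : ω.length ≤ K := hω
      refine ⟨wordPoly G (σ + ((N * j : ℕ) : ℤ)) ω * G ^ (K - ω.length + N * j), ?_, ?_⟩
      · refine restrictTotalDegree_le_restrictDegree _ _ B ((mem_restrictTotalDegree _ _ _).2 ?_)
        have h1 := totalDegree_mul (wordPoly G (σ + ((N * j : ℕ) : ℤ)) ω)
          (G ^ (K - ω.length + N * j))
        have h2 := totalDegree_wordPoly G (σ + ((N * j : ℕ) : ℤ)) ω
        have h3 := totalDegree_pow G (K - ω.length + N * j)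
        have h4 : ω.length * (E + 1) + (K - ω.length + N * j) * E ≤ B := by
          obtain ⟨m, hm⟩ := Nat.exists_eq_add_of_le hω'
          have : N * j ≤ N * (q + 1) := Nat.mul_le_mul_left _ hj.le
          rw [hB, hm, Nat.add_sub_cancel_left]
          nlinarith [Nat.mul_le_mul_right E this]
        exact h1.trans ((Nat.add_le_add h2 h3).trans h4)
      · change al _ * g ^ (-(K : ℤ)) = wop Z ω (g ^ ((N * j : ℕ) : ℤ))
        rw [hZw, map_mul, map_pow, ← hg, mul_assoc, ← zpow_natCast, ← zpow_add₀ hg0]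
        congr 2
        push_cast [hω']
        ring
    have := chain_bound hZ u hu (q + 1) q (fun j _ => hno j) W hW
    have h1 : (q + 1) * (q + 1) ^ n ≤ (B + 1) ^ n := this.trans hWd
    have h2 : B + 1 ≤ (q + 1) * A := by
      rw [hB, hK, hA]; nlinarith [Nat.zero_le (n * (E + 1)), Nat.zero_le q]
    have h3 : (B + 1) ^ n ≤ (q + 1) ^ n * A ^ n := by
      rw [← mul_pow]; exact Nat.pow_le_pow_left h2 n
    have h4 : 0 < (q + 1) ^ n := by positivity
    have : (q + 1) ^ n * (q + 1) ≤ (q + 1) ^ n * q := by rw [hq] at *; linarith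
    have := Nat.le_of_mul_le_mul_left this h4
    omega
  obtain ⟨j, hj⟩ := key
  rw [bgen, Finsupp.mem_span_range_iff_exists_finsupp] at hj
  obtain ⟨c, hc⟩ := hj
  refine ⟨j, c.support, c, c.support.sup List.length, fun ω hω => Finset.le_sup (f := List.length) hω, ?_⟩
  set K := c.support.sup List.length
  apply hinj
  rw [map_sum, map_pow, ← hg]
  have : g ^ K = g ^ ((K : ℤ) - (N * j : ℕ)) * u j := by
    simp only [u]; rw [← zpow_add₀ hg0]; simp
  rw [this, ← hc, Finsupp.sum, Finset.mul_sum]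
  refine Finset.sum_congr rfl fun ω hω => ?_
  have hω' : ω.length ≤ K := Finset.le_sup (f := List.length) hω
  simp only [u]
  rw [hZw, map_mul, map_mul, map_pow, ← hg, Algebra.smul_def,
    IsScalarTower.algebraMap_apply k (MvPolynomial (Fin n) k) F, ← hal, algebraMap_eq]
  have : g ^ (N + K - ω.length) = g ^ ((K : ℤ) - (N * j : ℕ)) * g ^ (((N * (j + 1) : ℕ) : ℤ) - ω.length) := by
    rw [← zpow_natCast, ← zpow_add₀ hg0]
    congr 1
    push_cast [hω'.trans (Nat.le_add_left K N)]
    ring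
  rw [this]
  simp only [Int.cast_natCast]
  ring

end

/-- The weak Bernstein–Sato relation over an integral domain of characteristic zero. -/
theorem exists_bernstein {S : Type*} [CommRing S] [IsDomain S] [CharZero S] {n : ℕ}
    (G : MvPolynomial (Fin n) S) (hG : G ≠ 0) (σ : S) (N : ℕ) :
    ∃ (j : ℕ) (Ω : Finset (List (Fin n ⊕ Fin n))) (c : List (Fin n ⊕ Fin n) → S) (K : ℕ) (b : S),
      b ≠ 0 ∧ (∀ ω ∈ Ω, ω.length ≤ K) ∧
      C b * G ^ K = ∑ ω ∈ Ω, C (c ω) * wordPoly G (σ + (N * (j + 1) : ℕ)) ω *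
        G ^ (N + K - ω.length) := by
  classical
  let k := FractionRing S
  let ι : S →+* k := algebraMap S k
  have hι : Function.Injective ι := IsFractionRing.injective S k
  have : CharZero k := charZero_of_injective_algebraMap hι
  have hmap : Function.Injective (MvPolynomial.map (σ := Fin n) ι) := map_injective ι hι
  obtain ⟨j, Ω, c, K, hK, h⟩ := exists_bernstein_field (MvPolynomial.map ι G)
    ((map_ne_zero_iff _ hmap).2 hG) (ι σ) N
  obtain ⟨b, hb⟩ := IsLocalization.exist_integer_multiples (nonZeroDivisors S) Ω c
  choose! c' hc' using hb
  refine ⟨j, Ω, c', K, b, nonZeroDivisors.ne_zero b.2, hK, hmap ?_⟩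
  rw [map_mul, map_pow, h, map_sum, Finset.mul_sum]
  refine Finset.sum_congr rfl fun ω hω => ?_
  simp only [map_mul, map_pow, map_wordPoly, map_C, map_add, map_natCast]
  rw [show ι (c' ω) = ι b * c ω by
    have := hc' ω hω
    rw [Algebra.smul_def] at this
    exact this, C_mul]
  ring

/-! ### Test functions and Wirtinger derivatives -/

/-- Polynomial functions are holomorphic, with the expected partial derivatives. -/
theorem hasFDerivAt_eval {n : ℕ} (p : MvPolynomial (Fin n) ℂ) (x : Fin n → ℂ) :
    ∃ L : (Fin n → ℂ) →L[ℂ] ℂ, HasFDerivAt (fun x => eval x p) L x ∧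
      ∀ i, L (Pi.single i 1) = eval x (pderiv i p) := by
  induction p using MvPolynomial.induction_on with
  | C c => exact ⟨0, by simpa using hasFDerivAt_const c x, fun i => by simp⟩
  | add p q hp hq =>
    obtain ⟨L, hL, h⟩ := hp
    obtain ⟨L', hL', h'⟩ := hq
    exact ⟨L + L', by simp only [map_add]; exact hL.add hL', fun i => by simp [h, h']⟩
  | mul_X p j hp =>
    obtain ⟨L, hL, h⟩ := hp
    refine ⟨_, by simp only [map_mul, eval_X]; exact hL.mul (hasFDerivAt_apply j x), fun i => ?_⟩
    simp [h, pderiv_X, Pi.single_apply, apply_ite]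

theorem contDiff_eval {n : ℕ} (p : MvPolynomial (Fin n) ℂ) {m : WithTop ℕ∞} :
    ContDiff ℝ m (fun x : Fin n → ℂ => eval x p) := by
  induction p using MvPolynomial.induction_on with
  | C c => simpa using contDiff_const
  | add p q hp hq => simpa using hp.add hq
  | mul_X p j hp => simpa using hp.mul (contDiff_apply ℝ ℂ j)

theorem continuous_eval' {n : ℕ} (p : MvPolynomial (Fin n) ℂ) :
    Continuous (fun x : Fin n → ℂ => eval x p) := (contDiff_eval p (m := 0)).continuous

/-- The Wirtinger derivative `∂h/∂xᵢ`. -/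
noncomputable def wderiv {n : ℕ} (i : Fin n) (h : (Fin n → ℂ) → ℂ) (x : Fin n → ℂ) : ℂ :=
  1 / 2 * (fderiv ℝ h x (Pi.single i 1) - Complex.I * fderiv ℝ h x (Complex.I • Pi.single i 1))

/-- Complex valued smooth test functions. -/
structure IsTest {n : ℕ} (φ : (Fin n → ℂ) → ℂ) : Prop where
  smooth : ContDiff ℝ ((⊤ : ℕ∞) : WithTop ℕ∞) φ
  compact : HasCompactSupport φ

theorem IsTest.wderiv {n : ℕ} {φ : (Fin n → ℂ) → ℂ} (h : IsTest φ) (i : Fin n) :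
    IsTest (wderiv i φ) := by
  have h1 : ∀ v, ContDiff ℝ ((⊤ : ℕ∞) : WithTop ℕ∞) (fun x => fderiv ℝ φ x v) := fun v =>
    (h.smooth.fderiv_right (by simp)).clm_apply contDiff_const
  refine ⟨contDiff_const.mul ((h1 _).sub (contDiff_const.mul (h1 _))), ?_⟩
  refine HasCompactSupport.mul_left (HasCompactSupport.sub (h.compact.fderiv_apply ℝ _) ?_)
  exact HasCompactSupport.mul_left (h.compact.fderiv_apply ℝ _)

/-- The action on test functions of the transpose of a letter. -/
noncomputable def adj1 {n : ℕ} : Fin n ⊕ Fin n → ((Fin n → ℂ) → ℂ) → (Fin n → ℂ) → ℂ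
  | .inl i => fun φ x => x i * φ x
  | .inr i => fun φ x => - wderiv i φ x

/-- The action on test functions of the transpose of a word. -/
noncomputable def adjw {n : ℕ} : List (Fin n ⊕ Fin n) → ((Fin n → ℂ) → ℂ) → (Fin n → ℂ) → ℂ
  | [] => fun φ => φ
  | a :: ω => fun φ => adjw ω (adj1 a φ)

theorem IsTest.adj1 {n : ℕ} {φ : (Fin n → ℂ) → ℂ} (h : IsTest φ) (a) : IsTest (adj1 a φ) := by
  cases a with
  | inl i => exact ⟨(contDiff_apply ℝ ℂ i).mul h.smooth, h.compact.mul_left⟩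
  | inr i =>
    have := h.wderiv i
    exact ⟨this.smooth.neg, this.compact.neg⟩

theorem IsTest.adjw {n : ℕ} {φ : (Fin n → ℂ) → ℂ} (h : IsTest φ) (ω) : IsTest (adjw ω φ) := by
  induction ω generalizing φ with
  | nil => exact h
  | cons a ω ih => exact ih (h.adj1 a)

theorem tsupport_adjw {n : ℕ} (φ : (Fin n → ℂ) → ℂ) (ω) : tsupport (adjw ω φ) ⊆ tsupport φ := by
  induction ω generalizing φ with
  | nil => exact subset_rfl
  | cons a ω ih =>
    refine (ih _).trans ?_
    cases a with
    | inl i =>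
      exact closure_mono fun x hx => by
        simp only [adj1, Function.mem_support] at hx ⊢
        exact right_ne_zero_of_mul hx
    | inr i =>
      refine closure_minimal (fun x hx => ?_) (isClosed_tsupport _)
      by_contra hc
      refine hx ?_
      have : fderiv ℝ φ x = 0 := by
        have h3 : x ∉ Function.support (fderiv ℝ φ) := fun h => hc (support_fderiv_subset ℝ h)
        simpa using h3
      simp [adj1, wderiv, this]

/-- Integration by parts. -/
theorem integral_wderiv {n : ℕ} (i : Fin n) {h φ : (Fin n → ℂ) → ℂ} (hh : ContDiff ℝ 1 h)
    (hφ : IsTest φ) : ∫ x, wderiv i h x * φ x = ∫ x, h x * - wderiv i φ x := by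
  have h1 : ∀ v, Continuous (fun x => fderiv ℝ h x v) := fun v =>
    ((hh.fderiv_right (m := 0) (by simp)).clm_apply contDiff_const).continuous
  have h2 : ∀ v, Continuous (fun x => fderiv ℝ φ x v) := fun v =>
    ((hφ.smooth.fderiv_right (m := 0) (by simp)).clm_apply contDiff_const).continuous
  have i1 : ∀ v, Integrable (fun x => fderiv ℝ h x v * φ x) := fun v =>
    ((h1 v).mul hφ.smooth.continuous).integrable_of_hasCompactSupport hφ.compact.mul_left
  have i2 : ∀ v, Integrable (fun x => h x * fderiv ℝ φ x v) := fun v =>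
    (hh.continuous.mul (h2 v)).integrable_of_hasCompactSupport
      (hφ.compact.fderiv_apply ℝ v).mul_left
  have i3 : Integrable (fun x => h x * φ x) :=
    (hh.continuous.mul hφ.smooth.continuous).integrable_of_hasCompactSupport hφ.compact.mul_left
  have key : ∀ v, ∫ x, fderiv ℝ h x v * φ x = - ∫ x, h x * fderiv ℝ φ x v := fun v => by
    rw [integral_mul_fderiv_eq_neg_fderiv_mul_of_integrable (i1 v) (i2 v) i3
      (fun x _ => (hh.differentiable (by simp)).differentiableAt)
      (fun x _ => (hφ.smooth.differentiable (by simp)).differentiableAt), neg_neg]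
  have e1 : ∀ x, wderiv i h x * φ x = 1 / 2 * (fderiv ℝ h x (Pi.single i 1) * φ x) -
      1 / 2 * Complex.I * (fderiv ℝ h x (Complex.I • Pi.single i 1) * φ x) := fun x => by
    rw [wderiv]; ring
  have e2 : ∀ x, h x * - wderiv i φ x = 1 / 2 * Complex.I * (h x * fderiv ℝ φ x (Complex.I • Pi.single i 1)) -
      1 / 2 * (h x * fderiv ℝ φ x (Pi.single i 1)) := fun x => by
    rw [wderiv]; ring
  simp_rw [e1, e2]
  rw [integral_sub ((i1 _).const_mul _) ((i1 _).const_mul _),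
    integral_sub ((i2 _).const_mul _) ((i2 _).const_mul _)]
  simp_rw [integral_const_mul, key]
  ring

/-! ### Integration by parts of the relation -/

/-- The function `g ^ (N + τ - m) * conj g ^ τ`, written so that it is real differentiable on all of
`ℂⁿ` when `τ - m ≥ 1`. -/
noncomputable def conjPow {n : ℕ} (g : MvPolynomial (Fin n) ℂ) (N : ℕ) (τ : ℝ) (m : ℕ)
    (x : Fin n → ℂ) : ℂ :=
  eval x g ^ N * (starRingEnd ℂ) (eval x g) ^ m * (((‖eval x g‖ ^ 2) ^ (τ - m) : ℝ) : ℂ)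

theorem contDiff_conjPow {n : ℕ} (g : MvPolynomial (Fin n) ℂ) (N : ℕ) (τ : ℝ) (m : ℕ)
    (h : 1 ≤ τ - m) : ContDiff ℝ 1 (conjPow g N τ m) := by
  have hg := contDiff_eval g (m := 1)
  have h1 : ContDiff ℝ 1 (fun x : Fin n → ℂ => (‖eval x g‖ ^ 2) ^ (τ - m)) :=
    ContDiff.rpow_const_of_le (m := 1) (hg.norm_sq ℂ) (by simpa using h)
  have h2 : ContDiff ℝ 1 (fun x : Fin n → ℂ => (starRingEnd ℂ) (eval x g)) :=
    Complex.conjCLE.contDiff.comp hg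
  exact ((hg.pow N).mul (h2.pow m)).mul (Complex.ofRealCLM.contDiff.comp h1)

theorem conjPow_succ {n : ℕ} (g : MvPolynomial (Fin n) ℂ) (N : ℕ) (τ : ℝ) (m : ℕ)
    (h : 1 ≤ τ - m) (x : Fin n → ℂ) :
    conjPow g N τ m x = eval x g * conjPow g N τ (m + 1) x := by
  rw [conjPow, conjPow]
  rcases eq_or_ne (eval x g) 0 with h0 | h0
  · simp [h0, Real.zero_rpow (show τ - m ≠ 0 by linarith)]
  · have : (‖eval x g‖ ^ 2) ^ (τ - m) = ‖eval x g‖ ^ 2 * (‖eval x g‖ ^ 2) ^ (τ - (m + 1 : ℕ)) := by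
      rw [← Real.rpow_one_add' (by positivity) (by push_cast; linarith)]
      congr 1; push_cast; ring
    rw [this]; push_cast [← Complex.mul_conj']; ring

/-- The conjugate of `g` is antiholomorphic, so the derivative acts as on `Q * g ^ (N + τ - m)`. -/
theorem wderiv_conjPow {n : ℕ} (g Q : MvPolynomial (Fin n) ℂ) (N : ℕ) (τ : ℝ) (m : ℕ)
    (h : 1 ≤ τ - m) (i : Fin n) (x : Fin n → ℂ) :
    wderiv i (fun x => eval x Q * conjPow g N τ m x) x =
      eval x (g * pderiv i Q + C ((τ : ℂ) + N - m) * Q * pderiv i g) * conjPow g N τ (m + 1) x := by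
  obtain ⟨L, hL, hLi⟩ := hasFDerivAt_eval g x
  obtain ⟨LQ, hLQ, hLQi⟩ := hasFDerivAt_eval Q x
  have hL' := hL.restrictScalars ℝ
  have hLQ' := hLQ.restrictScalars ℝ
  have hc : HasFDerivAt (fun x => (starRingEnd ℂ) (eval x g)) _ x :=
    Complex.conjCLE.toContinuousLinearMap.hasFDerivAt.comp x hL'
  have hr : HasFDerivAt (fun x => (((‖eval x g‖ ^ 2) ^ (τ - m) : ℝ) : ℂ)) _ x :=
    Complex.ofRealCLM.hasFDerivAt.comp x ((hL'.norm_sq).rpow_const (p := τ - m) (Or.inr h))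
  have hall := hLQ'.mul (((hL'.pow N).mul (hc.pow m)).mul hr)
  have hf : fderiv ℝ (fun x => eval x Q * conjPow g N τ m x) x = _ := hall.fderiv
  have hLI : ∀ v, L (Complex.I • v) = Complex.I * L v := fun v => by simp
  have hLQI : ∀ v, LQ (Complex.I • v) = Complex.I * LQ v := fun v => by simp
  rw [wderiv, hf]
  simp only [_root_.add_apply, _root_.smul_apply,
    ContinuousLinearMap.coe_restrictScalars', ContinuousLinearMap.comp_apply, hLI, hLQI, hLi, hLQi,
    smul_eq_mul, innerSL_apply_apply, Complex.inner, ContinuousLinearEquiv.coe_coe,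
    Complex.conjCLE_apply, map_mul, Complex.conj_I, Complex.ofRealCLM_apply, map_add, eval_C,
    Pi.mul_apply]
  have hm : τ - ((m + 1 : ℕ) : ℝ) = τ - m - 1 := by push_cast; ring
  simp only [conjPow, hm]
  have hR : (((‖eval x g‖ ^ 2) ^ (τ - m) : ℝ) : ℂ) = eval x g * (starRingEnd ℂ) (eval x g) *
      (((‖eval x g‖ ^ 2) ^ (τ - m - 1) : ℝ) : ℂ) := by
    rcases eq_or_ne (eval x g) 0 with h0 | h0
    · simp [h0, Real.zero_rpow (show τ - m ≠ 0 by linarith)]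
    · rw [Complex.mul_conj', ← Complex.ofReal_pow, ← Complex.ofReal_mul,
        ← Real.rpow_one_add' (by positivity) (by linarith)]
      congr 2; ring
  have hT : (N • eval x g ^ (N - 1)) * eval x g = N * eval x g ^ N := by
    cases N with
    | zero => simp
    | succ N => simp [pow_succ]; ring
  rw [hR]
  push_cast [Complex.re_eq_add_conj, nsmul_eq_mul]
  simp only [map_mul, Complex.conj_I, Complex.conj_conj]
  push_cast [nsmul_eq_mul] at hT
  generalize (((‖eval x g‖ ^ 2) ^ (τ - m - 1) : ℝ) : ℂ) = R at *
  generalize (starRingEnd ℂ) (eval x g) = G' at *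
  generalize (starRingEnd ℂ) (eval x (pderiv i g)) = a' at *
  generalize eval x g = G at *
  generalize eval x (pderiv i g) = a at *
  generalize eval x (pderiv i Q) = q at *
  generalize eval x Q = Q at *
  generalize (m : ℂ) * G' ^ (m - 1) = X at *
  generalize (N : ℂ) * G ^ (N - 1) = T at *
  linear_combination (-1/2) * (Q * G ^ N * G' ^ m * ((τ : ℂ) - m) * R * (a * G' - a' * G) +
    G * G' * R * (-G ^ N * X * a' + G' ^ m * T * a) * Q + G ^ N * G' ^ m * G * G' * R * q) *
    Complex.I_sq + Q * G' ^ (m + 1) * R * a * hT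

/-- A word of operators moves from the power of `g` to the test function. -/
theorem integral_wordPoly {n : ℕ} (g : MvPolynomial (Fin n) ℂ) (N : ℕ) (τ : ℝ)
    (ω : List (Fin n ⊕ Fin n)) (h : (ω.length : ℝ) ≤ τ) (φ : (Fin n → ℂ) → ℂ) (hφ : IsTest φ) :
    ∫ x, eval x (wordPoly g ((τ : ℂ) + N) ω) * conjPow g N τ ω.length x * φ x =
      ∫ x, conjPow g N τ 0 x * adjw ω φ x := by
  induction ω generalizing φ with
  | nil => simp [wordPoly, adjw]
  | cons a ω ih =>
    have h1 : 1 ≤ τ - ω.length := by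
      simp only [List.length_cons, Nat.cast_add, Nat.cast_one] at h; linarith
    rw [adjw, ← ih (by linarith) _ (hφ.adj1 a)]
    cases a with
    | inl i =>
      refine integral_congr_ae (Filter.Eventually.of_forall fun x => ?_)
      simp only [wordPoly, adj1, List.length_cons, map_mul, eval_X, conjPow_succ g N τ ω.length h1]
      ring
    | inr i =>
      have h2 := contDiff_eval (wordPoly g ((τ : ℂ) + N) ω) (m := 1)
      simp only [adj1]
      rw [← integral_wderiv i (h2.mul (contDiff_conjPow g N τ ω.length h1)) hφ]
      refine integral_congr_ae (Filter.Eventually.of_forall fun x => ?_)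
      have := wderiv_conjPow g (wordPoly g ((τ : ℂ) + N) ω) N τ ω.length h1 i x
      simp only [List.length_cons]
      rw [wordPoly, ← this]

/-- The weak Bernstein–Sato relation, integrated against a test function, for exponents with large
real part. -/
theorem bernstein_integral {n : ℕ} (g : MvPolynomial (Fin n) ℂ) (N K : ℕ) (τ : ℝ)
    (Ω : Finset (List (Fin n ⊕ Fin n))) (c : List (Fin n ⊕ Fin n) → ℂ) (b : ℂ)
    (hK : ∀ ω ∈ Ω, ω.length ≤ K) (hτ : (K : ℝ) + 1 ≤ τ)
    (hrel : C b * g ^ K = ∑ ω ∈ Ω, C (c ω) * wordPoly g ((τ : ℂ) + N) ω *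
      g ^ (N + K - ω.length)) (φ : (Fin n → ℂ) → ℂ) (hφ : IsTest φ) :
    b * ∫ x, (((‖eval x g‖ ^ 2) ^ τ : ℝ) : ℂ) * φ x =
      ∑ ω ∈ Ω, c ω * ∫ x, eval x g ^ N * (((‖eval x g‖ ^ 2) ^ τ : ℝ) : ℂ) * adjw ω φ x := by
  have hl : ∀ ω ∈ Ω, (ω.length : ℝ) + 1 ≤ τ := fun ω hω =>
    le_trans (by have : (ω.length : ℝ) ≤ K := by exact_mod_cast hK ω hω
                 linarith) hτ
  have e1 : ∀ ω ∈ Ω, ∫ x, eval x g ^ N * (((‖eval x g‖ ^ 2) ^ τ : ℝ) : ℂ) * adjw ω φ x =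
      ∫ x, eval x (wordPoly g ((τ : ℂ) + N) ω) * conjPow g N τ ω.length x * φ x := by
    intro ω hω
    rw [integral_wordPoly g N τ ω (by linarith [hl ω hω]) φ hφ]
    simp [conjPow]
  rw [Finset.sum_congr rfl fun ω hω => by rw [e1 ω hω]]
  simp_rw [← integral_const_mul]
  rw [← integral_finsetSum]
  · refine integral_congr_ae (Filter.Eventually.of_forall fun x => ?_)
    simp only []
    rw [← mul_assoc, show ∑ ω ∈ Ω, c ω * (eval x (wordPoly g ((τ : ℂ) + N) ω) *
      conjPow g N τ ω.length x * φ x) = (∑ ω ∈ Ω, c ω * (eval x (wordPoly g ((τ : ℂ) + N) ω) *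
      conjPow g N τ ω.length x)) * φ x by
        rw [Finset.sum_mul]; exact Finset.sum_congr rfl fun _ _ => by ring]
    congr 1
    rcases eq_or_ne (eval x g) 0 with h0 | h0
    · have : (0 : ℝ) < τ := by have := Nat.cast_nonneg (α := ℝ) K; linarith
      rw [Finset.sum_eq_zero]
      · simp [h0, Real.zero_rpow this.ne']
      · intro ω hω
        have : τ - ω.length ≠ 0 := by linarith [hl ω hω]
        simp [conjPow, h0, Real.zero_rpow this]
    · have h2 := congrArg (eval x) hrel
      simp only [map_mul, map_sum, map_pow, eval_C] at h2
      refine mul_left_cancel₀ (pow_ne_zero K h0) ?_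
      rw [← mul_assoc, mul_comm (eval x g ^ K) b, h2, Finset.sum_mul, Finset.mul_sum]
      refine Finset.sum_congr rfl fun ω hω => ?_
      have h3 : (((‖eval x g‖ ^ 2) ^ τ : ℝ) : ℂ) = (eval x g) ^ ω.length *
          (starRingEnd ℂ) (eval x g) ^ ω.length * (((‖eval x g‖ ^ 2) ^ (τ - ω.length) : ℝ) : ℂ) := by
        rw [← mul_pow, Complex.mul_conj', ← Complex.ofReal_pow, ← Complex.ofReal_pow,
          ← Complex.ofReal_mul, ← Real.rpow_natCast (‖eval x g‖ ^ 2) ω.length,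
          ← Real.rpow_add (by positivity)]
        congr 2; ring
      have h4 : eval x g ^ (N + K - ω.length) * eval x g ^ ω.length = eval x g ^ N * eval x g ^ K := by
        rw [← pow_add, ← pow_add, Nat.sub_add_cancel ((hK ω hω).trans (Nat.le_add_left _ _))]
      rw [h3, conjPow]
      linear_combination c ω * eval x (wordPoly g ((τ : ℂ) + N) ω) *
        (starRingEnd ℂ) (eval x g) ^ ω.length *
        (((‖eval x g‖ ^ 2) ^ (τ - ω.length) : ℝ) : ℂ) * h4
  · intro ω hω
    refine Integrable.const_mul ?_ _
    have := (contDiff_conjPow g N τ ω.length (by linarith [hl ω hω])).continuous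
    exact (((continuous_eval' _).mul this).mul hφ.smooth.continuous).integrable_of_hasCompactSupport
      hφ.compact.mul_left

/-! ### Null sets and Laplace transforms -/

/-- The zero set of a nonzero polynomial is Lebesgue-null. -/
theorem ae_eval_ne_zero {n : ℕ} (g : MvPolynomial (Fin n) ℂ) (hg : g ≠ 0) :
    ∀ᵐ x : Fin n → ℂ, eval x g ≠ 0 := by
  obtain ⟨p, hp⟩ : ∃ p, eval p g ≠ 0 := by
    by_contra! h
    exact hg (MvPolynomial.funext fun x => by simpa using h x)
  have hmeas : MeasurableSet {q : (Fin n → ℂ) × ℝ | eval (p + q.2 • q.1) g ≠ 0} := by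
    have : Continuous fun q : (Fin n → ℂ) × ℝ => eval (p + q.2 • q.1) g :=
      (continuous_eval' g).comp (by fun_prop)
    exact (isOpen_ne.preimage this).measurableSet
  -- on each real line through `p` there are finitely many zeros; Fubini and scaling conclude
  have h1 : ∀ᵐ x : Fin n → ℂ, ∀ᵐ t : ℝ, eval (p + t • x) g ≠ 0 := by
    refine Filter.Eventually.of_forall fun x => ?_
    set q : Polynomial ℂ := aeval (fun i => Polynomial.C (p i) + Polynomial.C (x i) * Polynomial.X) g
      with hq
    have hev : ∀ t : ℂ, q.eval t = eval (p + t • x) g := by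
      intro t
      have : (Polynomial.evalRingHom t).comp (aeval (fun i => Polynomial.C (p i) +
          Polynomial.C (x i) * Polynomial.X) : MvPolynomial (Fin n) ℂ →ₐ[ℂ] _).toRingHom =
          eval (p + t • x) := by
        refine MvPolynomial.ringHom_ext (fun c => by simp) (fun i => ?_)
        change Polynomial.eval t (aeval _ (X i)) = eval _ (X i)
        rw [aeval_X, eval_X]
        simp [mul_comm t]
      exact congrArg (fun f : MvPolynomial (Fin n) ℂ →+* ℂ => f g) this
    have hq0 : q ≠ 0 := by
      intro h
      apply hp
      have := hev 0
      rw [h] at this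
      simpa using this.symm
    have hfin : {t : ℝ | eval (p + t • x) g = 0}.Finite := by
      refine Set.Finite.subset ((q.rootSet_finite ℂ).preimage Complex.ofReal_injective.injOn)
        fun t ht => ?_
      rw [Set.mem_preimage, Polynomial.mem_rootSet]
      refine ⟨hq0, ?_⟩
      have h2 := hev t
      have h3 : ((t : ℂ) • x) = t • x := by ext i; simp
      rw [h3, ht] at h2
      simpa [Polynomial.aeval_def] using h2
    rw [ae_iff]
    simpa using hfin.measure_zero volume
  rw [Measure.ae_ae_comm hmeas] at h1
  obtain ⟨t, ht, ht0⟩ := (h1.and (volume.ae_ne (0 : ℝ))).exists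
  rw [ae_iff] at ht ⊢
  have h4 : {a : Fin n → ℂ | ¬ eval (p + t • a) g ≠ 0} =
      (t • ·) ⁻¹' ((p + ·) ⁻¹' {a : Fin n → ℂ | ¬ eval a g ≠ 0}) := rfl
  rw [h4, Measure.addHaar_preimage_smul _ ht0, measure_preimage_add] at ht
  rcases mul_eq_zero.1 ht with h | h
  · exact absurd h (by simp [ht0])
  · exact h

/-- Laplace transforms are holomorphic in the half plane where they converge absolutely. -/
theorem differentiableOn_laplace {α : Type*} [MeasurableSpace α] {μ : Measure α} {X : α → ℝ}
    {ψ : α → ℂ} (hX : Measurable X) (hψ : AEStronglyMeasurable ψ μ) (t₀ : ℝ)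
    (hint : ∀ t > t₀, Integrable (fun x => Real.exp (t * X x) * ‖ψ x‖) μ) :
    DifferentiableOn ℂ (fun z : ℂ => ∫ x, Complex.exp (z * X x) * ψ x ∂μ) {z | t₀ < z.re} := by
  intro z hz
  have hz' : t₀ < z.re := hz
  set ε : ℝ := (z.re - t₀) / 4 with hε
  have hε0 : 0 < ε := by rw [hε]; linarith
  have hmeas : ∀ z : ℂ, AEStronglyMeasurable (fun x => Complex.exp (z * X x)) μ := fun z => by
    apply Measurable.aestronglyMeasurable
    fun_prop
  have hnorm : ∀ (z : ℂ) x, ‖Complex.exp (z * X x)‖ = Real.exp (z.re * X x) := fun z x => by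
    rw [Complex.norm_exp]; simp
  refine (hasDerivAt_integral_of_dominated_loc_of_deriv_le (𝕜 := ℂ)
    (F := fun z x => Complex.exp (z * X x) * ψ x)
    (F' := fun z x => Complex.exp (z * X x) * X x * ψ x)
    (bound := fun x => ε⁻¹ * (Real.exp ((z.re + 2 * ε) * X x) * ‖ψ x‖ +
      Real.exp ((z.re - 2 * ε) * X x) * ‖ψ x‖))
    (Metric.ball_mem_nhds z hε0) ?_ ?_ ?_ ?_ ?_ ?_).2.differentiableAt.differentiableWithinAt
  · exact Filter.Eventually.of_forall fun z => (hmeas z).mul hψ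
  · refine (hint z.re hz').mono' ((hmeas z).mul hψ) (Filter.Eventually.of_forall fun x => ?_)
    simp [hnorm]
  · exact ((hmeas z).mul (by
      apply Measurable.aestronglyMeasurable
      fun_prop)).mul hψ
  · refine Filter.Eventually.of_forall fun x w hw => ?_
    rw [norm_mul, norm_mul, hnorm, Complex.norm_real, Real.norm_eq_abs, ← add_mul, ← mul_assoc]
    refine mul_le_mul_of_nonneg_right ?_ (norm_nonneg _)
    have hw' : |w.re - z.re| < ε := by
      have := (Complex.abs_re_le_norm (w - z)).trans_lt (by simpa [dist_eq_norm] using hw)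
      simpa using this
    have h1 : |X x| ≤ ε⁻¹ * Real.exp (ε * |X x|) := by
      rw [inv_mul_eq_div, le_div_iff₀ hε0]
      have := Real.add_one_le_exp (ε * |X x|)
      linarith
    have h2 : Real.exp (w.re * X x) * Real.exp (ε * |X x|) ≤
        Real.exp ((z.re + 2 * ε) * X x) + Real.exp ((z.re - 2 * ε) * X x) := by
      rw [← Real.exp_add]
      have hb : (w.re - z.re) * X x ≤ ε * |X x| := by
        refine (le_abs_self _).trans ?_
        rw [abs_mul]
        exact mul_le_mul_of_nonneg_right hw'.le (abs_nonneg _)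
      rcases le_total 0 (X x) with h | h
      · rw [abs_of_nonneg h] at *
        refine le_add_of_le_of_nonneg (Real.exp_le_exp.2 ?_) (Real.exp_nonneg _)
        nlinarith
      · rw [abs_of_nonpos h] at *
        refine le_add_of_nonneg_of_le (Real.exp_nonneg _) (Real.exp_le_exp.2 ?_)
        nlinarith
    calc Real.exp (w.re * X x) * |X x| ≤ Real.exp (w.re * X x) * (ε⁻¹ * Real.exp (ε * |X x|)) :=
          mul_le_mul_of_nonneg_left h1 (Real.exp_nonneg _)
      _ = ε⁻¹ * (Real.exp (w.re * X x) * Real.exp (ε * |X x|)) := by ring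
      _ ≤ _ := mul_le_mul_of_nonneg_left h2 (by positivity)
  · exact ((hint _ (by rw [hε]; linarith)).add (hint _ (by rw [hε]; linarith))).const_mul _
  · refine Filter.Eventually.of_forall fun x w _ => ?_
    have h1 : HasDerivAt (fun w : ℂ => w * X x) (X x : ℂ) w := by
      simpa using (hasDerivAt_id w).mul_const (X x : ℂ)
    exact h1.cexp.mul_const _

/-! ### Analytic continuation in the exponent -/

theorem exists_bound_on_tsupport {n : ℕ} (g : MvPolynomial (Fin n) ℂ) {φ : (Fin n → ℂ) → ℂ}
    (hφ : HasCompactSupport φ) : ∃ M : ℝ, 1 ≤ M ∧ ∀ x, φ x ≠ 0 → ‖eval x g‖ ≤ M := by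
  obtain ⟨M, hM⟩ := (show IsCompact (tsupport φ) from hφ).exists_bound_of_continuousOn
    (continuous_eval' g).continuousOn
  exact ⟨max 1 M, le_max_left _ _, fun x hx =>
    (hM x (subset_tsupport φ hx)).trans (le_max_right _ _)⟩

/-- Analytic continuation of `bernstein_integral` to the half plane of convergence: both sides are
holomorphic for `Re τ > -ρ` and agree for large real `τ`. On the right the integrand is bounded on
compact sets, since `N ≥ 2ρ`. -/
theorem bernstein_continuation {n : ℕ} (g : MvPolynomial (Fin n) ℂ) (hg : g ≠ 0) (N K : ℕ)
    (Ω : Finset (List (Fin n ⊕ Fin n))) (c : List (Fin n ⊕ Fin n) → Polynomial ℂ)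
    (b : Polynomial ℂ) (hK : ∀ ω ∈ Ω, ω.length ≤ K)
    (hrel : ∀ τ : ℂ, C (b.eval τ) * g ^ K = ∑ ω ∈ Ω, C ((c ω).eval τ) * wordPoly g (τ + N) ω *
      g ^ (N + K - ω.length)) (φ : (Fin n → ℂ) → ℂ) (hφ : IsTest φ) (ρ : ℝ) (hρ : 0 < ρ)
    (hN : 2 * ρ ≤ N) (hint : Integrable fun x => ‖eval x g‖ ^ (-2 * ρ) * ‖φ x‖)
    (τ : ℝ) (hτ : -ρ < τ) :
    b.eval (τ : ℂ) * ∫ x, (((‖eval x g‖ ^ 2) ^ τ : ℝ) : ℂ) * φ x =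
      ∑ ω ∈ Ω, (c ω).eval (τ : ℂ) *
        ∫ x, eval x g ^ N * (((‖eval x g‖ ^ 2) ^ τ : ℝ) : ℂ) * adjw ω φ x := by
  have hnull := ae_eval_ne_zero g hg
  set X : (Fin n → ℂ) → ℝ := fun x => Real.log (‖eval x g‖ ^ 2) with hXdef
  have hX : Measurable X := by
    have := (continuous_eval' g).measurable
    exact Real.measurable_log.comp (this.norm.pow_const 2)
  have hexp : ∀ (t : ℝ) x, eval x g ≠ 0 → Real.exp (t * X x) = ‖eval x g‖ ^ (2 * t) := by
    intro t x hx
    have h0 := norm_pos_iff.2 hx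
    rw [Real.rpow_def_of_pos h0, hXdef]
    simp only [Real.log_pow]
    congr 1; push_cast; ring
  have hcexp : ∀ (t : ℝ) x, eval x g ≠ 0 →
      Complex.exp ((t : ℂ) * X x) = (((‖eval x g‖ ^ 2) ^ t : ℝ) : ℂ) := by
    intro t x hx
    have h0 : 0 < ‖eval x g‖ ^ 2 := by have := norm_pos_iff.2 hx; positivity
    rw [Real.rpow_def_of_pos h0, hXdef, mul_comm (t : ℂ)]
    push_cast; rfl
  have hmeasE : ∀ t : ℝ, Measurable (fun x => Real.exp (t * X x)) := fun t => by fun_prop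
  -- the two kinds of integrals are holomorphic in the half plane
  have d1 : DifferentiableOn ℂ (fun z : ℂ => ∫ x, Complex.exp (z * X x) * φ x)
      {z | -ρ < z.re} := by
    refine differentiableOn_laplace hX hφ.smooth.continuous.aestronglyMeasurable (-ρ) fun t ht => ?_
    obtain ⟨M, hM1, hM⟩ := exists_bound_on_tsupport g hφ.compact
    refine (hint.const_mul (M ^ (2 * (t + ρ)))).mono' ?_ ?_
    · exact ((hmeasE t).mul hφ.smooth.continuous.measurable.norm).aestronglyMeasurable
    · filter_upwards [hnull] with x hx
      rw [hexp t x hx, Real.norm_of_nonneg (by positivity)]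
      rcases eq_or_ne (φ x) 0 with h0 | h0
      · simp [h0]
      · have hpos := norm_pos_iff.2 hx
        rw [← mul_assoc]
        refine mul_le_mul_of_nonneg_right ?_ (norm_nonneg _)
        rw [show 2 * t = 2 * (t + ρ) + (-2 * ρ) by ring, Real.rpow_add hpos]
        refine mul_le_mul_of_nonneg_right ?_ (by positivity)
        exact Real.rpow_le_rpow hpos.le (hM x h0) (by linarith)
  have d2 : ∀ ω, DifferentiableOn ℂ
      (fun z : ℂ => ∫ x, Complex.exp (z * X x) * (eval x g ^ N * adjw ω φ x)) {z | -ρ < z.re} := by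
    intro ω
    have hω := hφ.adjw ω
    have hc : Continuous fun x => eval x g ^ N * adjw ω φ x :=
      ((continuous_eval' g).pow N).mul hω.smooth.continuous
    refine differentiableOn_laplace hX hc.aestronglyMeasurable (-ρ) fun t ht => ?_
    obtain ⟨M, hM1, hM⟩ := exists_bound_on_tsupport g hω.compact
    have hi : Integrable (adjw ω φ) :=
      hω.smooth.continuous.integrable_of_hasCompactSupport hω.compact
    refine (hi.norm.const_mul (M ^ (N + 2 * t))).mono' ?_ ?_
    · exact ((hmeasE t).mul hc.measurable.norm).aestronglyMeasurable
    · filter_upwards [hnull] with x hx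
      rw [hexp t x hx, Real.norm_of_nonneg (by positivity), norm_mul, norm_pow]
      rcases eq_or_ne (adjw ω φ x) 0 with h0 | h0
      · simp [h0]
      · have hpos := norm_pos_iff.2 hx
        rw [← mul_assoc]
        refine mul_le_mul_of_nonneg_right ?_ (norm_nonneg _)
        rw [← Real.rpow_natCast, ← Real.rpow_add hpos, add_comm]
        exact Real.rpow_le_rpow hpos.le (hM x h0) (by linarith)
  have hopen : IsOpen {z : ℂ | -ρ < z.re} := isOpen_lt continuous_const Complex.continuous_re
  have D1 : AnalyticOnNhd ℂ (fun z : ℂ => b.eval z * ∫ x, Complex.exp (z * X x) * φ x)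
      {z | -ρ < z.re} :=
    (b.differentiable.differentiableOn.mul d1).analyticOnNhd hopen
  have D2 : AnalyticOnNhd ℂ (fun z : ℂ => ∑ ω ∈ Ω, (c ω).eval z *
      ∫ x, Complex.exp (z * X x) * (eval x g ^ N * adjw ω φ x)) {z | -ρ < z.re} :=
    (DifferentiableOn.fun_sum fun ω _ =>
      ((c ω).differentiable.differentiableOn.mul (d2 ω))).analyticOnNhd hopen
  have e1 : ∀ t : ℝ, ∫ x, Complex.exp ((t : ℂ) * X x) * φ x =
      ∫ x, (((‖eval x g‖ ^ 2) ^ t : ℝ) : ℂ) * φ x := fun t => by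
    refine integral_congr_ae ?_
    filter_upwards [hnull] with x hx
    rw [hcexp t x hx]
  have e2 : ∀ (t : ℝ) ω, ∫ x, Complex.exp ((t : ℂ) * X x) * (eval x g ^ N * adjw ω φ x) =
      ∫ x, eval x g ^ N * (((‖eval x g‖ ^ 2) ^ t : ℝ) : ℂ) * adjw ω φ x := fun t ω => by
    refine integral_congr_ae ?_
    filter_upwards [hnull] with x hx
    rw [hcexp t x hx]; ring
  have hreal : ∀ t : ℝ, (K : ℝ) + 1 ≤ t →
      b.eval (t : ℂ) * ∫ x, Complex.exp ((t : ℂ) * X x) * φ x = ∑ ω ∈ Ω, (c ω).eval (t : ℂ) *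
      ∫ x, Complex.exp ((t : ℂ) * X x) * (eval x g ^ N * adjw ω φ x) := fun t ht => by
    rw [e1, Finset.sum_congr rfl fun ω _ => by rw [e2]]
    exact bernstein_integral g N K t Ω _ _ hK ht (hrel t) φ hφ
  have hconv : IsPreconnected {z : ℂ | -ρ < z.re} :=
    (convex_halfSpace_re_gt (-ρ)).isPreconnected
  have hK0 := Nat.cast_nonneg (α := ℝ) K
  have h0 : (((K : ℝ) + 2 : ℝ) : ℂ) ∈ {z : ℂ | -ρ < z.re} := by
    change -ρ < _
    rw [Complex.ofReal_re]; linarith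
  -- the two sides agree on a real interval accumulating at `K + 2`
  have hfreq : ∃ᶠ z in nhdsWithin (((K : ℝ) + 2 : ℝ) : ℂ) {(((K : ℝ) + 2 : ℝ) : ℂ)}ᶜ,
      b.eval z * ∫ x, Complex.exp (z * X x) * φ x = ∑ ω ∈ Ω, (c ω).eval z *
      ∫ x, Complex.exp (z * X x) * (eval x g ^ N * adjw ω φ x) := by
    have ht : Filter.Tendsto (fun t : ℝ => (t : ℂ)) (nhdsWithin ((K : ℝ) + 2) {((K : ℝ) + 2)}ᶜ)
        (nhdsWithin (((K : ℝ) + 2 : ℝ) : ℂ) {(((K : ℝ) + 2 : ℝ) : ℂ)}ᶜ) := by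
      refine tendsto_nhdsWithin_iff.2 ⟨Complex.continuous_ofReal.continuousAt.tendsto.mono_left
        nhdsWithin_le_nhds, ?_⟩
      filter_upwards [self_mem_nhdsWithin] with t ht h
      exact ht (Complex.ofReal_injective h)
    refine ht.frequently (Filter.Eventually.frequently ?_)
    filter_upwards [nhdsWithin_le_nhds (lt_mem_nhds (show (K : ℝ) + 1 < K + 2 by linarith))]
      with t ht
    exact hreal t ht.le
  have := D1.eqOn_of_preconnected_of_frequently_eq D2 hconv h0 hfreq
    (show (τ : ℂ) ∈ {z : ℂ | -ρ < z.re} by simpa using hτ)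
  simp only [e1, e2] at this
  exact this

/-- The norm estimate extracted from the continued relation. -/
theorem bernstein_bound {n : ℕ} (g : MvPolynomial (Fin n) ℂ) (hg : g ≠ 0) (N K : ℕ)
    (Ω : Finset (List (Fin n ⊕ Fin n))) (c : List (Fin n ⊕ Fin n) → Polynomial ℂ)
    (b : Polynomial ℂ) (hK : ∀ ω ∈ Ω, ω.length ≤ K)
    (hrel : ∀ τ : ℂ, C (b.eval τ) * g ^ K = ∑ ω ∈ Ω, C ((c ω).eval τ) * wordPoly g (τ + N) ω *
      g ^ (N + K - ω.length)) (φ : (Fin n → ℂ) → ℝ) (hφ : IsTest fun x => (φ x : ℂ))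
    (ρ : ℝ) (hρ : 0 < ρ)
    (hN : 2 * ρ ≤ N) (hint : Integrable fun x => ‖eval x g‖ ^ (-2 * ρ) * |φ x|)
    (τ : ℝ) (hτ : -ρ < τ) :
    ‖b.eval (τ : ℂ)‖ * ∫ x, ‖eval x g‖ ^ (2 * τ) * φ x ≤
      ∑ ω ∈ Ω, ‖(c ω).eval (τ : ℂ)‖ *
        ∫ x, ‖eval x g‖ ^ N * ‖eval x g‖ ^ (2 * τ) * ‖adjw ω (fun x => (φ x : ℂ)) x‖ := by
  have hsq : ∀ x : Fin n → ℂ, (‖eval x g‖ ^ 2) ^ τ = ‖eval x g‖ ^ (2 * τ) := fun x => by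
    rw [Real.rpow_mul (norm_nonneg _)]; norm_cast
  have h1 := bernstein_continuation g hg N K Ω c b hK hrel _ hφ ρ hρ hN
    (by simpa only [Complex.norm_real, Real.norm_eq_abs] using hint) τ hτ
  have h2 : ∫ x, (((‖eval x g‖ ^ 2) ^ τ : ℝ) : ℂ) * (φ x : ℂ) =
      ((∫ x, ‖eval x g‖ ^ (2 * τ) * φ x : ℝ) : ℂ) := by
    rw [← integral_complex_ofReal]
    simp_rw [hsq]; push_cast; rfl
  rw [h2] at h1
  calc _ ≤ ‖b.eval (τ : ℂ) * ((∫ x, ‖eval x g‖ ^ (2 * τ) * φ x : ℝ) : ℂ)‖ := by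
        rw [norm_mul, Complex.norm_real]
        exact mul_le_mul_of_nonneg_left (le_abs_self _) (norm_nonneg _)
    _ ≤ _ := by
        rw [h1]
        refine (norm_sum_le _ _).trans (Finset.sum_le_sum fun ω _ => ?_)
        rw [norm_mul]
        refine mul_le_mul_of_nonneg_left ?_ (norm_nonneg _)
        refine (norm_integral_le_integral_norm _).trans (le_of_eq ?_)
        refine integral_congr_ae (Filter.Eventually.of_forall fun x => ?_)
        simp only [norm_mul, norm_pow, Complex.norm_real, hsq]
        rw [Real.norm_of_nonneg (by positivity)]

/-! ### Bernstein–Sato relations in families -/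

theorem continuous_eval_map {n m : ℕ} (G : MvPolynomial (Fin n) (MvPolynomial (Fin m) ℂ)) :
    Continuous fun p : (Fin m → ℂ) × (Fin n → ℂ) => eval p.2 (map (eval p.1) G) := by
  induction G using MvPolynomial.induction_on with
  | C c =>
    simp only [map_C, eval_C]
    exact (continuous_eval' c).comp continuous_fst
  | add p q hp hq =>
    simp only [map_add]
    exact hp.add hq
  | mul_X p j hp =>
    simp only [map_mul, map_X, eval_X]
    exact hp.mul ((continuous_apply j).comp continuous_snd)

theorem continuous_eval_map_poly {m : ℕ} (c : Polynomial (MvPolynomial (Fin m) ℂ)) (z : ℂ) :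
    Continuous fun y : Fin m → ℂ => (c.map (eval y)).eval z := by
  simp_rw [Polynomial.eval_map, Polynomial.eval₂_eq_sum_range]
  exact continuous_finsetSum _ fun i _ => (continuous_eval' _).mul continuous_const

/-- A weak Bernstein–Sato relation with coefficients in a domain `R`, lifted along a surjection
`S → R`: the relation holds after every specialization `R → ℂ`. -/
theorem exists_bernstein_lift {n : ℕ} {S R : Type*} [CommRing S] [CommRing R] [IsDomain R]
    [CharZero R] (q : S →+* R) (hq : Function.Surjective q) (G : MvPolynomial (Fin n) S)
    (hG : map q G ≠ 0) (N : ℕ) :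
    ∃ (Ω : Finset (List (Fin n ⊕ Fin n))) (c : List (Fin n ⊕ Fin n) → Polynomial S) (K : ℕ)
      (b : Polynomial S) (i : ℕ), q (b.coeff i) ≠ 0 ∧
      (∀ ω ∈ Ω, ω.length ≤ K) ∧ ∀ (χ : R →+* ℂ) (ε : S →+* ℂ), χ.comp q = ε → ∀ τ : ℂ,
        C ((b.map ε).eval τ) * (map ε G) ^ K =
          ∑ ω ∈ Ω, C (((c ω).map ε).eval τ) * wordPoly (map ε G) (τ + N) ω *
            (map ε G) ^ (N + K - ω.length) := by
  have hinj : Function.Injective (Polynomial.C : R →+* Polynomial R) := Polynomial.C_injective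
  obtain ⟨j, Ω, c, K, b, hb, hK, hrel⟩ := exists_bernstein
    (map (Polynomial.C : R →+* Polynomial R) (map q G))
    ((map_ne_zero_iff _ (map_injective (Polynomial.C : R →+* Polynomial R) hinj)).2 hG)
    Polynomial.X N
  have hsurj := Polynomial.map_surjective q hq
  -- the relation is shifted by `N j`, so that the variable becomes the exponent itself
  obtain ⟨sh, hsh⟩ : ∃ sh : Polynomial R, sh = Polynomial.X - Polynomial.C ((N * j : ℕ) : R) :=
    ⟨_, rfl⟩
  have hb' : b.comp sh ≠ 0 := by
    intro h
    apply hb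
    have := congrArg (fun p => p.comp (Polynomial.X + Polynomial.C ((N * j : ℕ) : R))) h
    simpa [hsh, Polynomial.comp_assoc] using this
  choose lift hlift using hsurj
  obtain ⟨i, hi⟩ : ∃ i, (b.comp sh).coeff i ≠ 0 := by
    by_contra! h
    exact hb' (Polynomial.ext (by simpa using h))
  refine ⟨Ω, fun ω => lift ((c ω).comp sh), K, lift (b.comp sh), i, ?_, hK,
    fun χ ε hχ τ => ?_⟩
  · rwa [← Polynomial.coeff_map, hlift]
  · obtain ⟨Θ, hΘ⟩ : ∃ Θ : Polynomial R →+* ℂ,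
        Θ = Polynomial.eval₂RingHom χ (τ - (N * j : ℕ)) := ⟨_, rfl⟩
    have h1 : ∀ p : Polynomial R, ((lift (p.comp sh)).map ε).eval τ = Θ p := by
      intro p
      rw [← hχ, ← Polynomial.map_map, hlift, Polynomial.eval_map, hΘ, hsh,
        Polynomial.coe_eval₂RingHom, Polynomial.eval₂_comp]
      simp
    have h2 := congrArg (map Θ) hrel
    have h5 : (Θ.comp Polynomial.C).comp q = ε := by
      rw [← hχ]; ext x; simp [hΘ]
    have h3 : map Θ (map (Polynomial.C : R →+* Polynomial R) (map q G)) = map ε G := by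
      rw [map_map, map_map, ← h5, RingHom.comp_assoc]
    simp only [map_mul, map_pow, map_sum, map_C, map_wordPoly, h3, map_add, map_natCast] at h2
    have h4 : Θ Polynomial.X + ((N * (j + 1) : ℕ) : ℂ) = τ + N := by
      simp only [hΘ, Polynomial.coe_eval₂RingHom, Polynomial.eval₂_X]; push_cast; ring
    rw [h4] at h2
    simp only [h1]
    exact h2

/-- A weak Bernstein–Sato relation for a family of polynomials over an irreducible variety: all
data depend polynomially on the parameter `y`, and the polynomial `b` does not vanish at the
generic point. -/
theorem exists_bernstein_family {n m : ℕ} (I : Ideal (MvPolynomial (Fin m) ℂ)) (hI : I.IsPrime)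
    (G : MvPolynomial (Fin n) (MvPolynomial (Fin m) ℂ))
    (hG : map (Ideal.Quotient.mk I) G ≠ 0) (N : ℕ) :
    ∃ (Ω : Finset (List (Fin n ⊕ Fin n)))
      (c : List (Fin n ⊕ Fin n) → Polynomial (MvPolynomial (Fin m) ℂ)) (K : ℕ)
      (b : Polynomial (MvPolynomial (Fin m) ℂ)) (i : ℕ), b.coeff i ∉ I ∧
      (∀ ω ∈ Ω, ω.length ≤ K) ∧ ∀ y : Fin m → ℂ, (∀ p ∈ I, eval y p = 0) → ∀ τ : ℂ,
        C ((b.map (eval y)).eval τ) * (map (eval y) G) ^ K =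
          ∑ ω ∈ Ω, C (((c ω).map (eval y)).eval τ) * wordPoly (map (eval y) G) (τ + N) ω *
            (map (eval y) G) ^ (N + K - ω.length) := by
  have : IsDomain (MvPolynomial (Fin m) ℂ ⧸ I) := Ideal.Quotient.isDomain I
  have : CharZero (MvPolynomial (Fin m) ℂ ⧸ I) :=
    charZero_of_injective_algebraMap (algebraMap ℂ (MvPolynomial (Fin m) ℂ ⧸ I)).injective
  obtain ⟨Ω, c, K, b, i, hb, hK, hrel⟩ := exists_bernstein_lift (Ideal.Quotient.mk I)
    Ideal.Quotient.mk_surjective G hG N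
  exact ⟨Ω, c, K, b, i, fun h => hb (Ideal.Quotient.eq_zero_iff_mem.2 h), hK, fun y hy =>
    hrel (Ideal.Quotient.lift I (eval y) hy) (eval y) (Ideal.Quotient.lift_comp_mk _ _ _)⟩

/-! ### Semicontinuity of integrability exponents -/

theorem rpow_mul_rpow_le {t M a : ℝ} {N : ℕ} (ht : 0 ≤ t) (hM : 1 ≤ M) (htM : t ≤ M)
    (ha : a < 0) (hN : 0 ≤ N + a) : t ^ N * t ^ a ≤ M ^ (N + a) := by
  rcases ht.eq_or_lt with rfl | h
  · rw [Real.zero_rpow ha.ne, mul_zero]; positivity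
  · rw [← Real.rpow_natCast, ← Real.rpow_add h]
    exact Real.rpow_le_rpow ht htM hN

theorem rpow_le_mul_rpow {t M a b : ℝ} (ht : 0 ≤ t) (htM : t ≤ M)
    (ha : a < 0) (hab : b ≤ a) : t ^ a ≤ M ^ (a - b) * t ^ b := by
  rcases ht.eq_or_lt with rfl | h
  · rw [Real.zero_rpow ha.ne]
    exact mul_nonneg (Real.rpow_nonneg htM _) (Real.rpow_nonneg le_rfl _)
  · calc t ^ a = t ^ (a - b) * t ^ b := by rw [← Real.rpow_add h]; ring_nf
      _ ≤ _ := mul_le_mul_of_nonneg_right (Real.rpow_le_rpow ht htM (by linarith))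
        (Real.rpow_nonneg ht _)

theorem measurable_rpow_eval {n : ℕ} (g : MvPolynomial (Fin n) ℂ) (a : ℝ) :
    Measurable fun x : Fin n → ℂ => ‖eval x g‖ ^ a :=
  (continuous_eval' g).norm.measurable.pow_const a

/-- A uniform bound along a family: the integrals of negative powers stay bounded as long as the
Bernstein polynomial does not vanish. -/
theorem bernstein_uniform {n : ℕ} (g : MvPolynomial (Fin n) ℂ) (hg : g ≠ 0) (N K : ℕ)
    (Ω : Finset (List (Fin n ⊕ Fin n))) (c : List (Fin n ⊕ Fin n) → Polynomial ℂ)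
    (b : Polynomial ℂ) (hK : ∀ ω ∈ Ω, ω.length ≤ K)
    (hrel : ∀ τ : ℂ, C (b.eval τ) * g ^ K = ∑ ω ∈ Ω, C ((c ω).eval τ) * wordPoly g (τ + N) ω *
      g ^ (N + K - ω.length)) (φ : ContDiffBump (0 : Fin n → ℂ)) (hφ : φ.rOut ≤ 1)
    (ρ : ℝ) (hρ : 0 < ρ) (hN : 2 * ρ ≤ N) (M : ℝ) (hM : 1 ≤ M)
    (hgM : ∀ x ∈ Metric.closedBall (0 : Fin n → ℂ) 1, ‖eval x g‖ ≤ M)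
    (hint : IntegrableOn (fun x => ‖eval x g‖ ^ (-2 * ρ)) (Metric.ball 0 1))
    (τ : ℝ) (hτ : -ρ < τ) (hτ0 : τ < 0) :
    ENNReal.ofReal ‖b.eval (τ : ℂ)‖ *
      ∫⁻ x in Metric.ball 0 φ.rIn, ENNReal.ofReal (‖eval x g‖ ^ (2 * τ)) ≤
      ENNReal.ofReal (∑ ω ∈ Ω, ‖(c ω).eval (τ : ℂ)‖ *
        (M ^ (N + 2 * τ) * ∫ x, ‖adjw ω (fun x => (φ x : ℂ)) x‖)) := by
  have hφt : IsTest fun x => (φ x : ℂ) :=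
    ⟨Complex.ofRealCLM.contDiff.comp φ.contDiff,
      φ.hasCompactSupport.comp_left (g := fun r : ℝ => (r : ℂ)) (by simp)⟩
  have hout : ∀ x, x ∉ Metric.ball (0 : Fin n → ℂ) 1 → φ x = 0 := fun x hx => by
    have : x ∉ Function.support φ := by
      rw [φ.support_eq]; exact fun h => hx (Metric.ball_subset_ball hφ h)
    simpa using this
  have hint2 : Integrable fun x => ‖eval x g‖ ^ (-2 * ρ) * |φ x| := by
    have h1 : IntegrableOn (fun x => ‖eval x g‖ ^ (-2 * ρ) * |φ x|) (Metric.ball 0 1) := by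
      refine Integrable.mono' hint
        ((measurable_rpow_eval g _).mul φ.continuous.abs.measurable).aestronglyMeasurable
        (Filter.Eventually.of_forall fun x => ?_)
      have h0 := Real.rpow_nonneg (norm_nonneg (eval x g)) (-2 * ρ)
      rw [norm_mul, Real.norm_of_nonneg h0, Real.norm_eq_abs, abs_abs, abs_of_nonneg φ.nonneg]
      exact mul_le_of_le_one_right h0 φ.le_one
    refine (integrableOn_iff_integrable_of_support_subset fun x hx => ?_).1 h1
    by_contra hc
    exact hx (by simp [hout x hc])
  have hint3 : Integrable fun x => ‖eval x g‖ ^ (2 * τ) * φ x := by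
    refine Integrable.mono' (hint2.const_mul (M ^ (2 * τ - -2 * ρ)))
      ((measurable_rpow_eval g _).mul φ.continuous.measurable).aestronglyMeasurable
      (Filter.Eventually.of_forall fun x => ?_)
    by_cases hx : x ∈ Metric.ball (0 : Fin n → ℂ) 1
    · rw [norm_mul, Real.norm_of_nonneg (Real.rpow_nonneg (norm_nonneg _) _), Real.norm_eq_abs,
        ← mul_assoc]
      exact mul_le_mul_of_nonneg_right (rpow_le_mul_rpow (norm_nonneg _)
        (hgM x (Metric.ball_subset_closedBall hx)) (by linarith) (by linarith)) (abs_nonneg _)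
    · simp [hout x hx]
  have key := bernstein_bound g hg N K Ω c b hK hrel φ hφt ρ hρ hN hint2 τ hτ
  have hlow : ∫⁻ x in Metric.ball 0 φ.rIn, ENNReal.ofReal (‖eval x g‖ ^ (2 * τ)) ≤
      ENNReal.ofReal (∫ x, ‖eval x g‖ ^ (2 * τ) * φ x) := by
    rw [ofReal_integral_eq_lintegral_ofReal hint3 (Filter.Eventually.of_forall fun x =>
      mul_nonneg (Real.rpow_nonneg (norm_nonneg _) _) φ.nonneg)]
    refine (setLIntegral_congr_fun measurableSet_ball fun x hx => ?_).trans_le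
      (setLIntegral_le_lintegral _ _)
    rw [φ.one_of_mem_closedBall (Metric.ball_subset_closedBall hx), mul_one]
  refine (mul_le_mul_right hlow _).trans ?_
  rw [← ENNReal.ofReal_mul (norm_nonneg _)]
  refine ENNReal.ofReal_le_ofReal (key.trans (Finset.sum_le_sum fun ω _ => ?_))
  refine mul_le_mul_of_nonneg_left ?_ (norm_nonneg _)
  have ht := hφt.adjw ω
  rw [← integral_const_mul]
  refine integral_mono_of_nonneg (Filter.Eventually.of_forall fun x => by positivity)
    ((ht.smooth.continuous.norm.integrable_of_hasCompactSupport ht.compact.norm).const_mul _)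
    (Filter.Eventually.of_forall fun x => ?_)
  simp only
  by_cases hx : x ∈ Metric.closedBall (0 : Fin n → ℂ) 1
  · exact mul_le_mul_of_nonneg_right (rpow_mul_rpow_le (norm_nonneg _) hM (hgM x hx)
      (by linarith) (by linarith)) (norm_nonneg _)
  · have : adjw ω (fun x => (φ x : ℂ)) x = 0 := by
      by_contra hne
      have h1 := tsupport_adjw _ ω (subset_tsupport _ hne)
      refine hx (closure_minimal (fun z hz => ?_) Metric.isClosed_closedBall h1)
      by_contra hc
      exact hz (by simp [hout z fun h => hc (Metric.ball_subset_closedBall h)])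
    simp [this]

/-- Lower semicontinuity of integrability exponents in a family over an irreducible variety, away
from the zeros of the Bernstein polynomial of the family. By `bernstein_uniform` the integrals along
the sequence are bounded, and Fatou's lemma passes to the limit. -/
theorem integrableOn_of_tendsto {n m : ℕ} (I : Ideal (MvPolynomial (Fin m) ℂ)) (hI : I.IsPrime)
    (G : MvPolynomial (Fin n) (MvPolynomial (Fin m) ℂ))
    (hG : map (Ideal.Quotient.mk I) G ≠ 0) (N : ℕ) :
    ∃ (b : Polynomial (MvPolynomial (Fin m) ℂ)) (i : ℕ), b.coeff i ∉ I ∧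
      ∀ (y : ℕ → Fin m → ℂ) (y₀ : Fin m → ℂ), Filter.Tendsto y Filter.atTop (nhds y₀) →
        (∀ k, ∀ p ∈ I, eval (y k) p = 0) → (∀ k, map (eval (y k)) G ≠ 0) →
        ∀ ρ : ℝ, 0 < ρ → 2 * ρ ≤ N →
        (∀ k, IntegrableOn (fun x => ‖eval x (map (eval (y k)) G)‖ ^ (-2 * ρ))
          (Metric.ball 0 1)) →
        ∀ τ : ℝ, -ρ < τ → τ < 0 → (b.map (eval y₀)).eval (τ : ℂ) ≠ 0 →
        IntegrableOn (fun x => ‖eval x (map (eval y₀) G)‖ ^ (2 * τ))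
          (Metric.ball 0 (1 / 2)) := by
  obtain ⟨Ω, c, K, b, i, hb, hK, hrel⟩ := exists_bernstein_family I hI G hG N
  refine ⟨b, i, hb, fun y y₀ hy hyI hyG ρ hρ hN hint τ hτ hτ0 hbτ => ?_⟩
  obtain ⟨φ, hφ1, hφ2⟩ : ∃ φ : ContDiffBump (0 : Fin n → ℂ), φ.rIn = 1 / 2 ∧ φ.rOut = 1 :=
    ⟨⟨1 / 2, 1, by norm_num, by norm_num⟩, rfl, rfl⟩
  -- a common bound for the polynomials of the sequence on the unit ball
  obtain ⟨M, hM1, hM⟩ : ∃ M : ℝ, 1 ≤ M ∧ ∀ k, ∀ x ∈ Metric.closedBall (0 : Fin n → ℂ) 1,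
      ‖eval x (map (eval (y k)) G)‖ ≤ M := by
    obtain ⟨M, hM⟩ := (hy.isCompact_insert_range.prod
      (isCompact_closedBall (0 : Fin n → ℂ) 1)).exists_bound_of_continuousOn
      (continuous_eval_map G).continuousOn
    exact ⟨max 1 M, le_max_left _ _, fun k x hx => (hM (y k, x)
      ⟨Set.mem_insert_of_mem _ ⟨k, rfl⟩, hx⟩).trans (le_max_right _ _)⟩
  have hunif := fun k => bernstein_uniform _ (hyG k) N K Ω (fun ω => (c ω).map (eval (y k)))
    (b.map (eval (y k))) hK (hrel (y k) (hyI k)) φ hφ2.le ρ hρ hN M hM1 (hM k) (hint k) τ hτ hτ0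
  set L : ℕ → ENNReal := fun k => ∫⁻ x in Metric.ball 0 φ.rIn,
    ENNReal.ofReal (‖eval x (map (eval (y k)) G)‖ ^ (2 * τ)) with hL
  have hβ : Filter.Tendsto (fun k => ENNReal.ofReal ‖(b.map (eval (y k))).eval (τ : ℂ)‖)
      Filter.atTop (nhds (ENNReal.ofReal ‖(b.map (eval y₀)).eval (τ : ℂ)‖)) :=
    (ENNReal.continuous_ofReal.tendsto _).comp
      (((continuous_eval_map_poly b τ).norm.tendsto y₀).comp hy)
  obtain ⟨D, hD⟩ : ∃ D : ℝ, Filter.Tendsto (fun k => ∑ ω ∈ Ω,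
      ‖((c ω).map (eval (y k))).eval (τ : ℂ)‖ *
        (M ^ (N + 2 * τ) * ∫ x, ‖adjw ω (fun x => (φ x : ℂ)) x‖)) Filter.atTop (nhds D) :=
    ⟨_, tendsto_finsetSum _ fun ω _ =>
      (((continuous_eval_map_poly (c ω) τ).norm.tendsto y₀).comp hy).mul_const _⟩
  obtain ⟨β, hβ0, hβ1⟩ : ∃ β : ENNReal, β ≠ 0 ∧
      β < ENNReal.ofReal ‖(b.map (eval y₀)).eval (τ : ℂ)‖ := by
    obtain ⟨β, h1, h2⟩ := exists_between (ENNReal.ofReal_pos.2 (norm_pos_iff.2 hbτ))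
    exact ⟨β, h1.ne', h2⟩
  have hbound : ∀ᶠ k in Filter.atTop, L k ≤ ENNReal.ofReal (D + 1) / β := by
    filter_upwards [hβ.eventually (lt_mem_nhds hβ1), hD.eventually (gt_mem_nhds (lt_add_one D))]
      with k h1 h2
    rw [ENNReal.le_div_iff_mul_le (Or.inl hβ0) (Or.inl (hβ1.trans_le le_top).ne), mul_comm]
    exact (mul_le_mul_left h1.le _).trans ((hunif k).trans (ENNReal.ofReal_le_ofReal h2.le))
  have hmeas : ∀ k, Measurable fun x : Fin n → ℂ =>
      ENNReal.ofReal (‖eval x (map (eval (y k)) G)‖ ^ (2 * τ)) := fun k =>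
    (measurable_rpow_eval _ _).ennreal_ofReal
  have hfatou : ∫⁻ x in Metric.ball 0 φ.rIn,
      ENNReal.ofReal (‖eval x (map (eval y₀) G)‖ ^ (2 * τ)) ≤
      Filter.liminf L Filter.atTop := by
    refine (lintegral_mono fun x => ?_).trans (lintegral_liminf_le hmeas)
    by_cases hx : eval x (map (eval y₀) G) = 0
    · -- at a zero of the limit polynomial the junk value `0 ^ (2 * τ) = 0` is harmless
      simp [hx, Real.zero_rpow (show 2 * τ ≠ 0 by linarith)]
    · have h1 : Filter.Tendsto (fun k => eval x (map (eval (y k)) G)) Filter.atTop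
          (nhds (eval x (map (eval y₀) G))) :=
        (((continuous_eval_map G).comp (Continuous.prodMk_left x)).tendsto y₀).comp hy
      have h2 := (ENNReal.continuous_ofReal.tendsto _).comp
        (h1.norm.rpow_const (p := 2 * τ) (Or.inl (norm_ne_zero_iff.2 hx)))
      exact h2.liminf_eq.ge
  have hfin : Filter.liminf L Filter.atTop < ⊤ := by
    refine (Filter.liminf_le_of_frequently_le' hbound.frequently).trans_lt ?_
    exact ENNReal.div_lt_top ENNReal.ofReal_ne_top hβ0
  refine ⟨(measurable_rpow_eval _ _).aestronglyMeasurable, ?_⟩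
  rw [hasFiniteIntegral_iff_ofReal (Filter.Eventually.of_forall fun x =>
    Real.rpow_nonneg (norm_nonneg _) _), ← hφ1]
  exact hfatou.trans_lt hfin

/-! ### Primitive elements and simple roots -/

/-- Clearing the denominators of a polynomial over a fraction field. -/
theorem exists_clear_denom {A : Type*} [CommRing A] [IsDomain A] (q : Polynomial (FractionRing A)) :
    ∃ (D : A) (Q : Polynomial A), D ≠ 0 ∧
      Q.map (algebraMap A (FractionRing A)) =
        Polynomial.C (algebraMap A (FractionRing A) D) * q := by
  obtain ⟨b, hb, h⟩ := IsLocalization.integerNormalization_spec (nonZeroDivisors A) q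
  refine ⟨b, _, nonZeroDivisors.ne_zero hb, h.trans ?_⟩
  rw [← Polynomial.smul_eq_C_mul, algebraMap_smul]

/-- Primitive element theorem for a finite extension of domains of characteristic zero, with
denominators cleared: `p` is the minimal polynomial of `θ`, its derivative is invertible modulo `p`
up to a nonzero factor from `A`, and the elements of `R` are polynomials in `θ` up to denominators. -/
theorem exists_primitive_domain {A R : Type*} [CommRing A] [IsDomain A] [IsIntegrallyClosed A]
    [CharZero A] [CommRing R] [IsDomain R] [Algebra A R] [FaithfulSMul A R] [Module.Finite A R] :
    ∃ (θ : R) (p : Polynomial A), Polynomial.aeval θ p = 0 ∧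
      (∀ q : Polynomial A, Polynomial.aeval θ q = 0 → p ∣ q) ∧
      (∃ D : A, D ≠ 0 ∧ ∃ u v, u * p + v * Polynomial.derivative p = Polynomial.C D) ∧
      ∀ x : R, ∃ D : A, D ≠ 0 ∧ ∃ q : Polynomial A,
        algebraMap A R D * x = Polynomial.aeval θ q := by
  let K := FractionRing A
  let L := FractionRing R
  let _ : Algebra K L := FractionRing.liftAlgebra A L
  have : IsScalarTower A K L := FractionRing.isScalarTower_liftAlgebra A L
  have : Algebra.IsAlgebraic A R := Algebra.IsIntegral.isAlgebraic
  have : FiniteDimensional K L :=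
    Module.Finite.of_isLocalization A R (nonZeroDivisors A)
  have hKinj : Function.Injective (algebraMap A K) := IsFractionRing.injective A K
  have hLinj : Function.Injective (algebraMap R L) := IsFractionRing.injective R L
  have : CharZero K := charZero_of_injective_algebraMap hKinj
  obtain ⟨α, hα⟩ := Field.exists_primitive_element K L
  -- a multiple of the primitive element lies in `R`
  obtain ⟨θ, D₀, hD₀, hθ⟩ : ∃ (θ : R) (D₀ : A), D₀ ≠ 0 ∧
      α * algebraMap K L (algebraMap A K D₀) = algebraMap R L θ := by
    obtain ⟨⟨θ, ⟨_, D, hD, rfl⟩⟩, h⟩ := IsLocalization.surj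
      (Algebra.algebraMapSubmonoid R (nonZeroDivisors A)) α
    refine ⟨θ, D, nonZeroDivisors.ne_zero hD, ?_⟩
    rw [← h, ← IsScalarTower.algebraMap_apply, ← IsScalarTower.algebraMap_apply]
  have hint : IsIntegral A θ := Algebra.IsIntegral.isIntegral θ
  have htop : IntermediateField.adjoin K {algebraMap R L θ} = ⊤ := by
    rw [eq_top_iff, ← hα, IntermediateField.adjoin_simple_le_iff]
    have h0 : algebraMap K L (algebraMap A K D₀) ≠ 0 := by simpa using hD₀
    rw [eq_div_of_mul_eq h0 hθ]
    exact div_mem (IntermediateField.mem_adjoin_simple_self K _)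
      (IntermediateField.algebraMap_mem _ _)
  have hdvd : ∀ q : Polynomial A, Polynomial.aeval θ q = 0 → minpoly A θ ∣ q := fun q hq =>
    minpoly.isIntegrallyClosed_dvd hint hq
  refine ⟨θ, minpoly A θ, minpoly.aeval A θ, hdvd, ?_, fun x => ?_⟩
  · have hmin : minpoly K (algebraMap R L θ) = (minpoly A θ).map (algebraMap A K) :=
      minpoly.isIntegrallyClosed_eq_field_fractions K L hint
    have hsep : (minpoly K (algebraMap R L θ)).Separable :=
      (minpoly.irreducible (Algebra.IsIntegral.isIntegral _)).separable
    obtain ⟨u, v, huv⟩ := hsep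
    rw [hmin] at huv
    obtain ⟨D₁, U, hD₁, (hU : U.map (algebraMap A K) = _)⟩ := exists_clear_denom u
    obtain ⟨D₂, V, hD₂, (hV : V.map (algebraMap A K) = _)⟩ := exists_clear_denom v
    refine ⟨D₁ * D₂, mul_ne_zero hD₁ hD₂, Polynomial.C D₂ * U, Polynomial.C D₁ * V, ?_⟩
    apply Polynomial.map_injective _ hKinj
    simp only [Polynomial.map_add, Polynomial.map_mul, Polynomial.map_C, map_mul,
      ← Polynomial.derivative_map]
    linear_combination (Polynomial.C (algebraMap A K D₁) * Polynomial.C (algebraMap A K D₂)) * huv +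
      (Polynomial.C (algebraMap A K D₂) * (minpoly A θ).map (algebraMap A K)) * hU +
      (Polynomial.C (algebraMap A K D₁) *
        Polynomial.derivative ((minpoly A θ).map (algebraMap A K))) * hV
  · have hx : algebraMap R L x ∈ (IntermediateField.adjoin K {algebraMap R L θ}).toSubalgebra := by
      rw [htop]; trivial
    rw [IntermediateField.adjoin_simple_toSubalgebra_of_isAlgebraic
      (Algebra.IsAlgebraic.isAlgebraic _), Algebra.adjoin_singleton_eq_range_aeval] at hx
    obtain ⟨q, hq⟩ := hx
    obtain ⟨D, Q, hD, hQ⟩ := exists_clear_denom q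
    refine ⟨D, hD, Q, hLinj ?_⟩
    rw [map_mul, ← Polynomial.aeval_algebraMap_apply, ← Polynomial.aeval_map_algebraMap K, hQ,
      map_mul, Polynomial.aeval_C, ← IsScalarTower.algebraMap_apply,
      ← IsScalarTower.algebraMap_apply]
    exact congrArg _ hq.symm

/-- The implicit function theorem for a simple root of a polynomial with polynomial
coefficients. -/
theorem exists_continuous_root {s : ℕ} (p : Polynomial (MvPolynomial (Fin s) ℂ)) (a₀ : Fin s → ℂ)
    (t₀ : ℂ) (h0 : (p.map (eval a₀)).eval t₀ = 0)
    (h1 : (p.derivative.map (eval a₀)).eval t₀ ≠ 0) :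
    ∃ ψ : (Fin s → ℂ) → ℂ, ∃ U ∈ nhds a₀, ContinuousOn ψ U ∧ ψ a₀ = t₀ ∧
      ∀ a ∈ U, (p.map (eval a)).eval (ψ a) = 0 := by
  have hcd : ContDiff ℂ 1 fun v : (Fin s → ℂ) × ℂ => (p.map (eval v.1)).eval v.2 := by
    simp_rw [Polynomial.eval_map, Polynomial.eval₂_eq_sum_range]
    refine ContDiff.sum fun i _ => ContDiff.mul ?_ (contDiff_snd.pow i)
    generalize p.coeff i = q
    refine ContDiff.comp (g := fun x => eval x q) ?_ contDiff_fst
    induction q using MvPolynomial.induction_on with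
    | C c => simpa using contDiff_const
    | add p q hp hq => simpa using hp.add hq
    | mul_X p j hp => simpa using hp.mul (contDiff_apply ℂ ℂ j)
  set F := fun v : (Fin s → ℂ) × ℂ => (p.map (eval v.1)).eval v.2 with hF
  have hat : ContDiffAt ℂ 1 F (a₀, t₀) := hcd.contDiffAt
  have hd : HasDerivAt (fun t => F (a₀, t)) ((p.derivative.map (eval a₀)).eval t₀) t₀ := by
    rw [← Polynomial.derivative_map]
    exact (p.map (eval a₀)).hasDerivAt t₀
  have hd' : HasFDerivAt (fun t => F (a₀, t))
      (fderiv ℂ F (a₀, t₀) ∘L ContinuousLinearMap.inr ℂ (Fin s → ℂ) ℂ) t₀ :=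
    ((hat.differentiableAt (by simp)).hasFDerivAt).comp t₀ (hasFDerivAt_prodMk_right a₀ t₀)
  have heq := hd'.unique hd.hasFDerivAt
  have hinv : (fderiv ℂ F (a₀, t₀) ∘L ContinuousLinearMap.inr ℂ (Fin s → ℂ) ℂ).IsInvertible := by
    rw [heq]
    refine ⟨ContinuousLinearEquiv.unitsEquivAut ℂ (Units.mk0 _ h1), ?_⟩
    ext; simp
  refine ⟨hat.implicitFunction one_ne_zero hinv, {a | ContinuousAt
    (hat.implicitFunction one_ne_zero hinv) a ∧ F (a, hat.implicitFunction one_ne_zero hinv a) =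
      F (a₀, t₀)}, ?_, fun a ha => ha.1.continuousWithinAt,
    hat.implicitFunction_apply_self one_ne_zero hinv, fun a ha => ha.2.trans h0⟩
  have hcont : ∀ᶠ a in nhds a₀, ContDiffAt ℂ 1 (hat.implicitFunction one_ne_zero hinv) a :=
    (hat.contDiffAt_implicitFunction one_ne_zero hinv).eventually (by simp)
  filter_upwards [hcont, hat.eventually_apply_implicitFunction one_ne_zero hinv] with a ha ha'
  exact ⟨ha.continuousAt, ha'⟩

/-! ### Local sections of Noether normalizations -/

/-- The value at `(a, t)` of a polynomial in one variable with polynomial coefficients. -/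
noncomputable def evalAt {s : ℕ} (a : Fin s → ℂ) (t : ℂ) :
    Polynomial (MvPolynomial (Fin s) ℂ) →+* ℂ := Polynomial.eval₂RingHom (eval a) t

theorem evalAt_apply {s : ℕ} (a : Fin s → ℂ) (t : ℂ) (Q : Polynomial (MvPolynomial (Fin s) ℂ)) :
    evalAt a t Q = (Q.map (eval a)).eval t := by
  rw [Polynomial.eval_map]; rfl

theorem evalAt_C {s : ℕ} (a : Fin s → ℂ) (t : ℂ) (D : MvPolynomial (Fin s) ℂ) :
    evalAt a t (Polynomial.C D) = eval a D := by
  simp [evalAt]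

/-- Around a generic point, an irreducible variety which is finite over an affine space of
dimension `s` (with coordinate ring `R`, presented by `q`) has a continuous section of the
projection `π`. -/
theorem exists_chart_of_finite {n s : ℕ} {R : Type*} [CommRing R] [IsDomain R]
    [Algebra (MvPolynomial (Fin s) ℂ) R] [FaithfulSMul (MvPolynomial (Fin s) ℂ) R]
    [Module.Finite (MvPolynomial (Fin s) ℂ) R] (q : MvPolynomial (Fin n) ℂ →+* R)
    (hq : Function.Surjective q)
    (hqC : ∀ c : ℂ, q (C c) = algebraMap (MvPolynomial (Fin s) ℂ) R (C c)) :
    ∃ h : MvPolynomial (Fin n) ℂ, q h ≠ 0 ∧ ∃ π : Fin s → MvPolynomial (Fin n) ℂ,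
      ∀ y₀ : Fin n → ℂ, (∀ p, q p = 0 → eval y₀ p = 0) → eval y₀ h ≠ 0 →
      ∃ η : (Fin s → ℂ) → (Fin n → ℂ), ∃ U ∈ nhds (fun i => eval y₀ (π i)), ContinuousOn η U ∧
        η (fun i => eval y₀ (π i)) = y₀ ∧
        ∀ a ∈ U, (∀ p, q p = 0 → eval (η a) p = 0) ∧ ∀ i, eval (η a) (π i) = a i := by
  obtain ⟨θ, p, hp, hdvd, ⟨D', hD', u, v, huv⟩, hx⟩ :=
    exists_primitive_domain (A := MvPolynomial (Fin s) ℂ) (R := R)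
  choose D hD Q hQ using fun j => hx (q (X j))
  choose π hπ using fun i => hq (algebraMap (MvPolynomial (Fin s) ℂ) R (X i))
  obtain ⟨Θ, hΘ⟩ := hq θ
  let lift : MvPolynomial (Fin s) ℂ →+* MvPolynomial (Fin n) ℂ := (bind₁ π).toRingHom
  have hlift : ∀ a, q (lift a) = algebraMap (MvPolynomial (Fin s) ℂ) R a := by
    have : q.comp lift = algebraMap (MvPolynomial (Fin s) ℂ) R := by
      apply MvPolynomial.ringHom_ext
      · intro c; simp [lift, hqC]
      · intro i; simp [lift, hπ]
    intro a; rw [← this]; rfl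
  have hliftEval : ∀ y a, eval y (lift a) = eval (fun i => eval y (π i)) a := by
    intro y a
    have : (eval y).comp lift = eval (fun i => eval y (π i)) := by
      apply MvPolynomial.ringHom_ext
      · intro c; simp [lift]
      · intro i; simp [lift]
    rw [← this]; rfl
  have hinj := FaithfulSMul.algebraMap_injective (MvPolynomial (Fin s) ℂ) R
  refine ⟨lift (D' * ∏ j, D j), ?_, π, fun y₀ hy₀ hne => ?_⟩
  · rw [hlift, map_ne_zero_iff _ hinj]
    exact mul_ne_zero hD' (Finset.prod_ne_zero_iff.2 fun j _ => hD j)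
  set a₀ : Fin s → ℂ := fun i => eval y₀ (π i) with ha₀
  set t₀ : ℂ := eval y₀ Θ with ht₀
  rw [hliftEval, map_mul, map_prod] at hne
  have hD'0 := left_ne_zero_of_mul hne
  have hD0 : ∀ j, eval a₀ (D j) ≠ 0 := fun j =>
    Finset.prod_ne_zero_iff.1 (right_ne_zero_of_mul hne) j (Finset.mem_univ j)
  -- relations in `R` specialize to relations at the point `y₀`
  have hspec : ∀ (P : Polynomial (MvPolynomial (Fin s) ℂ)) (w : MvPolynomial (Fin n) ℂ),
      q w = Polynomial.aeval θ P → evalAt a₀ t₀ P = eval y₀ w := by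
    intro P w hw
    have h1 : q (P.eval₂ lift Θ - w) = 0 := by
      rw [map_sub, hw, Polynomial.hom_eval₂, hΘ, Polynomial.aeval_def, sub_eq_zero]
      congr 1
      exact RingHom.ext fun a => hlift a
    have h2 := hy₀ _ h1
    rw [map_sub, sub_eq_zero, Polynomial.hom_eval₂] at h2
    rw [← h2, evalAt, Polynomial.coe_eval₂RingHom]
    congr 1
    exact RingHom.ext fun a => (hliftEval y₀ a).symm
  have hp0 : evalAt a₀ t₀ p = 0 := by simpa using hspec p 0 (by simp [hp])
  have hp1 : evalAt a₀ t₀ (Polynomial.derivative p) ≠ 0 := by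
    intro h
    have := congrArg (evalAt a₀ t₀) huv
    rw [map_add, map_mul, map_mul, hp0, h, mul_zero, mul_zero, add_zero, evalAt_C] at this
    exact hD'0 this.symm
  obtain ⟨ψ, U, hU, hψc, hψ0, hψ⟩ := exists_continuous_root p a₀ t₀
    (by rw [← evalAt_apply]; exact hp0) (by rw [← evalAt_apply]; exact hp1)
  -- relations in `R` hold along the graph of the root
  have hrel : ∀ a ∈ U, ∀ P, Polynomial.aeval θ P = 0 → evalAt a (ψ a) P = 0 := by
    intro a ha P hP
    obtain ⟨W, rfl⟩ := hdvd P hP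
    rw [map_mul, evalAt_apply, hψ a ha, zero_mul]
  -- polynomial functions on the variety, with denominators cleared
  have hclear : ∀ w : MvPolynomial (Fin n) ℂ, ∃ (E : MvPolynomial (Fin s) ℂ)
      (P : Polynomial (MvPolynomial (Fin s) ℂ)),
      algebraMap (MvPolynomial (Fin s) ℂ) R E * q w = Polynomial.aeval θ P ∧
      ∀ a t, (∀ j, eval a (D j) ≠ 0) → eval a E ≠ 0 ∧
        evalAt a t P = eval a E * eval (fun j => evalAt a t (Q j) / eval a (D j)) w := by
    intro w
    induction w using MvPolynomial.induction_on with
    | C c =>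
      refine ⟨1, Polynomial.C (C c), ?_, fun a t _ => ⟨by simp, ?_⟩⟩
      · rw [map_one, one_mul, hqC, Polynomial.aeval_C]
      · simp [evalAt_C]
    | add w w' hw hw' =>
      obtain ⟨E, P, h1, h2⟩ := hw
      obtain ⟨E', P', h1', h2'⟩ := hw'
      refine ⟨E * E', Polynomial.C E' * P + Polynomial.C E * P', ?_, fun a t h => ⟨?_, ?_⟩⟩
      · simp only [map_mul, map_add, Polynomial.aeval_C, ← h1, ← h1']; ring
      · rw [map_mul]; exact mul_ne_zero (h2 a t h).1 (h2' a t h).1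
      · simp only [map_mul, map_add, evalAt_C, (h2 a t h).2, (h2' a t h).2]; ring
    | mul_X w j hw =>
      obtain ⟨E, P, h1, h2⟩ := hw
      refine ⟨E * D j, P * Q j, ?_, fun a t h => ⟨?_, ?_⟩⟩
      · simp only [map_mul, ← h1, ← hQ]; ring
      · rw [map_mul]; exact mul_ne_zero (h2 a t h).1 (h j)
      · simp only [map_mul, (h2 a t h).2, eval_X]
        have := h j
        field_simp
  have hUD : ∀ᶠ a in nhds a₀, ∀ j, eval a (D j) ≠ 0 := by
    rw [Filter.eventually_all]
    exact fun j => (continuous_eval' (D j)).continuousAt.eventually_ne (hD0 j)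
  refine ⟨fun a j => evalAt a (ψ a) (Q j) / eval a (D j), _, Filter.inter_mem hU hUD, ?_, ?_, ?_⟩
  · refine continuousOn_pi.2 fun j => ContinuousOn.div ?_ (continuous_eval' _).continuousOn
      fun a ha => ha.2 j
    simp only [evalAt, Polynomial.coe_eval₂RingHom, Polynomial.eval₂_eq_sum_range]
    exact continuousOn_finsetSum _ fun i _ => (continuous_eval' _).continuousOn.mul
      ((hψc.mono Set.inter_subset_left).pow i)
  · ext j
    have := hspec (Q j) (lift (D j) * X j) (by rw [map_mul, hlift, hQ])
    simp only [hψ0, this, map_mul, hliftEval, eval_X]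
    exact mul_div_cancel_left₀ _ (hD0 j)
  · intro a ha
    refine ⟨fun w hw => ?_, fun i => ?_⟩
    · obtain ⟨E, P, h1, h2⟩ := hclear w
      obtain ⟨h3, h4⟩ := h2 a (ψ a) ha.2
      rw [hrel a ha.1 P (by rw [← h1, hw, mul_zero])] at h4
      exact (mul_eq_zero.1 h4.symm).resolve_left h3
    · obtain ⟨E, P, h1, h2⟩ := hclear (π i)
      obtain ⟨h3, h4⟩ := h2 a (ψ a) ha.2
      have h5 := hrel a ha.1 (P - Polynomial.C (E * X i)) (by
        rw [map_sub, ← h1, hπ, Polynomial.aeval_C, map_mul, sub_self])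
      rw [map_sub, h4, evalAt_C, map_mul, eval_X, ← mul_sub] at h5
      exact sub_eq_zero.1 ((mul_eq_zero.1 h5).resolve_left h3)

/-- A non-member of a prime ideal is nonzero somewhere on the zero set. -/
theorem exists_eval_ne_zero {n : ℕ} (I : Ideal (MvPolynomial (Fin n) ℂ)) (hI : I.IsPrime)
    (h : MvPolynomial (Fin n) ℂ) (hh : h ∉ I) :
    ∃ y : Fin n → ℂ, (∀ p ∈ I, eval y p = 0) ∧ eval y h ≠ 0 := by
  by_contra! hc
  apply hh
  rw [← hI.radical, ← vanishingIdeal_zeroLocus_eq_radical (K := ℂ) I, mem_vanishingIdeal_iff]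
  intro y hy
  have := hc y fun p hp => by simpa [aeval_eq_eval] using hy p hp
  simpa [aeval_eq_eval] using this

/-- Integral injective extensions do not raise the Krull dimension. -/
theorem ringKrullDim_le_of_isIntegral {A R : Type*} [CommRing A] [CommRing R] [Algebra A R]
    [Algebra.IsIntegral A R] : ringKrullDim R ≤ ringKrullDim A := by
  refine Order.krullDim_le_of_strictMono (PrimeSpectrum.comap (algebraMap A R)) fun P Q hPQ => ?_
  have := P.isPrime
  exact Ideal.IsIntegral.comap_lt_comap (R := A) hPQ

/-- The chart for a Noether normalization `g` in `s` variables, with the dimension bound `d ≤ s`. -/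
theorem exists_chart_of_integral {n s d : ℕ} {R : Type*} [CommRing R] [IsDomain R] [Algebra ℂ R]
    (q : MvPolynomial (Fin n) ℂ →ₐ[ℂ] R) (hq : Function.Surjective q)
    (g : MvPolynomial (Fin s) ℂ →ₐ[ℂ] R) (hginj : Function.Injective g) (hgint : g.IsIntegral)
    (hdim : ringKrullDim R = d) :
    d ≤ s ∧ ∃ h : MvPolynomial (Fin n) ℂ, q h ≠ 0 ∧
      ∃ π : Fin s → MvPolynomial (Fin n) ℂ,
      ∀ y₀ : Fin n → ℂ, (∀ p, q p = 0 → eval y₀ p = 0) → eval y₀ h ≠ 0 →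
      ∃ η : (Fin s → ℂ) → (Fin n → ℂ), ∃ U ∈ nhds (fun i => eval y₀ (π i)), ContinuousOn η U ∧
        η (fun i => eval y₀ (π i)) = y₀ ∧
        ∀ a ∈ U, (∀ p, q p = 0 → eval (η a) p = 0) ∧ ∀ i, eval (η a) (π i) = a i := by
  let _ : Algebra (MvPolynomial (Fin s) ℂ) R := g.toRingHom.toAlgebra
  have hint : Algebra.IsIntegral (MvPolynomial (Fin s) ℂ) R := ⟨hgint⟩
  have : FaithfulSMul (MvPolynomial (Fin s) ℂ) R :=
    (faithfulSMul_iff_algebraMap_injective _ _).2 hginj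
  have : Algebra.FiniteType ℂ R := Algebra.FiniteType.of_surjective q hq
  have : Module.Finite (MvPolynomial (Fin s) ℂ) R := by
    have hft : g.toRingHom.FiniteType := by
      have h1 : (g.toRingHom.comp C).FiniteType := by
        have : g.toRingHom.comp C = algebraMap ℂ R := g.comp_algebraMap
        rw [this, RingHom.finiteType_algebraMap]
        infer_instance
      exact h1.of_comp_finiteType
    exact RingHom.IsIntegral.to_finite hgint hft
  refine ⟨?_, exists_chart_of_finite q.toRingHom hq fun c => ?_⟩
  · have h1 := ringKrullDim_le_of_isIntegral (A := MvPolynomial (Fin s) ℂ) (R := R)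
    rw [hdim, MvPolynomial.ringKrullDim_of_isNoetherianRing, ringKrullDim_eq_zero_of_field,
      zero_add, Nat.card_fin] at h1
    exact_mod_cast h1
  · exact (q.commutes c).trans (g.commutes c).symm

/-- Generic points of an irreducible variety of dimension at least `d` have a neighbourhood
containing a continuous section of a polynomial map `π` to an affine space of dimension `≥ d`. -/
theorem exists_chart {n d : ℕ} (I : Ideal (MvPolynomial (Fin n) ℂ)) (hI : I.IsPrime)
    (hdim : ringKrullDim (MvPolynomial (Fin n) ℂ ⧸ I) = (d : WithBot (WithTop ℕ))) :
    ∃ s : ℕ, d ≤ s ∧ s ≤ n ∧ ∃ h : MvPolynomial (Fin n) ℂ, h ∉ I ∧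
      ∃ π : Fin s → MvPolynomial (Fin n) ℂ,
      ∀ y₀ : Fin n → ℂ, (∀ p ∈ I, eval y₀ p = 0) → eval y₀ h ≠ 0 →
      ∃ η : (Fin s → ℂ) → (Fin n → ℂ), ∃ U ∈ nhds (fun i => eval y₀ (π i)), ContinuousOn η U ∧
        η (fun i => eval y₀ (π i)) = y₀ ∧
        ∀ a ∈ U, (∀ p ∈ I, eval (η a) p = 0) ∧ ∀ i, eval (η a) (π i) = a i := by
  obtain ⟨s, hs, g, hginj, hgint⟩ := exists_integral_inj_algHom_of_quotient I hI.ne_top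
  have : IsDomain (MvPolynomial (Fin n) ℂ ⧸ I) := Ideal.Quotient.isDomain I
  obtain ⟨hds, h, hh, π, H⟩ := exists_chart_of_integral (Ideal.Quotient.mkₐ ℂ I)
    (Ideal.Quotient.mkₐ_surjective ℂ I) g hginj hgint hdim
  simp only [Ideal.Quotient.mkₐ_eq_mk, Ideal.Quotient.eq_zero_iff_mem] at H hh
  refine ⟨s, hds, hs, h, fun hc => hh (Ideal.Quotient.eq_zero_iff_mem.2 hc), π, H⟩

/-! ### Taylor expansion along the variety -/

theorem eval_shift {n : ℕ} (f : MvPolynomial (Fin n) ℂ) (y x : Fin n → ℂ) :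
    eval x (bind₁ (fun i => X i + C (y i)) f) = eval (x + y) f := by
  rw [← coe_aeval_eq_eval, ← coe_aeval_eq_eval, RingHom.coe_coe, RingHom.coe_coe, aeval_bind₁]
  congr 2
  funext i
  simp

theorem pderiv_shift {n : ℕ} (f : MvPolynomial (Fin n) ℂ) (y : Fin n → ℂ) (i : Fin n) :
    pderiv i (bind₁ (fun i => X i + C (y i)) f) =
      bind₁ (fun i => X i + C (y i)) (pderiv i f) := by
  induction f using MvPolynomial.induction_on with
  | C c => simp
  | add p q hp hq => simp [hp, hq]
  | mul_X p j hp =>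
    simp only [map_mul, bind₁_X_right, Derivation.leibniz, hp, map_add, pderiv_C, pderiv_X,
      smul_eq_mul, add_zero]
    by_cases h : j = i
    · subst h; simp
    · simp [h]

theorem foldr_pderiv_shift {n : ℕ} (f : MvPolynomial (Fin n) ℂ) (y : Fin n → ℂ)
    (ds : List (Fin n)) :
    ds.foldr (fun i g => pderiv i g) (bind₁ (fun i => X i + C (y i)) f) =
      bind₁ (fun i => X i + C (y i)) (ds.foldr (fun i g => pderiv i g) f) := by
  induction ds with
  | nil => rfl
  | cons i ds ih => simp only [List.foldr_cons, ih, pderiv_shift]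

/-- If the partial derivatives of order at most `k` vanish at the origin, then so do the coefficients
of degree at most `k`. -/
theorem coeff_eq_zero_of_derivs {n : ℕ} (k : ℕ) (p : MvPolynomial (Fin n) ℂ)
    (hp : ∀ ds : List (Fin n), ds.length ≤ k →
      eval 0 (ds.foldr (fun i g => pderiv i g) p) = 0) (m : Fin n →₀ ℕ) (hm : m.degree ≤ k) :
    p.coeff m = 0 := by
  induction k generalizing p m with
  | zero =>
    have : m = 0 := by simpa [Finsupp.degree_eq_zero_iff] using hm
    subst this
    simpa [eval_zero, constantCoeff_eq] using hp [] (by simp)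
  | succ k ih =>
    by_cases h0 : m = 0
    · subst h0
      simpa [eval_zero, constantCoeff_eq] using hp [] (by simp)
    obtain ⟨i, hi⟩ : ∃ i, m i ≠ 0 := by
      by_contra! h
      exact h0 (Finsupp.ext h)
    have hle : Finsupp.single i 1 ≤ m := by
      rw [Finsupp.single_le_iff]; omega
    have hm' : m - Finsupp.single i 1 + Finsupp.single i 1 = m := tsub_add_cancel_of_le hle
    have hd : (m - Finsupp.single i 1).degree ≤ k := by
      have := congrArg Finsupp.degree hm'
      rw [map_add, Finsupp.degree_single] at this
      omega
    have := ih (pderiv i p) (fun ds hds => by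
      simpa using hp (ds ++ [i]) (by simpa using hds)) _ hd
    rw [coeff_pderiv, hm'] at this
    refine (mul_eq_zero.1 this).resolve_right ?_
    exact Nat.cast_add_one_ne_zero _

/-- The Taylor expansion of `f` with the base point as a parameter:
`F(y)(x) = f(x + y)`. -/
noncomputable def taylorFam {n : ℕ} (f : MvPolynomial (Fin n) ℂ) :
    MvPolynomial (Fin n) (MvPolynomial (Fin n) ℂ) :=
  aeval (fun i => X i + C (X i)) f

theorem map_taylorFam {n : ℕ} (f : MvPolynomial (Fin n) ℂ) (y : Fin n → ℂ) :
    map (eval y) (taylorFam f) = bind₁ (fun i => X i + C (y i)) f := by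
  induction f using MvPolynomial.induction_on with
  | C c =>
    rw [taylorFam, algHom_C, bind₁_C_right, MvPolynomial.algebraMap_apply, map_C,
      MvPolynomial.algebraMap_apply]
    simp
  | add p q hp hq => simp only [taylorFam, map_add] at *; rw [hp, hq]
  | mul_X p j hp => simp only [taylorFam, map_mul] at *; rw [hp]; simp

theorem map_homogeneousComponent {n : ℕ} {S T : Type*} [CommSemiring S] [CommSemiring T]
    (φ : S →+* T) (k : ℕ) (p : MvPolynomial (Fin n) S) :
    map φ (homogeneousComponent k p) = homogeneousComponent k (map φ p) := by
  ext m
  rw [coeff_map, coeff_homogeneousComponent, coeff_homogeneousComponent, coeff_map]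
  split_ifs <;> simp

/-- Homogeneous polynomials scale. -/
theorem eval_smul_homogeneousComponent {n : ℕ} (p : MvPolynomial (Fin n) ℂ) (k : ℕ) (t : ℂ)
    (u : Fin n → ℂ) :
    eval (t • u) (homogeneousComponent k p) = t ^ k * eval u (homogeneousComponent k p) := by
  rw [eval_eq, eval_eq, Finset.mul_sum]
  refine Finset.sum_congr rfl fun m hm => ?_
  have hd : m.degree = k := by
    by_contra h
    rw [mem_support_iff, coeff_homogeneousComponent, if_neg h] at hm
    exact hm rfl
  simp only [Pi.smul_apply, smul_eq_mul, mul_pow, Finset.prod_mul_distrib,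
    Finset.prod_pow_eq_pow_sum]
  rw [show (∑ i ∈ m.support, m i) = k from hd]
  ring

/-- If `f` vanishes to order `r` at `y`, then `f(y + tu) = t^r f_{y,r}(u) + O(t^{r+1})`,
uniformly for `y` in a bounded set and `u` in the unit ball. -/
theorem norm_eval_add_smul_le {n : ℕ} (f : MvPolynomial (Fin n) ℂ) (r : ℕ) (M : ℝ) :
    ∃ K : ℝ, 0 ≤ K ∧ ∀ y : Fin n → ℂ, ‖y‖ ≤ M →
      (∀ ds : List (Fin n), ds.length < r →
        eval y (ds.foldr (fun i g => pderiv i g) f) = 0) →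
      ∀ u : Fin n → ℂ, ‖u‖ ≤ 1 → ∀ t : ℝ, 0 < t → t ≤ 1 →
        ‖eval ((t : ℂ) • u + y) f‖ ≤
          t ^ r * ‖eval u (map (eval y) (homogeneousComponent r (taylorFam f)))‖
            + K * t ^ (r + 1) := by
  set F := taylorFam f with hF
  have hbd : ∀ i : ℕ, ∃ K : ℝ, 0 ≤ K ∧ ∀ y : Fin n → ℂ, ‖y‖ ≤ M → ∀ u : Fin n → ℂ, ‖u‖ ≤ 1 →
      ‖eval u (map (eval y) (homogeneousComponent i F))‖ ≤ K := by
    intro i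
    have hc : IsCompact (Metric.closedBall (0 : Fin n → ℂ) M ×ˢ Metric.closedBall (0 : Fin n → ℂ) 1) :=
      (isCompact_closedBall _ _).prod (isCompact_closedBall _ _)
    obtain ⟨K, hK⟩ := hc.exists_bound_of_continuousOn
      (continuous_eval_map (homogeneousComponent i F)).continuousOn
    refine ⟨max K 0, le_max_right _ _, fun y hy u hu => (hK (y, u) ?_).trans (le_max_left _ _)⟩
    simpa using ⟨hy, hu⟩
  choose K hK0 hK using hbd
  refine ⟨∑ i ∈ Finset.range (F.totalDegree + 1), K i, Finset.sum_nonneg fun i _ => hK0 i, ?_⟩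
  intro y hy hv u hu t ht ht1
  have hlow : ∀ i < r, homogeneousComponent i (map (eval y) F) = 0 := by
    intro i hi
    ext m
    rw [coeff_homogeneousComponent, coeff_zero]
    split_ifs with h
    · rw [hF, map_taylorFam]
      refine coeff_eq_zero_of_derivs (r - 1) _ (fun ds hds => ?_) m (by omega)
      rw [foldr_pderiv_shift, eval_shift, zero_add]
      exact hv ds (by omega)
    · rfl
  have hsum : eval ((t : ℂ) • u + y) f = ∑ i ∈ Finset.range (F.totalDegree + 1),
      (t : ℂ) ^ i * eval u (map (eval y) (homogeneousComponent i F)) := by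
    rw [← eval_shift, ← map_taylorFam, ← hF]
    conv_lhs => rw [← sum_homogeneousComponent F]
    rw [map_sum, map_sum]
    refine Finset.sum_congr rfl fun i _ => ?_
    rw [map_homogeneousComponent, eval_smul_homogeneousComponent]
  rw [hsum, Finset.sum_mul]
  have key : ∀ i ∈ Finset.range (F.totalDegree + 1),
      ‖(t : ℂ) ^ i * eval u (map (eval y) (homogeneousComponent i F))‖ ≤
      (if i = r then t ^ r * ‖eval u (map (eval y) (homogeneousComponent r F))‖ else 0)
        + K i * t ^ (r + 1) := by
    intro i _
    have h0 : 0 ≤ K i * t ^ (r + 1) := mul_nonneg (hK0 i) (by positivity)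
    rw [norm_mul, norm_pow, Complex.norm_real, Real.norm_of_nonneg ht.le]
    rcases lt_trichotomy i r with h | h | h
    · rw [map_homogeneousComponent, hlow i h]
      simpa [h.ne] using h0
    · subst h; simpa using h0
    · rw [if_neg h.ne', zero_add, mul_comm]
      exact mul_le_mul (hK i y hy u hu) (pow_le_pow_of_le_one ht.le ht1 h) (by positivity) (hK0 i)
  refine (norm_sum_le _ _).trans ((Finset.sum_le_sum key).trans ?_)
  rw [Finset.sum_add_distrib]
  gcongr
  rw [Finset.sum_ite_eq']
  split_ifs
  · exact le_rfl
  · positivity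

/-! ### Averaging over small balls centred on the variety -/

theorem finrank_real_pi_complex (n : ℕ) : Module.finrank ℝ (Fin n → ℂ) = 2 * n := by
  rw [Module.finrank_pi_fintype]
  simp [mul_comm]

/-- The change of variables `x = t u + y` in real dimension `2n`. -/
theorem lintegral_ball_smul_add {n : ℕ} {φ : (Fin n → ℂ) → ENNReal} (hφ : Measurable φ)
    (y : Fin n → ℂ) {t : ℝ} (ht : 0 < t) :
    ∫⁻ u in Metric.ball 0 1, φ ((t : ℂ) • u + y) =
      ENNReal.ofReal ((t ^ (2 * n))⁻¹) * ∫⁻ x in Metric.ball y t, φ x := by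
  have h1 : ∀ u : Fin n → ℂ, (Metric.ball (0 : Fin n → ℂ) 1).indicator
      (fun u => φ ((t : ℂ) • u + y)) u = (Metric.ball y t).indicator φ (t • u + y) := by
    intro u
    have : (t : ℂ) • u = t • u := by ext i; simp
    have h2 : u ∈ Metric.ball (0 : Fin n → ℂ) 1 ↔ t • u + y ∈ Metric.ball y t := by
      rw [mem_ball_zero_iff, Metric.mem_ball, dist_eq_norm, add_sub_cancel_right, norm_smul,
        Real.norm_of_nonneg ht.le]
      constructor
      · intro h; nlinarith
      · intro h; nlinarith
    by_cases h : u ∈ Metric.ball (0 : Fin n → ℂ) 1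
    · rw [Set.indicator_of_mem h, Set.indicator_of_mem (h2.1 h), this]
    · rw [Set.indicator_of_notMem h, Set.indicator_of_notMem (fun h' => h (h2.2 h'))]
  have hm : Measurable ((Metric.ball y t).indicator φ) := hφ.indicator measurableSet_ball
  have hm' : Measurable fun x => (Metric.ball y t).indicator φ (x + y) :=
    hm.comp (measurable_add_const y)
  rw [← lintegral_indicator measurableSet_ball, ← lintegral_indicator measurableSet_ball]
  simp_rw [h1]
  rw [← lintegral_map (f := fun x => (Metric.ball y t).indicator φ (x + y)) hm'
    (measurable_const_smul t), Measure.map_addHaar_smul _ ht.ne', lintegral_smul_measure,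
    lintegral_add_right_eq_self, finrank_real_pi_complex, abs_of_pos (by positivity), smul_eq_mul]

/-- A polynomial map is Lipschitz on bounded convex sets. -/
theorem exists_lipschitz_ball {n e : ℕ} (π : Fin e → MvPolynomial (Fin n) ℂ) (y₀ : Fin n → ℂ)
    (δ : ℝ) : ∃ K : ℝ, 0 < K ∧ ∀ x ∈ Metric.ball y₀ δ, ∀ x' ∈ Metric.ball y₀ δ,
      dist (fun i => eval x (π i)) (fun i => eval x' (π i)) ≤ K * dist x x' := by
  have hc : ContDiff ℝ 1 (fun x : Fin n → ℂ => fun i => eval x (π i)) :=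
    contDiff_pi.2 fun i => contDiff_eval _
  obtain ⟨K, hK⟩ := (isCompact_closedBall y₀ δ).exists_bound_of_continuousOn
    (hc.continuous_fderiv one_ne_zero).continuousOn
  refine ⟨max K 1, by positivity, fun x hx x' hx' => ?_⟩
  rw [dist_eq_norm, dist_eq_norm]
  exact (convex_ball y₀ δ).norm_image_sub_le_of_norm_fderiv_le
    (fun z _ => (hc.differentiable one_ne_zero) z)
    (fun z hz => (hK z (Metric.ball_subset_closedBall hz)).trans (le_max_left _ _)) hx' hx

/-- The averaging estimate. Let `η` be a right inverse of `π`. Integrating `φ` over the rescaled balls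
of radius `t` around the points `η a` costs at most a multiple of `t ^ (2e - 2n)`: the points `a`
whose ball contains a given `x` lie in a ball of radius `O(t)` around `π x`, and rescaling
contributes `t ^ (-2n)`. -/
theorem lintegral_section_le {n e : ℕ} (π : Fin e → MvPolynomial (Fin n) ℂ) (y₀ : Fin n → ℂ)
    {δ : ℝ} (η : (Fin e → ℂ) → (Fin n → ℂ)) (hη : Measurable η) (B : Set (Fin e → ℂ))
    (hB : MeasurableSet B) (hBη : ∀ a ∈ B, η a ∈ Metric.ball y₀ (δ / 2))
    (hπ : ∀ a ∈ B, ∀ i, eval (η a) (π i) = a i) :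
    ∃ K : ℝ, 0 < K ∧ ∀ φ : (Fin n → ℂ) → ENNReal, Measurable φ → ∀ t : ℝ, 0 < t → t ≤ δ / 2 →
      ∫⁻ a in B, ∫⁻ u in Metric.ball 0 1, φ ((t : ℂ) • u + η a) ≤
        ENNReal.ofReal (K * t ^ (2 * e) * (t ^ (2 * n))⁻¹) * ∫⁻ x in Metric.ball y₀ δ, φ x := by
  obtain ⟨L, hL0, hL⟩ := exists_lipschitz_ball π y₀ δ
  set v := (volume (Metric.ball (0 : Fin e → ℂ) 1)).toReal with hv
  have hvtop : volume (Metric.ball (0 : Fin e → ℂ) 1) ≠ ⊤ := measure_ball_lt_top.ne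
  have hv0 : 0 < v := ENNReal.toReal_pos (Metric.measure_ball_pos _ _ one_pos).ne' hvtop
  refine ⟨L ^ (2 * e) * v, by positivity, fun φ hφ t ht htδ => ?_⟩
  have hvol : ∀ x ∈ Metric.ball y₀ δ, volume (B ∩ {a | x ∈ Metric.ball (η a) t}) ≤
      ENNReal.ofReal (L ^ (2 * e) * v * t ^ (2 * e)) := by
    intro x hx
    have hsub : B ∩ {a | x ∈ Metric.ball (η a) t} ⊆
        Metric.ball (fun i => eval x (π i)) (L * t) := by
      rintro a ⟨ha, hxa⟩
      have hδ : δ / 2 ≤ δ := by linarith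
      have h1 := hL (η a) (Metric.ball_subset_ball hδ (hBη a ha)) x hx
      have h2 : (fun i => eval (η a) (π i)) = a := funext (hπ a ha)
      rw [h2] at h1
      have h3 : dist (η a) x < t := by rw [dist_comm]; exact hxa
      exact lt_of_le_of_lt h1 (mul_lt_mul_of_pos_left h3 hL0)
    refine (measure_mono hsub).trans ?_
    rw [Measure.addHaar_ball_of_pos _ _ (mul_pos hL0 ht), finrank_real_pi_complex,
      ← ENNReal.ofReal_toReal hvtop, ← ENNReal.ofReal_mul (by positivity)]
    refine ENNReal.ofReal_le_ofReal (le_of_eq ?_)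
    rw [mul_pow]; ring
  have hset : MeasurableSet {p : (Fin e → ℂ) × (Fin n → ℂ) | p.2 ∈ Metric.ball (η p.1) t} := by
    simp only [Metric.mem_ball]
    exact measurableSet_lt (measurable_snd.dist (hη.comp measurable_fst)) measurable_const
  have hmeas : Measurable (fun p : (Fin e → ℂ) × (Fin n → ℂ) =>
      {p : (Fin e → ℂ) × (Fin n → ℂ) | p.2 ∈ Metric.ball (η p.1) t}.indicator
        (fun p => φ p.2) p) := (hφ.comp measurable_snd).indicator hset
  calc ∫⁻ a in B, ∫⁻ u in Metric.ball 0 1, φ ((t : ℂ) • u + η a)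
      = ∫⁻ a in B, ENNReal.ofReal ((t ^ (2 * n))⁻¹) * ∫⁻ x in Metric.ball (η a) t, φ x := by
        simp_rw [lintegral_ball_smul_add hφ _ ht]
    _ = ENNReal.ofReal ((t ^ (2 * n))⁻¹) * ∫⁻ a in B, ∫⁻ x in Metric.ball (η a) t, φ x :=
        lintegral_const_mul' _ _ ENNReal.ofReal_ne_top
    _ = ENNReal.ofReal ((t ^ (2 * n))⁻¹) * ∫⁻ a in B, ∫⁻ x in Metric.ball y₀ δ,
          {p : (Fin e → ℂ) × (Fin n → ℂ) | p.2 ∈ Metric.ball (η p.1) t}.indicator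
            (fun p => φ p.2) (a, x) := by
        congr 1
        refine setLIntegral_congr_fun hB fun a ha => ?_
        have hsub : Metric.ball (η a) t ⊆ Metric.ball y₀ δ := by
          refine Metric.ball_subset_ball' ?_
          have := Metric.mem_ball.1 (hBη a ha)
          linarith
        have h1 : ∀ x, {p : (Fin e → ℂ) × (Fin n → ℂ) | p.2 ∈ Metric.ball (η p.1) t}.indicator
            (fun p => φ p.2) (a, x) = (Metric.ball (η a) t).indicator φ x := fun x => rfl
        simp_rw [h1]
        rw [setLIntegral_indicator (measurableSet_ball (x := η a) (ε := t)), Set.inter_eq_left.2 hsub]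
    _ = ENNReal.ofReal ((t ^ (2 * n))⁻¹) * ∫⁻ x in Metric.ball y₀ δ, ∫⁻ a in B,
          {p : (Fin e → ℂ) × (Fin n → ℂ) | p.2 ∈ Metric.ball (η p.1) t}.indicator
            (fun p => φ p.2) (a, x) := by
        congr 1
        exact lintegral_lintegral_swap hmeas.aemeasurable
    _ ≤ ENNReal.ofReal ((t ^ (2 * n))⁻¹) * ∫⁻ x in Metric.ball y₀ δ,
          ENNReal.ofReal (L ^ (2 * e) * v * t ^ (2 * e)) * φ x := by
        refine mul_le_mul_right ?_ _
        refine setLIntegral_mono' (measurableSet_ball (x := y₀) (ε := δ)) fun x hx => ?_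
        have h1 : ∀ a, {p : (Fin e → ℂ) × (Fin n → ℂ) | p.2 ∈ Metric.ball (η p.1) t}.indicator
            (fun p => φ p.2) (a, x) = {a | x ∈ Metric.ball (η a) t}.indicator (fun _ => φ x) a :=
          fun a => rfl
        have h2 : MeasurableSet {a | x ∈ Metric.ball (η a) t} := measurable_prodMk_right hset
        simp_rw [h1]
        rw [lintegral_indicator h2, lintegral_const, Measure.restrict_apply_univ,
          Measure.restrict_apply h2, Set.inter_comm, mul_comm]
        gcongr
        exact hvol x hx
    _ = _ := by
        rw [lintegral_const_mul' _ _ ENNReal.ofReal_ne_top, ← mul_assoc,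
          ← ENNReal.ofReal_mul (by positivity), mul_comm ((t ^ (2 * n))⁻¹)]

/-! ### Decay of the sublevel sets of the initial forms -/

/-- Polynomial decay of the measure of the sublevel sets gives integrability of negative powers
(dyadic decomposition). -/
theorem lintegral_rpow_neg_lt_top {α : Type*} [MeasurableSpace α] {μ : Measure α}
    [IsFiniteMeasure μ] {Z : α → ℝ} (hZ : Measurable Z) (hZ0 : ∀ ω, 0 ≤ Z ω) {T K p q : ℝ}
    (hT : 0 < T) (hμ : ∀ t, 0 < t → t ≤ T → μ {ω | Z ω ≤ t} ≤ ENNReal.ofReal (K * t ^ p))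
    (hq : 0 < q) (hqp : q < p) : ∫⁻ ω, ENNReal.ofReal (Z ω ^ (-q)) ∂μ < ⊤ := by
  have hK : 0 ≤ max K 0 := le_max_right _ _
  have hset : ∀ t, MeasurableSet {ω | Z ω ≤ t} := fun t => measurableSet_le hZ measurable_const
  have hTk : ∀ k : ℕ, 0 < T * (1 / 2 : ℝ) ^ k := fun k => by positivity
  have hpt : ∀ ω, ENNReal.ofReal (Z ω ^ (-q)) ≤ ENNReal.ofReal (T ^ (-q)) +
      ∑' k : ℕ, {ω | Z ω ≤ T * (1 / 2) ^ k}.indicator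
        (fun _ => ENNReal.ofReal ((T * (1 / 2) ^ (k + 1)) ^ (-q))) ω := by
    intro ω
    rcases (hZ0 ω).eq_or_lt with h0 | h0
    · rw [← h0, Real.zero_rpow (by linarith)]; simp
    rcases le_or_gt (Z ω) T with hle | hgt
    · obtain ⟨k, hk1, hk2⟩ := exists_nat_pow_near_of_lt_one (div_pos h0 hT)
        ((div_le_one hT).2 hle) (by norm_num : (0 : ℝ) < 1 / 2) (by norm_num)
      rw [lt_div_iff₀ hT, mul_comm] at hk1
      rw [div_le_iff₀ hT, mul_comm] at hk2
      refine le_trans ?_ (le_add_left (ENNReal.le_tsum k))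
      rw [Set.indicator_of_mem (by exact hk2)]
      exact ENNReal.ofReal_le_ofReal
        (Real.rpow_le_rpow_of_nonpos (hTk _) hk1.le (by linarith))
    · refine le_add_right (ENNReal.ofReal_le_ofReal ?_)
      exact Real.rpow_le_rpow_of_nonpos hT hgt.le (by linarith)
  have hterm : ∀ k : ℕ, ∫⁻ ω, {ω | Z ω ≤ T * (1 / 2) ^ k}.indicator
      (fun _ => ENNReal.ofReal ((T * (1 / 2) ^ (k + 1)) ^ (-q))) ω ∂μ ≤
      ENNReal.ofReal (max K 0 * T ^ (p - q) * (1 / 2) ^ (-q) * ((1 / 2) ^ (p - q)) ^ k) := by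
    intro k
    rw [lintegral_indicator_const (hset _)]
    refine (mul_le_mul_right (hμ _ (hTk k) ?_) _).trans ?_
    · exact mul_le_of_le_one_right hT.le (pow_le_one₀ (by norm_num) (by norm_num))
    rw [← ENNReal.ofReal_mul (by positivity)]
    refine ENNReal.ofReal_le_ofReal ?_
    have h2 : (0 : ℝ) < 1 / 2 := by norm_num
    have e1 : (T * (1 / 2) ^ (k + 1)) ^ (-q) =
        T ^ (-q) * (1 / 2) ^ (-q) * (((1 / 2 : ℝ) ^ k) ^ (-q)) := by
      rw [pow_succ, Real.mul_rpow hT.le (by positivity), Real.mul_rpow (by positivity) h2.le]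
      ring
    have e2 : (T * (1 / 2) ^ k) ^ p = T ^ p * ((1 / 2 : ℝ) ^ k) ^ p :=
      Real.mul_rpow hT.le (by positivity)
    have e3 : ((1 / 2 : ℝ) ^ (p - q)) ^ k = ((1 / 2 : ℝ) ^ k) ^ p * ((1 / 2 : ℝ) ^ k) ^ (-q) := by
      rw [← Real.rpow_add (by positivity), ← Real.rpow_natCast, ← Real.rpow_natCast,
        ← Real.rpow_mul h2.le, ← Real.rpow_mul h2.le]
      congr 1; ring
    have e4 : T ^ (p - q) = T ^ p * T ^ (-q) := by
      rw [← Real.rpow_add hT]; congr 1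
    rw [e1, e2, e3, e4]
    calc _ ≤ T ^ (-q) * (1 / 2) ^ (-q) * ((1 / 2) ^ k) ^ (-q) *
          (max K 0 * (T ^ p * ((1 / 2) ^ k) ^ p)) := by gcongr; exact le_max_left _ _
      _ = _ := by ring
  have hsum : Summable fun k : ℕ =>
      max K 0 * T ^ (p - q) * (1 / 2) ^ (-q) * (((1 / 2 : ℝ) ^ (p - q)) ^ k) :=
    (summable_geometric_of_lt_one (by positivity)
      (Real.rpow_lt_one (by norm_num) (by norm_num) (by linarith))).mul_left _
  refine (lintegral_mono hpt).trans_lt ?_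
  rw [lintegral_add_left measurable_const, lintegral_const,
    lintegral_tsum fun k => (measurable_const.indicator (hset _)).aemeasurable]
  refine ENNReal.add_lt_top.2 ⟨ENNReal.mul_lt_top ENNReal.ofReal_lt_top (measure_lt_top _ _), ?_⟩
  refine (ENNReal.tsum_le_tsum hterm).trans_lt ?_
  rw [← ENNReal.ofReal_tsum_of_nonneg (fun k => by positivity) hsum]
  exact ENNReal.ofReal_lt_top

theorem measurable_comp_prodMk {n m e : ℕ} {g : (Fin m → ℂ) × (Fin n → ℂ) → ℂ}
    {η : (Fin e → ℂ) → (Fin m → ℂ)} (hη : Measurable η) (hg : Continuous g) :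
    Measurable fun p : (Fin e → ℂ) × (Fin n → ℂ) => g (η p.1, p.2) := by
  have h2 : Measurable fun p : (Fin e → ℂ) × (Fin n → ℂ) => (η p.1, p.2) :=
    (hη.comp measurable_fst).prodMk measurable_snd
  exact hg.measurable.comp h2

/-- Sublevel sets of the initial forms along a section `η`: the expansion
`f(η a + tu) = t^r f_{η a,r}(u) + O(t^{r+1})` turns the integrability of `|f|^{-2s}` into a power
decay of the measure of `{(a,u) : |f_{η a,r}(u)| ≤ t}`. -/
theorem measure_sublevel_le {n e : ℕ} (f : MvPolynomial (Fin n) ℂ) (hf : f ≠ 0) (r : ℕ)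
    (π : Fin e → MvPolynomial (Fin n) ℂ) (y₀ : Fin n → ℂ) {δ : ℝ} (hδ : 0 < δ)
    (η : (Fin e → ℂ) → (Fin n → ℂ)) (hη : Measurable η) (B : Set (Fin e → ℂ))
    (hB : MeasurableSet B) (hBη : ∀ a ∈ B, η a ∈ Metric.ball y₀ (δ / 2))
    (hπ : ∀ a ∈ B, ∀ i, eval (η a) (π i) = a i)
    (hvan : ∀ a ∈ B, ∀ ds : List (Fin n), ds.length < r →
      eval (η a) (ds.foldr (fun i g => pderiv i g) f) = 0)
    {s : ℝ} (hs : 0 < s)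
    (hint : IntegrableOn (fun x => ‖eval x f‖ ^ (-2 * s)) (Metric.ball y₀ δ)) :
    ∃ T > 0, ∃ K, ∀ t, 0 < t → t ≤ T →
      ((volume.restrict B).prod (volume.restrict (Metric.ball (0 : Fin n → ℂ) 1)))
        {p | ‖eval p.2 (map (eval (η p.1)) (homogeneousComponent r (taylorFam f)))‖ ≤ t} ≤
      ENNReal.ofReal (K * t ^ (2 * ((r + 1) * s - (n - e)))) := by
  obtain ⟨K₁, hK₁, hexp⟩ := norm_eval_add_smul_le f r (‖y₀‖ + δ / 2)
  obtain ⟨K₂, hK₂, hsec⟩ := lintegral_section_le π y₀ η hη B hB hBη hπ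
  set G := homogeneousComponent r (taylorFam f)
  set φ : (Fin n → ℂ) → ENNReal := fun x => ENNReal.ofReal (‖eval x f‖ ^ (-2 * s)) with hφdef
  have hφ : Measurable φ := (measurable_rpow_eval f _).ennreal_ofReal
  have hJ : ∫⁻ x in Metric.ball y₀ δ, φ x ≠ ⊤ := hint.lintegral_lt_top.ne
  set J := (∫⁻ x in Metric.ball y₀ δ, φ x).toReal
  have hG : Measurable fun p : (Fin e → ℂ) × (Fin n → ℂ) => ‖eval p.2 (map (eval (η p.1)) G)‖ :=
    (measurable_comp_prodMk hη (continuous_eval_map G)).norm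
  refine ⟨min 1 (δ / 2), by positivity, (1 + K₁) ^ (2 * s) * (K₂ * J), fun t ht htT => ?_⟩
  have ht1 : t ≤ 1 := htT.trans (min_le_left _ _)
  set c : ℝ := (1 + K₁) * t ^ (r + 1) with hc
  have hc0 : 0 < c := by positivity
  set E := {p : (Fin e → ℂ) × (Fin n → ℂ) | ‖eval p.2 (map (eval (η p.1)) G)‖ ≤ t} with hE
  have hEm : MeasurableSet E := measurableSet_le hG measurable_const
  have hslice : ∀ a ∈ B, volume.restrict (Metric.ball (0 : Fin n → ℂ) 1) (Prod.mk a ⁻¹' E) ≤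
      ENNReal.ofReal (c ^ (2 * s)) * ∫⁻ u in Metric.ball 0 1, φ ((t : ℂ) • u + η a) := by
    intro a ha
    have hEa : MeasurableSet (Prod.mk a ⁻¹' E) := measurable_prodMk_left hEm
    rw [← lintegral_const_mul' _ _ ENNReal.ofReal_ne_top, ← lintegral_indicator_one hEa]
    -- the junk value `0 ^ (-2 * s) = 0` only matters on a null set
    have hne : ∀ᵐ u : Fin n → ℂ, eval ((t : ℂ) • u + η a) f ≠ 0 := by
      have h1 : bind₁ (fun i => C (t : ℂ) * X i + C (η a i)) f ≠ 0 := by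
        intro h0
        apply hf
        refine MvPolynomial.funext fun x => ?_
        have h2 : ∀ u : Fin n → ℂ, eval ((t : ℂ) • u + η a) f = 0 := fun u => by
          have := congrArg (eval u) h0
          rw [← coe_aeval_eq_eval, RingHom.coe_coe, aeval_bind₁] at this
          rw [← coe_aeval_eq_eval, RingHom.coe_coe, map_zero] at *
          convert this using 2
          · congr 1; funext i; simp
        have htc : (t : ℂ) ≠ 0 := by exact_mod_cast ht.ne'
        have := h2 ((t : ℂ)⁻¹ • (x - η a))
        rw [smul_smul, mul_inv_cancel₀ htc, one_smul, sub_add_cancel] at this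
        rw [this, map_zero]
      filter_upwards [ae_eval_ne_zero _ h1] with u hu
      intro h
      apply hu
      rw [← coe_aeval_eq_eval, RingHom.coe_coe, aeval_bind₁]
      rw [← coe_aeval_eq_eval, RingHom.coe_coe] at h
      convert h using 2
      · congr 1; funext i; simp
    refine lintegral_mono_ae ?_
    filter_upwards [ae_restrict_of_ae hne, ae_restrict_mem measurableSet_ball] with u hu hu1
    by_cases huE : u ∈ Prod.mk a ⁻¹' E
    · rw [Set.indicator_of_mem huE, Pi.one_apply, ← ENNReal.ofReal_mul (by positivity),
        ENNReal.one_le_ofReal]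
      have hle : ‖eval ((t : ℂ) • u + η a) f‖ ≤ c := by
        have hy : ‖η a‖ ≤ ‖y₀‖ + δ / 2 := by
          have := mem_ball_iff_norm.1 (hBη a ha)
          have := norm_sub_norm_le (η a) y₀
          linarith
        have := hexp (η a) hy (hvan a ha) u (mem_ball_zero_iff.1 hu1).le t ht ht1
        have huE' : ‖eval u (map (eval (η a)) G)‖ ≤ t := huE
        refine this.trans ?_
        calc _ ≤ t ^ r * t + K₁ * t ^ (r + 1) := by gcongr
          _ = c := by rw [hc]; ring
      have hpos : 0 < ‖eval ((t : ℂ) • u + η a) f‖ := norm_pos_iff.2 hu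
      calc (1 : ℝ) = c ^ (2 * s) * c ^ (-2 * s) := by
            rw [← Real.rpow_add hc0, neg_mul, add_neg_cancel, Real.rpow_zero]
        _ ≤ _ := by
            exact mul_le_mul_of_nonneg_left (Real.rpow_le_rpow_of_nonpos hpos hle
              (show -2 * s ≤ 0 by linarith)) (by positivity)
    · rw [Set.indicator_of_notMem huE]; exact zero_le
  rw [Measure.prod_apply hEm]
  calc _ ≤ ∫⁻ a in B, ENNReal.ofReal (c ^ (2 * s)) *
          ∫⁻ u in Metric.ball 0 1, φ ((t : ℂ) • u + η a) := setLIntegral_mono' hB hslice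
    _ ≤ ENNReal.ofReal (c ^ (2 * s)) * (ENNReal.ofReal (K₂ * t ^ (2 * e) * (t ^ (2 * n))⁻¹) *
          ENNReal.ofReal J) := by
        rw [lintegral_const_mul' _ _ ENNReal.ofReal_ne_top, ENNReal.ofReal_toReal hJ]
        gcongr
        exact hsec φ hφ t ht (htT.trans (min_le_right _ _))
    _ = _ := by
        have hJ0 : 0 ≤ J := ENNReal.toReal_nonneg
        rw [← ENNReal.ofReal_mul (by positivity), ← ENNReal.ofReal_mul (by positivity)]
        congr 1
        rw [hc, Real.mul_rpow (by positivity) (by positivity), ← Real.rpow_natCast,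
          ← Real.rpow_natCast, ← Real.rpow_natCast, ← Real.rpow_mul ht.le, ← Real.rpow_neg ht.le]
        have : t ^ (2 * ((r + 1) * s - (n - e))) = t ^ (((r + 1 : ℕ) : ℝ) * (2 * s)) *
            t ^ ((2 * e : ℕ) : ℝ) * t ^ (-((2 * n : ℕ) : ℝ)) := by
          rw [← Real.rpow_add ht, ← Real.rpow_add ht]
          congr 1; push_cast; ring
        rw [this]; ring

/-! ### Good points near a given point -/

/-- Near `y₀` there are points of the section at which the initial form is nonzero and has
integrable negative powers. -/
theorem exists_good_point {n e : ℕ} (f : MvPolynomial (Fin n) ℂ) (hf : f ≠ 0) (r : ℕ)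
    (π : Fin e → MvPolynomial (Fin n) ℂ) (y₀ : Fin n → ℂ)
    (η : (Fin e → ℂ) → (Fin n → ℂ)) (U : Set (Fin e → ℂ))
    (hU : U ∈ nhds (fun i => eval y₀ (π i))) (hη : ContinuousOn η U)
    (hη₀ : η (fun i => eval y₀ (π i)) = y₀)
    (hπ : ∀ a ∈ U, ∀ i, eval (η a) (π i) = a i)
    (hvan : ∀ a ∈ U, ∀ ds : List (Fin n), ds.length < r →
      eval (η a) (ds.foldr (fun i g => pderiv i g) f) = 0)
    {s : ℝ} (hs : 0 < s) (V : Set (Fin n → ℂ)) (hV : V ∈ nhds y₀)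
    (hint : IntegrableOn (fun x => ‖eval x f‖ ^ (-2 * s)) V) {q : ℝ} (hq : 0 < q)
    (hqs : q < 2 * ((r + 1) * s - (n - e))) (W : Set (Fin e → ℂ))
    (hW : W ∈ nhds (fun i => eval y₀ (π i))) :
    ∃ a ∈ W ∩ U, map (eval (η a)) (homogeneousComponent r (taylorFam f)) ≠ 0 ∧
      IntegrableOn (fun u => ‖eval u (map (eval (η a)) (homogeneousComponent r (taylorFam f)))‖
        ^ (-q)) (Metric.ball 0 1) := by
  set a₀ : Fin e → ℂ := fun i => eval y₀ (π i)
  set G := homogeneousComponent r (taylorFam f)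
  obtain ⟨δ, hδ, hδV⟩ := Metric.mem_nhds_iff.1 hV
  have hc : ContinuousAt η a₀ := hη.continuousAt hU
  have hpre : η ⁻¹' Metric.ball y₀ (δ / 2) ∈ nhds a₀ :=
    hc (by rw [hη₀]; exact Metric.ball_mem_nhds _ (by positivity))
  obtain ⟨ε, hε, hεB⟩ := Metric.mem_nhds_iff.1 (Filter.inter_mem (Filter.inter_mem hW hU) hpre)
  set B := Metric.ball a₀ ε
  have hBm : MeasurableSet B := measurableSet_ball
  classical
  set η' : (Fin e → ℂ) → (Fin n → ℂ) := B.piecewise η (fun _ => y₀) with hη'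
  have hηm : Measurable η' :=
    (hη.mono fun a ha => (hεB ha).1.2).measurable_piecewise continuousOn_const hBm
  have heq : ∀ a ∈ B, η' a = η a := fun a ha => Set.piecewise_eq_of_mem _ _ _ ha
  obtain ⟨T, hT, K, hK⟩ := measure_sublevel_le f hf r π y₀ hδ η' hηm B hBm
    (fun a ha => by rw [heq a ha]; exact (hεB ha).2)
    (fun a ha => by rw [heq a ha]; exact hπ a (hεB ha).1.2)
    (fun a ha => by rw [heq a ha]; exact hvan a (hεB ha).1.2) hs (hint.mono_set hδV)
  set p := 2 * ((r + 1) * s - (n - e)) with hp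
  have hp0 : 0 < p := hq.trans hqs
  have : IsFiniteMeasure (volume.restrict B) := isFiniteMeasure_restrict.2 measure_ball_lt_top.ne
  have : IsFiniteMeasure (volume.restrict (Metric.ball (0 : Fin n → ℂ) 1)) :=
    isFiniteMeasure_restrict.2 measure_ball_lt_top.ne
  set μ := (volume.restrict B).prod (volume.restrict (Metric.ball (0 : Fin n → ℂ) 1)) with hμ
  set Z : (Fin e → ℂ) × (Fin n → ℂ) → ℝ := fun p => ‖eval p.2 (map (eval (η' p.1)) G)‖ with hZ
  have hZm : Measurable Z := (measurable_comp_prodMk hηm (continuous_eval_map G)).norm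
  have hfin := lintegral_rpow_neg_lt_top (μ := μ) hZm (fun _ => norm_nonneg _) hT hK hq hqs
  rw [hμ, lintegral_prod _ (hZm.pow_const _).ennreal_ofReal.aemeasurable] at hfin
  have hae1 := ae_lt_top' (hZm.pow_const (-q)).ennreal_ofReal.lintegral_prod_right'.aemeasurable
    hfin.ne
  -- the zero set of the initial forms is contained in all sublevel sets
  have hnull : μ {p | Z p ≤ 0} = 0 := by
    refine le_antisymm ?_ zero_le
    have ht : Filter.Tendsto (fun t : ℝ => ENNReal.ofReal (K * t ^ p))
        (nhdsWithin 0 (Set.Ioi 0)) (nhds 0) := by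
      have h1 : ContinuousAt (fun t : ℝ => K * t ^ p) 0 :=
        continuousAt_const.mul (Real.continuousAt_rpow_const _ _ (Or.inr hp0.le))
      have h2 := (ENNReal.continuous_ofReal.continuousAt.comp h1).tendsto
      simp only [Function.comp_def, Real.zero_rpow hp0.ne', mul_zero, ENNReal.ofReal_zero] at h2
      exact h2.mono_left nhdsWithin_le_nhds
    refine ge_of_tendsto ht ?_
    filter_upwards [Ioc_mem_nhdsGT hT] with t ht
    exact (measure_mono fun p (hp : Z p ≤ 0) => hp.trans ht.1.le).trans (hK t ht.1 ht.2)
  have hae2 : ∀ᵐ z ∂μ, ¬ Z z ≤ 0 := by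
    rw [ae_iff]; simpa using hnull
  have hae3 := Measure.ae_ae_of_ae_prod hae2
  have hBpos : volume.restrict B ≠ 0 := by
    rw [Ne, Measure.restrict_eq_zero]
    exact (Metric.measure_ball_pos _ _ hε).ne'
  have : (ae (volume.restrict B)).NeBot := ae_neBot.2 hBpos
  obtain ⟨a, ⟨ha1, ha3⟩, haB⟩ :=
    ((hae1.and hae3).and (ae_restrict_mem hBm)).exists
  refine ⟨a, (hεB haB).1, ?_, ?_⟩
  · intro h0
    have hb : volume.restrict (Metric.ball (0 : Fin n → ℂ) 1) ≠ 0 := by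
      rw [Ne, Measure.restrict_eq_zero]
      exact (Metric.measure_ball_pos _ _ one_pos).ne'
    have : (ae (volume.restrict (Metric.ball (0 : Fin n → ℂ) 1))).NeBot := ae_neBot.2 hb
    obtain ⟨u, hu⟩ := ha3.exists
    apply hu
    simp only [hZ, heq a haB, h0]
    simp
  · refine ⟨(measurable_rpow_eval _ _).aestronglyMeasurable, ?_⟩
    rw [hasFiniteIntegral_iff_ofReal (Filter.Eventually.of_forall fun u => by positivity)]
    simp only [hZ, heq a haB] at ha1
    exact ha1

/-! ### Log-canonical thresholds -/

theorem lctAt_nonneg {n : ℕ} (f : MvPolynomial (Fin n) ℂ) (y : Fin n → ℂ) : 0 ≤ lctAt f y :=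
  Real.sSup_nonneg fun _ h => h.1.le

theorem lct_nonneg {n : ℕ} (f : MvPolynomial (Fin n) ℂ) : 0 ≤ lct f :=
  Real.sInf_nonneg fun _ ⟨_, _, h⟩ => h ▸ lctAt_nonneg _ _

/-- Since `0 ^ (-2 * s) = 0`, the defining set is unbounded for `f = 0` and the supremum takes its
default value. -/
theorem lctAt_zero {n : ℕ} (y : Fin n → ℂ) : lctAt (0 : MvPolynomial (Fin n) ℂ) y = 0 := by
  refine Real.sSup_of_not_bddAbove ?_
  rintro ⟨M, hM⟩
  have : max M 0 + 1 ≤ M := by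
    refine hM ⟨by positivity, Set.univ, Filter.univ_mem, ?_⟩
    have h : (-2 * (max M 0 + 1) : ℝ) ≠ 0 := by
      have : 0 ≤ max M 0 := le_max_right _ _
      intro h; linarith
    simp only [map_zero, norm_zero, Real.zero_rpow h]
    exact integrableOn_zero
  have := le_max_left M 0
  linarith

/-- At a zero of `g ≠ 0` the exponents of integrability are bounded by the dimension: `g` is Lipschitz,
so `‖g‖ ^ (-2s)` is at least a multiple of `t ^ (-2s)` on a ball of radius `t`, of measure a
multiple of `t ^ (2n)`. -/
theorem le_of_integrableOn {n : ℕ} {g : MvPolynomial (Fin n) ℂ} (hg : g ≠ 0) {z : Fin n → ℂ}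
    (hz : eval z g = 0) {s : ℝ} (hs : 0 < s) {U : Set (Fin n → ℂ)} (hU : U ∈ nhds z)
    (hint : IntegrableOn (fun x => ‖eval x g‖ ^ (-2 * s)) U) : s ≤ n := by
  by_contra! hlt
  obtain ⟨δ, hδ, hδU⟩ := Metric.mem_nhds_iff.1 hU
  obtain ⟨L, hL0, hL⟩ := exists_lipschitz_ball (fun _ : Fin 1 => g) z δ
  have hJ := (hint.mono_set hδU).lintegral_lt_top.ne
  set J := (∫⁻ x in Metric.ball z δ, ENNReal.ofReal (‖eval x g‖ ^ (-2 * s))).toReal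
  have hJ0 : 0 ≤ J := ENNReal.toReal_nonneg
  have hvtop : volume (Metric.ball (0 : Fin n → ℂ) 1) ≠ ⊤ := measure_ball_lt_top.ne
  set v := (volume (Metric.ball (0 : Fin n → ℂ) 1)).toReal with hv
  have hv0 : 0 < v := ENNReal.toReal_pos (Metric.measure_ball_pos _ _ one_pos).ne' hvtop
  have key : ∀ t, 0 < t → t ≤ δ → v * L ^ (-2 * s) ≤ J * t ^ (2 * s - 2 * n) := by
    intro t ht htδ
    have h1 : ENNReal.ofReal ((L * t) ^ (-2 * s)) * volume (Metric.ball z t) ≤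
        ENNReal.ofReal J := by
      rw [ENNReal.ofReal_toReal hJ, ← setLIntegral_const]
      refine (lintegral_mono_ae ?_).trans (lintegral_mono_set (Metric.ball_subset_ball htδ))
      filter_upwards [ae_restrict_of_ae (ae_eval_ne_zero g hg),
        ae_restrict_mem (measurableSet_ball (x := z) (ε := t))] with x hx hxt
      refine ENNReal.ofReal_le_ofReal
        (Real.rpow_le_rpow_of_nonpos (norm_pos_iff.2 hx) ?_ (by linarith))
      have h2 := hL x (Metric.ball_subset_ball htδ hxt) z (Metric.mem_ball_self hδ)
      have h3 := dist_le_pi_dist (fun _ : Fin 1 => eval x g) (fun _ : Fin 1 => eval z g) 0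
      simp only [hz, dist_zero_right] at h2 h3
      refine (h3.trans h2).trans ?_
      gcongr
      exact (Metric.mem_ball.1 hxt).le
    rw [Measure.addHaar_ball_of_pos _ _ ht, finrank_real_pi_complex,
      ← ENNReal.ofReal_toReal hvtop, ← ENNReal.ofReal_mul (by positivity),
      ← ENNReal.ofReal_mul (by positivity), ENNReal.ofReal_le_ofReal_iff hJ0] at h1
    have e1 : (L * t) ^ (-2 * s) * (t ^ (2 * n) * v) * t ^ (2 * s - 2 * n) = v * L ^ (-2 * s) := by
      have : t ^ (-2 * s) * t ^ (2 * n) * t ^ (2 * s - 2 * n) = 1 := by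
        rw [← Real.rpow_natCast, ← Real.rpow_add ht, ← Real.rpow_add ht]
        push_cast
        rw [show -2 * s + 2 * (n : ℝ) + (2 * s - 2 * n) = 0 by ring, Real.rpow_zero]
      rw [Real.mul_rpow hL0.le ht.le]
      linear_combination (v * L ^ (-2 * s)) * this
    rw [← e1]
    gcongr
  have hp : 0 < 2 * s - 2 * n := by linarith
  have ht : Filter.Tendsto (fun t : ℝ => J * t ^ (2 * s - 2 * n))
      (nhdsWithin 0 (Set.Ioi 0)) (nhds 0) := by
    have h1 : ContinuousAt (fun t : ℝ => J * t ^ (2 * s - 2 * n)) 0 :=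
      continuousAt_const.mul (Real.continuousAt_rpow_const _ _ (Or.inr hp.le))
    have h2 := h1.tendsto
    simp only [Real.zero_rpow hp.ne', mul_zero] at h2
    exact h2.mono_left nhdsWithin_le_nhds
  have h0 : v * L ^ (-2 * s) ≤ 0 := by
    refine ge_of_tendsto ht ?_
    filter_upwards [Ioc_mem_nhdsGT hδ] with t ht
    exact key t ht.1 ht.2
  have : 0 < v * L ^ (-2 * s) := by positivity
  linarith

/-- For a homogeneous polynomial, integrability near the origin propagates by scaling to every
zero. -/
theorem le_lctAt_of_homogeneous {n : ℕ} (p : MvPolynomial (Fin n) ℂ) (r : ℕ)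
    (hp : homogeneousComponent r p ≠ 0) {s R : ℝ} (hs : 0 < s) (hR : 0 < R)
    (hint : IntegrableOn (fun x => ‖eval x (homogeneousComponent r p)‖ ^ (-2 * s))
      (Metric.ball 0 R)) {z : Fin n → ℂ} (hz : eval z (homogeneousComponent r p) = 0) :
    s ≤ lctAt (homogeneousComponent r p) z := by
  set g := homogeneousComponent r p with hg
  refine le_csSup ⟨n, fun s' ⟨hs', U, hU, hi⟩ => le_of_integrableOn hp hz hs' hU hi⟩
    ⟨hs, Metric.ball z 1, Metric.ball_mem_nhds _ one_pos, ?_⟩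
  set t : ℝ := R / (‖z‖ + 1) with ht
  have ht0 : 0 < t := by positivity
  have h1 := ((integrable_indicator_iff (measurableSet_ball (x := (0 : Fin n → ℂ)) (ε := R))).2
    hint).comp_smul ht0.ne'
  have h2 := (h1.integrableOn (s := Metric.ball z 1)).const_mul ((t ^ r) ^ (2 * s))
  refine IntegrableOn.congr_fun h2 (fun x hx => ?_) measurableSet_ball
  have hx1 : ‖x‖ < ‖z‖ + 1 := by
    have := mem_ball_iff_norm.1 hx
    have := norm_sub_norm_le x z
    linarith
  have hmem : t • x ∈ Metric.ball (0 : Fin n → ℂ) R := by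
    rw [mem_ball_zero_iff, norm_smul, Real.norm_of_nonneg ht0.le, ht, div_mul_eq_mul_div,
      div_lt_iff₀ (by positivity)]
    exact mul_lt_mul_of_pos_left hx1 hR
  have htx : t • x = (t : ℂ) • x := by ext i; simp
  simp only [Set.indicator_of_mem hmem]
  rw [htx, hg, eval_smul_homogeneousComponent, norm_mul, norm_pow, Complex.norm_real,
    Real.norm_of_nonneg ht0.le, Real.mul_rpow (by positivity) (norm_nonneg _), ← mul_assoc,
    ← Real.rpow_add (by positivity)]
  rw [show 2 * s + -2 * s = 0 by ring, Real.rpow_zero, one_mul]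

/-! ### The inequality -/

/-- If `|f|^{-2s}` is integrable near `y₀` and `0 < ρ < (r+1)s - (n-e)`, then `y₀` is a limit of
points of the variety at which the degree `r` initial form is nonzero and has an integrable power
of exponent `-2ρ`. -/
theorem exists_point_of_exponent {n e : ℕ} (f : MvPolynomial (Fin n) ℂ) (hf : f ≠ 0) (r : ℕ)
    (I : Ideal (MvPolynomial (Fin n) ℂ))
    (hvan : ∀ y : Fin n → ℂ, (∀ p ∈ I, eval y p = 0) → ∀ ds : List (Fin n), ds.length < r →
      eval y (ds.foldr (fun i g => pderiv i g) f) = 0)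
    (π : Fin e → MvPolynomial (Fin n) ℂ) (y₀ : Fin n → ℂ)
    (hchart : ∃ η : (Fin e → ℂ) → (Fin n → ℂ), ∃ U ∈ nhds (fun i => eval y₀ (π i)),
      ContinuousOn η U ∧ η (fun i => eval y₀ (π i)) = y₀ ∧
        ∀ a ∈ U, (∀ p ∈ I, eval (η a) p = 0) ∧ ∀ i, eval (η a) (π i) = a i)
    {s : ℝ} (hs : 0 < s) (V : Set (Fin n → ℂ)) (hV : V ∈ nhds y₀)
    (hint : IntegrableOn (fun x => ‖eval x f‖ ^ (-2 * s)) V) {ρ : ℝ} (hρ : 0 < ρ)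
    (hρs : ρ < (r + 1) * s - (n - e)) :
    ∃ y : ℕ → Fin n → ℂ, Filter.Tendsto y Filter.atTop (nhds y₀) ∧
      (∀ k, ∀ p ∈ I, eval (y k) p = 0) ∧
      (∀ k, map (eval (y k)) (homogeneousComponent r (taylorFam f)) ≠ 0) ∧
      ∀ k, IntegrableOn (fun u => ‖eval u (map (eval (y k))
        (homogeneousComponent r (taylorFam f)))‖ ^ (-2 * ρ)) (Metric.ball 0 1) := by
  obtain ⟨η, U, hU, hη, hη₀, hηU⟩ := hchart
  have hex : ∀ k : ℕ, ∃ a ∈ (η ⁻¹' Metric.ball y₀ (1 / ((k : ℝ) + 1))) ∩ U,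
      map (eval (η a)) (homogeneousComponent r (taylorFam f)) ≠ 0 ∧
      IntegrableOn (fun u => ‖eval u (map (eval (η a)) (homogeneousComponent r (taylorFam f)))‖
        ^ (-(2 * ρ))) (Metric.ball 0 1) := fun k =>
    exists_good_point f hf r π y₀ η U hU hη hη₀ (fun a ha => (hηU a ha).2)
      (fun a ha => hvan _ (hηU a ha).1) hs V hV hint (by linarith) (by linarith) _
      ((hη.continuousAt hU) (by rw [hη₀]; exact Metric.ball_mem_nhds _ (by positivity)))
  choose a ha hG hi using hex
  refine ⟨fun k => η (a k), ?_, fun k => (hηU _ (ha k).2).1, hG, fun k => ?_⟩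
  · rw [tendsto_iff_dist_tendsto_zero]
    exact squeeze_zero (fun _ => dist_nonneg) (fun k => (Metric.mem_ball.1 (ha k).1).le)
      tendsto_one_div_add_atTop_nhds_zero_nat
  · simp only [neg_mul]; exact hi k

/-- If `f` vanishes to order at least `r > 1` along an irreducible `d`-dimensional
variety `Y ⊆ ℂⁿ` (zero set of a prime ideal `I` with `dim (ℂ[x]/I) = d`), then for a
generic point `y ∈ Y` (all points of a nonempty basic Zariski-open subset of `Y`)
one has `(r+1)·c_y(f) ≤ n − d + c(f_{y,r})`, where `f_{y,r}` is the degree-`r`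
homogeneous component of `f_y(x) = f(x+y)`. -/
theorem stmt12 {n : ℕ} (f : MvPolynomial (Fin n) ℂ) (r d : ℕ) (hr : 1 < r)
    (I : Ideal (MvPolynomial (Fin n) ℂ)) (hI : I.IsPrime)
    (Y : Set (Fin n → ℂ))
    (hY : Y = {y | ∀ g ∈ I, MvPolynomial.eval y g = 0})
    (hYne : Y.Nonempty)
    (hdim : ringKrullDim (MvPolynomial (Fin n) ℂ ⧸ I) = (d : WithBot (WithTop ℕ)))
    (hvan : ∀ y ∈ Y, ∀ ds : List (Fin n), ds.length < r →
      MvPolynomial.eval y (ds.foldr (fun i g => MvPolynomial.pderiv i g) f) = 0) :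
    ∃ h : MvPolynomial (Fin n) ℂ, (∃ y ∈ Y, MvPolynomial.eval y h ≠ 0) ∧
      ∀ y ∈ Y, MvPolynomial.eval y h ≠ 0 →
        ((r : ℝ) + 1) * lctAt f y ≤ (n : ℝ) - (d : ℝ) +
          lct (MvPolynomial.homogeneousComponent r
            (MvPolynomial.bind₁
              (fun i => MvPolynomial.X i + MvPolynomial.C (y i)) f)) := by
  subst hY
  set G := homogeneousComponent r (taylorFam f) with hG
  have hGy : ∀ y : Fin n → ℂ, map (eval y) G =
      homogeneousComponent r (bind₁ (fun i => X i + C (y i)) f) := fun y => by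
    rw [hG, map_homogeneousComponent, map_taylorFam]
  obtain ⟨e, hde, hen, h₀, hh₀, π, hchart⟩ := exists_chart I hI hdim
  have hde' : (d : ℝ) ≤ e := by exact_mod_cast hde
  have hen' : (e : ℝ) ≤ n := by exact_mod_cast hen
  by_cases hf : f = 0
  · obtain ⟨y, hy, hy'⟩ := exists_eval_ne_zero I hI h₀ hh₀
    refine ⟨h₀, ⟨y, hy, hy'⟩, fun y _ _ => ?_⟩
    have := lct_nonneg (homogeneousComponent r (bind₁ (fun i => X i + C (y i)) f))
    subst hf
    rw [lctAt_zero]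
    linarith
  -- it suffices to bound each exponent of integrability separately
  suffices H : ∃ h : MvPolynomial (Fin n) ℂ, h ∉ I ∧
      ∀ y : Fin n → ℂ, (∀ p ∈ I, eval y p = 0) → eval y h ≠ 0 → ∀ s : ℝ, 0 < s →
        ∀ V ∈ nhds y, IntegrableOn (fun x => ‖eval x f‖ ^ (-2 * s)) V →
        (r + 1) * s - (n - e) ≤ lct (map (eval y) G) by
    obtain ⟨h, hh, H⟩ := H
    obtain ⟨y, hy, hy'⟩ := exists_eval_ne_zero I hI h hh
    refine ⟨h, ⟨y, hy, hy'⟩, fun y hy hy' => ?_⟩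
    rw [← hGy, mul_comm, ← le_div_iff₀ (by positivity)]
    have h0 := lct_nonneg (map (eval y) G)
    refine Real.sSup_le ?_ (div_nonneg (by linarith) (by positivity))
    rintro s ⟨hs, V, hV, hint⟩
    rw [le_div_iff₀ (by positivity)]
    have := H y hy hy' s hs V hV hint
    linarith
  -- if the initial form vanishes on the whole variety, no positive exponent can occur
  by_cases hGI : map (Ideal.Quotient.mk I) G = 0
  · refine ⟨h₀, hh₀, fun y hy hy' s hs V hV hint => ?_⟩
    refine le_trans ?_ (lct_nonneg _)
    by_contra! hpos
    obtain ⟨w, -, hw, hwG, -⟩ := exists_point_of_exponent f hf r I hvan π y (hchart y hy hy') hs V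
      hV hint (half_pos hpos) (half_lt_self hpos)
    apply hwG 0
    ext m
    rw [coeff_map, coeff_zero]
    refine hw 0 _ (Ideal.Quotient.eq_zero_iff_mem.1 ?_)
    rw [← coeff_map, hGI, coeff_zero]
  · obtain ⟨m, hm⟩ : ∃ m, G.coeff m ∉ I := by
      by_contra! hall
      apply hGI
      ext m
      rw [coeff_map, coeff_zero]
      exact Ideal.Quotient.eq_zero_iff_mem.2 (hall m)
    -- since `s ≤ n`, the exponents `2ρ` that occur are at most `2 (r + 1) n`
    obtain ⟨b, i, hbi, hb⟩ := integrableOn_of_tendsto I hI G hGI (2 * (r + 1) * n)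
    refine ⟨h₀ * b.coeff i * G.coeff m, ?_, fun y hy hy' s hs V hV hint => ?_⟩
    · intro h
      rcases hI.mem_or_mem h with h | h
      · rcases hI.mem_or_mem h with h | h
        · exact hh₀ h
        · exact hbi h
      · exact hm h
    rw [map_mul, map_mul, mul_ne_zero_iff, mul_ne_zero_iff] at hy'
    obtain ⟨⟨hy1, hy2⟩, hy3⟩ := hy'
    by_contra! hlt
    have hG0 : map (eval y) G ≠ 0 := by
      intro h
      apply hy3
      rw [← coeff_map, h, coeff_zero]
    have hb0 : b.map (eval y) ≠ 0 := by
      intro h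
      apply hy2
      rw [← Polynomial.coeff_map, h, Polynomial.coeff_zero]
    have hlct0 := lct_nonneg (map (eval y) G)
    -- an exponent that avoids the finitely many roots of the Bernstein polynomial
    obtain ⟨x, ⟨hx1, hx2⟩, hx3⟩ : ∃ x ∈ Set.Ioo (lct (map (eval y) G)) ((r + 1) * s - (n - e)),
        x ∉ {x : ℝ | (b.map (eval y)).eval ((-x : ℝ) : ℂ) = 0} := by
      refine ((Set.Ioo_infinite hlt).exists_notMem_finite ?_)
      have hfin : {z : ℂ | (b.map (eval y)).IsRoot z}.Finite :=
        Polynomial.finite_setOfPred_isRoot hb0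
      exact hfin.preimage (f := fun x : ℝ => ((-x : ℝ) : ℂ)) fun x _ x' _ h => by simpa using h
    have hx0 : 0 < x := hlct0.trans_lt hx1
    obtain ⟨ρ, hρ1, hρ2⟩ := exists_between hx2
    obtain ⟨w, hw, hwI, hwG, hwi⟩ := exists_point_of_exponent f hf r I hvan π y
      (hchart y hy hy1) hs V hV hint (hx0.trans hρ1) hρ2
    have hsn : s ≤ n := le_of_integrableOn hf (hvan y hy [] (by simpa using by omega)) hs hV hint
    have hρN : 2 * ρ ≤ ((2 * (r + 1) * n : ℕ) : ℝ) := by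
      push_cast
      have : ((r : ℝ) + 1) * s ≤ (r + 1) * n := by gcongr
      nlinarith
    have hfinal := hb w y hw hwI hwG ρ (hx0.trans hρ1) hρN hwi (-x) (by linarith) (by linarith) hx3
    have hle : x ≤ lct (map (eval y) G) := by
      refine le_csInf ⟨_, 0, ?_, rfl⟩ ?_
      · rw [hGy]
        have := eval_smul_homogeneousComponent (bind₁ (fun i => X i + C (y i)) f) r 0 0
        rwa [zero_smul, zero_pow (by omega), zero_mul] at this
      · rintro _ ⟨z, hz, rfl⟩
        rw [hGy] at hz hG0 hfinal ⊢
        refine le_lctAt_of_homogeneous _ r hG0 hx0 (by norm_num : (0 : ℝ) < 1 / 2) ?_ hz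
        simpa only [mul_neg, neg_mul] using hfinal
    linarith
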